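/- arXiv:2105.11027 — 2 statements merged into one kernel-verified Lean document; each statement's English description precedes it below -/
import Mathlib

section
/- Let ρ be an irreducible complex representation of GL_n(F_q) of U-rank k with k < ⌊n/2⌋. Then ρ has a nonzero H_{2k}-eigenvector; equivalently, the tensor rank of ρ is at most 2k. -/
/-!
STATEMENT 17: An irreducible representation ρ of GL_n(F_q) of U-rank k with
k < ⌊n/2⌋ has a nonzero H_{2k}-eigenvector; equivalently, its tensor rank is
at most 2k.
-/

open Matrix
open scoped MatrixGroups

set_option linter.unusedSectionVars false

namespace Stmt17

variable {F : Type} [Field F] [Fintype F] [DecidableEq F]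

/-- The `n × n` matrix with the `a × b` matrix `X` placed in the block occupying
rows `0,…,a-1` and columns `n-b,…,n-1`, and `0` elsewhere. -/
def blockEmbed (n a b : ℕ) (X : Matrix (Fin a) (Fin b) F) : Matrix (Fin n) (Fin n) F :=
  Matrix.of fun i j =>
    if hi : (i : ℕ) < a then
      if hj : n - b ≤ (j : ℕ) ∧ (j : ℕ) - (n - b) < b then
        X ⟨i, hi⟩ ⟨(j : ℕ) - (n - b), hj.2⟩
      else 0
    else 0

lemma blockEmbed_mul_blockEmbed {n a b : ℕ} (hab : a + b ≤ n)
    (X Y : Matrix (Fin a) (Fin b) F) :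
    blockEmbed n a b X * blockEmbed n a b Y = 0 := by
  ext i j
  rw [Matrix.mul_apply, Matrix.zero_apply]
  apply Finset.sum_eq_zero
  intro k _
  rcases Nat.lt_or_ge (k : ℕ) a with hk | hk
  · have h2 : ¬ (n - b ≤ (k : ℕ) ∧ (k : ℕ) - (n - b) < b) := by
      rintro ⟨h, -⟩; omega
    have hz : blockEmbed n a b X i k = 0 := by
      unfold blockEmbed
      by_cases hi : (i : ℕ) < a
      · rw [Matrix.of_apply, dif_pos hi, dif_neg h2]
      · rw [Matrix.of_apply, dif_neg hi]
    rw [hz, zero_mul]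
  · have hz : blockEmbed n a b Y k j = 0 := by
      unfold blockEmbed
      rw [Matrix.of_apply, dif_neg (Nat.not_lt.2 hk)]
    rw [hz, mul_zero]

/-- The element `I_n + blockEmbed X` of `GL_n(F)`; for `a + b ≤ n` these elements
form the abelian subgroup `U_{a,b}` (identified with `(M_{a,b}(F), +)`). -/
def uU (n a b : ℕ) (hab : a + b ≤ n) (X : Matrix (Fin a) (Fin b) F) : GL (Fin n) F where
  val := 1 + blockEmbed n a b X
  inv := 1 - blockEmbed n a b X
  val_inv := by
    have h := blockEmbed_mul_blockEmbed hab X X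
    have e : (1 + blockEmbed n a b X) * (1 - blockEmbed n a b X)
        = 1 - blockEmbed n a b X * blockEmbed n a b X := by noncomm_ring
    rw [e, h, sub_zero]
  inv_val := by
    have h := blockEmbed_mul_blockEmbed hab X X
    have e : (1 - blockEmbed n a b X) * (1 + blockEmbed n a b X)
        = 1 - blockEmbed n a b X * blockEmbed n a b X := by noncomm_ring
    rw [e, h, sub_zero]

variable {V : Type} [AddCommGroup V] [Module ℂ V]

/-- The character `γ_T` of `U_{a,b} ≅ M_{a,b}(F_q)`, `γ_T(X) = χ₀(trace (T*X))`,
appears in (the restriction to `U_{a,b}` of) the representation `π`, i.e. its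
eigenspace is nonzero. -/
def CharAppears (χ₀ : AddChar F ℂ) {n : ℕ} (π : Representation ℂ (GL (Fin n) F) V)
    {a b : ℕ} (hab : a + b ≤ n) (T : Matrix (Fin b) (Fin a) F) : Prop :=
  ∃ v : V, v ≠ 0 ∧ ∀ X : Matrix (Fin a) (Fin b) F,
    π (uU n a b hab X) v = χ₀ ((T * X).trace) • v

/-- `rank_{a,b}(π) = k` : the maximal rank of a character of `U_{a,b}`
appearing in `π|U_{a,b}` is `k`.  (The rank of `γ_T` is `rank T`.) -/
def HasRankAB (χ₀ : AddChar F ℂ) {n : ℕ} (π : Representation ℂ (GL (Fin n) F) V)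
    {a b : ℕ} (hab : a + b ≤ n) (k : ℕ) : Prop :=
  (∃ T, CharAppears χ₀ π hab T ∧ T.rank = k) ∧
  (∀ T, CharAppears χ₀ π hab T → T.rank ≤ k)


/-- The `U`-rank of a representation `π` of `GL_n(F_q)` equals `k`:
this is `rank_{⌊n/2⌋,⌈n/2⌉}(π) = k`. -/
def HasURank (χ₀ : AddChar F ℂ) {n : ℕ} (π : Representation ℂ (GL (Fin n) F) V) (k : ℕ) : Prop :=
  HasRankAB χ₀ π (show n / 2 + (n - n / 2) ≤ n by omega) k

/-- The subgroup `H_k ≤ GL_n(F)` of elements fixing the first `k` standard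
basis vectors of `F^n` (equivalently, fixing pointwise every vector supported
in the first `k` coordinates). -/
def Hsub (n k : ℕ) : Subgroup (GL (Fin n) F) where
  carrier := {g | ∀ v : Fin n → F, (∀ i : Fin n, k ≤ (i : ℕ) → v i = 0) →
      (↑g : Matrix (Fin n) (Fin n) F) *ᵥ v = v}
  one_mem' := by intro v hv; simp
  mul_mem' := by
    intro g h hg hh v hv
    rw [Units.val_mul, ← Matrix.mulVec_mulVec, hh v hv, hg v hv]
  inv_mem' := by
    intro g hg v hv
    calc (↑g⁻¹ : Matrix (Fin n) (Fin n) F) *ᵥ v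
        = (↑g⁻¹ : Matrix (Fin n) (Fin n) F) *ᵥ ((↑g : Matrix (Fin n) (Fin n) F) *ᵥ v) := by
          rw [hg v hv]
      _ = ((↑g⁻¹ * ↑g : Matrix (Fin n) (Fin n) F)) *ᵥ v := Matrix.mulVec_mulVec ..
      _ = v := by rw [← Units.val_mul, inv_mul_cancel, Units.val_one, Matrix.one_mulVec]

/-- The permutation representation of `GL_n(F)` on complex-valued functions on
`M_{n,k}(F)`, by left matrix multiplication: `(g · f)(T) = f (g⁻¹ * T)`. -/
def permRep (n k : ℕ) : Representation ℂ (GL (Fin n) F) (Matrix (Fin n) (Fin k) F → ℂ) where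
  toFun g :=
    { toFun := fun f T => f ((↑g⁻¹ : Matrix (Fin n) (Fin n) F) * T)
      map_add' := fun _ _ => rfl
      map_smul' := fun _ _ => rfl }
  map_one' := by
    refine LinearMap.ext fun f => funext fun T => ?_
    show f ((↑(1 : GL (Fin n) F)⁻¹ : Matrix (Fin n) (Fin n) F) * T) = f T
    congr 1
    simp
  map_mul' := by
    intro g h
    refine LinearMap.ext fun f => funext fun T => ?_
    show f _ = f _
    congr 1
    simp [_root_.mul_inv_rev, Units.val_mul, Matrix.mul_assoc]

/-- The determinant character `GL_n(F) → Fˣ`. -/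
def detHom (n : ℕ) : GL (Fin n) F →* Fˣ :=
  Units.map Matrix.detMonoidHom

/-- The twist `(α ∘ det) ⊗ ρ` of a representation `ρ` of `GL_n(F)` by the
linear character `α ∘ det`. -/
def twistRep {n : ℕ} {V : Type} [AddCommGroup V] [Module ℂ V]
    (α : Fˣ →* ℂˣ) (ρ : Representation ℂ (GL (Fin n) F) V) :
    Representation ℂ (GL (Fin n) F) V where
  toFun g := ((α (detHom n g) : ℂˣ) : ℂ) • ρ g
  map_one' := by simp
  map_mul' := by
    intro g h
    show ((α (detHom n (g * h)) : ℂˣ) : ℂ) • ρ (g * h)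
        = (((α (detHom n g) : ℂˣ) : ℂ) • ρ g) * (((α (detHom n h) : ℂˣ) : ℂ) • ρ h)
    rw [smul_mul_assoc, mul_smul_comm, smul_smul, ← Units.val_mul, ← _root_.map_mul,
      ← _root_.map_mul, _root_.map_mul ρ]

/-- `ρ` occurs in `σ` : there is a nonzero intertwining operator from `ρ` to
`σ`.  (For irreducible `ρ` this says exactly that `ρ` occurs as a
subrepresentation of `σ`.) -/
def Occurs {G : Type} [Group G] {V W : Type} [AddCommGroup V] [Module ℂ V]
    [AddCommGroup W] [Module ℂ W]
    (ρ : Representation ℂ G V) (σ : Representation ℂ G W) : Prop :=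
  ∃ φ : V →ₗ[ℂ] W, φ ≠ 0 ∧ ∀ g, φ.comp (ρ g) = (σ g).comp φ

/-- `ρ` has a nonzero vector fixed by the subgroup `H`. -/
def HasFixedVec {G : Type} [Group G] {V : Type} [AddCommGroup V] [Module ℂ V]
    (ρ : Representation ℂ G V) (H : Subgroup G) : Prop :=
  ∃ v : V, v ≠ 0 ∧ ∀ h ∈ H, ρ h v = v

/-- `ρ` has a nonzero eigenvector for the subgroup `H`: a nonzero `v` with
`ρ(h) v = c(h) • v` for all `h ∈ H`, for some character `c` of `H`. -/
def HasEigenVec {G : Type} [Group G] {V : Type} [AddCommGroup V] [Module ℂ V]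
    (ρ : Representation ℂ G V) (H : Subgroup G) : Prop :=
  ∃ c : H →* ℂ, ∃ v : V, v ≠ 0 ∧ ∀ h : H, ρ (h : G) v = c h • v

/-- Irreducibility of a representation: the space is nonzero, and the only
invariant subspaces are `⊥` and `⊤`. -/
def IsIrred {G : Type} [Group G] {V : Type} [AddCommGroup V] [Module ℂ V]
    (ρ : Representation ℂ G V) : Prop :=
  (∃ v : V, v ≠ 0) ∧
    ∀ p : Submodule ℂ V, (∀ g : G, ∀ v ∈ p, ρ g v ∈ p) → p = ⊥ ∨ p = ⊤

section General

variable {N p q : Type} [Fintype N] [DecidableEq N] [Fintype p] [DecidableEq p]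
  [Fintype q] [DecidableEq q]

/-- The element `1 + A X B` of `GL`, for `B A = 0`. -/
def uu (A : Matrix N p F) (B : Matrix q N F) (h : B * A = 0) (X : Matrix p q F) : GL N F where
  val := 1 + A * X * B
  inv := 1 - A * X * B
  val_inv := by
    have e : (A * X * B) * (A * X * B) = 0 := by
      rw [show A * X * B * (A * X * B) = A * X * (B * A) * X * B by simp only [Matrix.mul_assoc], h]
      simp
    rw [show (1 + A * X * B) * (1 - A * X * B) = 1 - (A * X * B) * (A * X * B) by noncomm_ring, e,
      sub_zero]
  inv_val := by
    have e : (A * X * B) * (A * X * B) = 0 := by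
      rw [show A * X * B * (A * X * B) = A * X * (B * A) * X * B by simp only [Matrix.mul_assoc], h]
      simp
    rw [show (1 - A * X * B) * (1 + A * X * B) = 1 - (A * X * B) * (A * X * B) by noncomm_ring, e,
      sub_zero]

lemma uu_val (A : Matrix N p F) (B : Matrix q N F) (h : B * A = 0) (X : Matrix p q F) :
    (uu A B h X : Matrix N N F) = 1 + A * X * B := rfl

lemma uu_mul (A : Matrix N p F) (B : Matrix q N F) (h : B * A = 0) (X Y : Matrix p q F) :
    uu A B h X * uu A B h Y = uu A B h (X + Y) := by
  apply Units.ext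
  rw [Units.val_mul, uu_val, uu_val, uu_val]
  have e : (A * X * B) * (A * Y * B) = 0 := by
    rw [show A * X * B * (A * Y * B) = A * X * (B * A) * Y * B by simp only [Matrix.mul_assoc], h]
    simp
  rw [show (1 + A * X * B) * (1 + A * Y * B) = 1 + A * X * B + A * Y * B
    + (A * X * B) * (A * Y * B) by noncomm_ring, e, Matrix.mul_add, Matrix.add_mul]
  abel

lemma uu_zero (A : Matrix N p F) (B : Matrix q N F) (h : B * A = 0) :
    uu A B h 0 = 1 := by
  apply Units.ext
  rw [uu_val]; simp

lemma trace_char_sep (χ₀ : AddChar F ℂ) (hχ₀ : χ₀ ≠ 1) (T T' : Matrix q p F)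
    (h : ∀ X : Matrix p q F, χ₀ (T * X).trace = χ₀ (T' * X).trace) : T = T' := by
  ext i j
  by_contra hne
  have hp := AddChar.IsPrimitive.of_ne_one hχ₀ (sub_ne_zero.2 hne)
  apply hp
  ext t
  have := h (Matrix.single j i t)
  rw [Matrix.trace_mul_single, Matrix.trace_mul_single] at this
  simp only [AddChar.mulShift_apply, AddChar.one_apply, sub_mul]
  rw [AddChar.map_sub_eq_div]
  simp only [MulOpposite.smul_eq_mul_unop, MulOpposite.unop_op] at this
  rw [this, div_self]
  intro h0
  have := AddChar.map_add_eq_mul χ₀ (T' i j * t) (-(T' i j * t))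
  rw [h0] at this
  simp at this

lemma trace_char_sum (χ₀ : AddChar F ℂ) (hχ₀ : χ₀ ≠ 1) (X : Matrix p q F) :
    ∑ T : Matrix q p F, χ₀ (-(T * X).trace) =
      if X = 0 then (Fintype.card (Matrix q p F) : ℂ) else 0 := by
  let ψ : AddChar (Matrix q p F) ℂ :=
    { toFun := fun T => χ₀ (-(T * X).trace)
      map_zero_eq_one' := by simp
      map_add_eq_mul' := by
        intro a b
        rw [Matrix.add_mul, Matrix.trace_add, neg_add, AddChar.map_add_eq_mul] }
  change ∑ T, ψ T = _
  split_ifs with hX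
  · have : ∀ T, ψ T = 1 := by intro T; change χ₀ _ = 1; simp [hX]
    simp [this]
  · apply AddChar.sum_eq_zero_of_ne_one
    intro h1
    apply hX
    have : Xᵀ = 0 := by
      apply trace_char_sep χ₀ hχ₀
      intro Y
      have h2 : ψ (-Yᵀ) = 1 := by rw [h1]; rfl
      change χ₀ (-(-Yᵀ * X).trace) = 1 at h2
      rw [Matrix.neg_mul, Matrix.trace_neg, neg_neg, ← Matrix.trace_transpose,
        Matrix.transpose_mul, Matrix.transpose_transpose] at h2
      rw [h2]; simp
    simpa using this

variable (χ₀ : AddChar F ℂ) (ρ : Representation ℂ (GL N F) V)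

/-- Fourier projection onto the `γ_T`-eigenspace. -/
noncomputable def proj (A : Matrix N p F) (B : Matrix q N F) (h : B * A = 0) (T : Matrix q p F)
    (v : V) : V :=
  ((Fintype.card (Matrix q p F) : ℂ)⁻¹) • ∑ X : Matrix p q F, χ₀ (-(T * X).trace) •
    ρ (uu A B h X) v

lemma proj_eig (A : Matrix N p F) (B : Matrix q N F) (h : B * A = 0) (T : Matrix q p F)
    (v : V) (Y : Matrix p q F) :
    ρ (uu A B h Y) (proj χ₀ ρ A B h T v) = χ₀ (T * Y).trace • proj χ₀ ρ A B h T v := by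
  unfold proj
  rw [map_smul, smul_comm (χ₀ (T * Y).trace)]
  congr 1
  rw [map_sum, Finset.smul_sum]
  rw [← Equiv.sum_comp (Equiv.addLeft Y) (fun X => χ₀ (T * Y).trace • χ₀ (-(T * X).trace) •
    ρ (uu A B h X) v)]
  apply Finset.sum_congr rfl
  intro X _
  rw [map_smul, ← Module.End.mul_apply, ← map_mul, uu_mul, smul_smul, ← AddChar.map_add_eq_mul]
  congr 2
  simp [Matrix.mul_add, Matrix.trace_add]

lemma sum_proj (hχ₀ : χ₀ ≠ 1) (A : Matrix N p F) (B : Matrix q N F) (h : B * A = 0) (v : V) :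
    ∑ T, proj χ₀ ρ A B h T v = v := by
  unfold proj
  rw [← Finset.smul_sum, Finset.sum_comm]
  simp_rw [← Finset.sum_smul, trace_char_sum χ₀ hχ₀]
  simp only [ite_smul, zero_smul, Finset.sum_ite_eq', Finset.mem_univ, if_true]
  rw [uu_zero, map_one, smul_smul, inv_mul_cancel₀]
  · simp
  · exact Nat.cast_ne_zero.2 Fintype.card_ne_zero

lemma proj_comm (A : Matrix N p F) (B : Matrix q N F) (h : B * A = 0) (T : Matrix q p F)
    (v : V) (g : GL N F) (c : ℂ) (hg : ∀ X, g * uu A B h X = uu A B h X * g)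
    (hv : ρ g v = c • v) :
    ρ g (proj χ₀ ρ A B h T v) = c • proj χ₀ ρ A B h T v := by
  unfold proj
  rw [map_smul, smul_comm c]
  congr 1
  rw [map_sum, Finset.smul_sum]
  apply Finset.sum_congr rfl
  intro X _
  rw [map_smul, ← Module.End.mul_apply, ← map_mul, hg, map_mul, Module.End.mul_apply, hv,
    map_smul, smul_comm]

/-- Transitivity of `GL` on injective matrices. -/
lemma exists_GL_mul_eq {ι : Type} [Fintype ι] [DecidableEq ι] (M M' : Matrix N ι F)
    (R R' : Matrix ι N F) (h : R * M = 1) (h' : R' * M' = 1) :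
    ∃ g : GL N F, (g : Matrix N N F) * M = M' := by
  have inj : Function.Injective (Matrix.toLin' M) := by
    apply Function.LeftInverse.injective (g := Matrix.toLin' R)
    intro x
    rw [← LinearMap.comp_apply, ← Matrix.toLin'_mul, h]; simp
  have inj' : Function.Injective (Matrix.toLin' M') := by
    apply Function.LeftInverse.injective (g := Matrix.toLin' R')
    intro x
    rw [← LinearMap.comp_apply, ← Matrix.toLin'_mul, h']; simp
  let f := (LinearEquiv.ofInjective _ inj).symm ≪≫ₗ (LinearEquiv.ofInjective _ inj')
  obtain ⟨g, hg⟩ := Submodule.exists_linearEquiv_restrict_eq f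
  refine ⟨⟨LinearMap.toMatrix' g.toLinearMap, LinearMap.toMatrix' g.symm.toLinearMap, ?_, ?_⟩, ?_⟩
  · rw [← LinearMap.toMatrix'_comp]; simp
  · rw [← LinearMap.toMatrix'_comp]; simp
  · apply Matrix.toLin'.injective
    change Matrix.toLin' (LinearMap.toMatrix' g.toLinearMap * M) = _
    rw [Matrix.toLin'_mul, Matrix.toLin'_toMatrix']
    apply LinearMap.ext
    intro x
    have := hg (LinearEquiv.ofInjective _ inj x)
    simp only [f, LinearEquiv.trans_apply, LinearEquiv.symm_apply_apply] at this
    exact this.symm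

end General

section RankBound

/-- Coordinate column matrix. -/
abbrev colM (F : Type) [Field F] {N ι : Type} [DecidableEq N] (f : ι → N) : Matrix N ι F :=
  (1 : Matrix N N F).submatrix id f

/-- Coordinate row matrix. -/
abbrev rowM (F : Type) [Field F] {N ι : Type} [DecidableEq N] (f : ι → N) : Matrix ι N F :=
  (1 : Matrix N N F).submatrix f id

lemma rowM_mul_colM {N ι κ : Type} [Fintype N] [DecidableEq N] (f : ι → N) (g : κ → N) :
    (rowM F f) * colM F g = (1 : Matrix N N F).submatrix f g := by
  have := Matrix.submatrix_mul_equiv (1 : Matrix N N F) (1 : Matrix N N F) f (Equiv.refl N) g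
  rw [Matrix.mul_one] at this
  exact this

lemma rowM_mul_colM_self {N ι : Type} [Fintype N] [DecidableEq N] [DecidableEq ι] (f : ι → N)
    (hf : Function.Injective f) : (rowM F f) * colM F f = 1 := by
  rw [rowM_mul_colM, Matrix.submatrix_one _ hf]

lemma rowM_mul_colM_disj {N ι κ : Type} [Fintype N] [DecidableEq N] (f : ι → N) (g : κ → N)
    (h : ∀ i j, f i ≠ g j) : (rowM F f) * colM F g = 0 := by
  rw [rowM_mul_colM]
  ext i j
  simp [h]

lemma colM_mul_colM {N ι κ : Type} [Fintype ι] [DecidableEq N] [DecidableEq ι] (f : ι → N)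
    (g : κ → ι) : (colM F f) * colM F g = colM F (f ∘ g) := by
  ext i j
  simp [Matrix.mul_apply, Matrix.one_apply]

lemma rowM_mul_rowM {N ι κ : Type} [Fintype ι] [DecidableEq N] [DecidableEq ι] (f : ι → N)
    (g : κ → ι) : (rowM F g) * rowM F f = rowM F (f ∘ g) := by
  ext i j
  simp only [Matrix.mul_apply, Matrix.submatrix_apply, Matrix.one_apply, ite_mul, one_mul,
    zero_mul, id, Finset.sum_ite_eq, Finset.mem_univ, if_true, Function.comp]

lemma blockEmbed_eq {n a b : ℕ} (hab : a + b ≤ n) (X : Matrix (Fin a) (Fin b) F) :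
    blockEmbed n a b X = colM F (fun i : Fin a => (⟨i, by omega⟩ : Fin n)) * X *
      rowM F (fun j : Fin b => (⟨n - b + j, by omega⟩ : Fin n)) := by
  ext i j
  simp only [blockEmbed, Matrix.of_apply, Matrix.mul_apply, Matrix.submatrix_apply, id,
    Matrix.one_apply, ite_mul, one_mul, zero_mul, mul_ite, mul_one, mul_zero]
  by_cases hi : (i : ℕ) < a
  · rw [dif_pos hi]
    have e1 : ∀ x : Fin a, (i = (⟨x, by omega⟩ : Fin n)) ↔ x = ⟨i, hi⟩ := by
      intro x; rw [Fin.ext_iff, Fin.ext_iff]; exact eq_comm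
    simp only [e1, Finset.sum_ite_eq', Finset.mem_univ, if_true]
    by_cases hj : n - b ≤ (j : ℕ) ∧ (j : ℕ) - (n - b) < b
    · rw [dif_pos hj]
      have e2 : ∀ x : Fin b, ((⟨n - b + x, by omega⟩ : Fin n) = j) ↔
          x = ⟨(j : ℕ) - (n - b), hj.2⟩ := by
        intro x; rw [Fin.ext_iff, Fin.ext_iff]; simp only; omega
      simp only [e2, Finset.sum_ite_eq', Finset.mem_univ, if_true]
    · rw [dif_neg hj]
      symm
      apply Finset.sum_eq_zero
      intro x _
      rw [if_neg]
      rw [Fin.ext_iff]; simp only; omega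
  · rw [dif_neg hi]
    symm
    apply Finset.sum_eq_zero
    intro x _
    split_ifs
    · apply Finset.sum_eq_zero
      intro y _
      rw [if_neg]
      rw [Fin.ext_iff]; simp only; omega
    · rfl

lemma block_zero {n a b : ℕ} (hab : a + b ≤ n) :
    (rowM F (fun j : Fin b => (⟨n - b + j, by omega⟩ : Fin n)) : Matrix _ _ F) *
      colM F (fun i : Fin a => (⟨i, by omega⟩ : Fin n)) = 0 := by
  apply rowM_mul_colM_disj
  intro i j
  rw [Ne, Fin.ext_iff]; simp only; omega

lemma uU_eq {n a b : ℕ} (hab : a + b ≤ n) (X : Matrix (Fin a) (Fin b) F) :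
    uU n a b hab X = uu _ _ (block_zero hab) X := by
  apply Units.ext
  rw [uu_val, ← blockEmbed_eq hab]; rfl

lemma uu_conj {N p q : Type} [Fintype N] [DecidableEq N] [Fintype p] [DecidableEq p]
    [Fintype q] [DecidableEq q] (A A' : Matrix N p F) (B B' : Matrix q N F)
    (h : B * A = 0) (h' : B' * A' = 0) (g : GL N F)
    (hA : (g : Matrix N N F) * A = A') (hB : B = B' * (g : Matrix N N F)) (X : Matrix p q F) :
    g * uu A B h X = uu A' B' h' X * g := by
  apply Units.ext
  rw [Units.val_mul, Units.val_mul, uu_val, uu_val, Matrix.mul_add, Matrix.add_mul, ← hA, hB]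
  simp only [Matrix.mul_assoc, Matrix.mul_one, Matrix.one_mul]

lemma uu_comm {N p q p' q' : Type} [Fintype N] [DecidableEq N] [Fintype p] [DecidableEq p]
    [Fintype q] [DecidableEq q] [Fintype p'] [DecidableEq p']
    [Fintype q'] [DecidableEq q'] (A : Matrix N p F) (A' : Matrix N p' F)
    (B : Matrix q N F) (B' : Matrix q' N F)
    (h : B * A = 0) (h' : B' * A' = 0) (h1 : B * A' = 0) (h2 : B' * A = 0)
    (X : Matrix p q F) (X' : Matrix p' q' F) :
    uu A B h X * uu A' B' h' X' = uu A' B' h' X' * uu A B h X := by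
  apply Units.ext
  rw [Units.val_mul, Units.val_mul, uu_val, uu_val]
  have e1 : A * X * B * (A' * X' * B') = 0 := by
    rw [show A * X * B * (A' * X' * B') = A * X * (B * A') * X' * B' by
      simp only [Matrix.mul_assoc], h1]
    simp
  have e2 : A' * X' * B' * (A * X * B) = 0 := by
    rw [show A' * X' * B' * (A * X * B) = A' * X' * (B' * A) * X * B by
      simp only [Matrix.mul_assoc], h2]
    simp
  rw [Matrix.add_mul, Matrix.add_mul, Matrix.mul_add, Matrix.mul_add, Matrix.mul_add,
    Matrix.mul_add, e1, e2]
  simp only [Matrix.one_mul, Matrix.mul_one]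
  abel

lemma exists_GL_pair {N κ : Type} [Fintype N] [DecidableEq N] [Fintype κ] [DecidableEq κ]
    (A : Matrix N κ F) (B : Matrix κ N F) (h : B * A = 0)
    (R : Matrix κ N F) (C : Matrix N κ F) (hR : R * A = 1) (hC : B * C = 1)
    (f : κ ⊕ κ → N) (hf : Function.Injective f) :
    ∃ g : GL N F, (g : Matrix N N F) * A = colM F (f ∘ Sum.inl) ∧
      B = rowM F (f ∘ Sum.inr) * (g : Matrix N N F) := by
  have hM : fromRows (R - R * C * B) B * fromCols A C = 1 := by
    rw [fromRows_mul_fromCols, Matrix.sub_mul, Matrix.sub_mul, Matrix.mul_assoc _ B A,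
      Matrix.mul_assoc _ B C, h, hC, hR]
    simp
  obtain ⟨g, hg⟩ := exists_GL_mul_eq (fromCols A C) (colM F f) _ (rowM F f) hM
    (rowM_mul_colM_self f hf)
  have e : (colM F f) = fromCols (colM F (f ∘ Sum.inl)) (colM F (f ∘ Sum.inr)) := by
    ext i (j | j) <;> rfl
  rw [e, mul_fromCols, fromCols_inj.eq_iff] at hg
  obtain ⟨hgA, hgC⟩ := hg
  set Er : Matrix N κ F := colM F (f ∘ Sum.inl)
  set Ec : Matrix N κ F := colM F (f ∘ Sum.inr) with hEc
  set Ect : Matrix κ N F := rowM F (f ∘ Sum.inr) with hEct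
  have hcc : Ect * Ec = 1 := rowM_mul_colM_self _ (hf.comp Sum.inr_injective)
  have hcr : Ect * Er = 0 := by
    apply rowM_mul_colM_disj
    intro i j hij
    have := hf (show f (Sum.inr i) = f (Sum.inl j) from hij)
    simp at this
  have gi : (↑g⁻¹ : Matrix N N F) * g = 1 := by rw [← Units.val_mul]; simp
  have hA' : A = (↑g⁻¹ : Matrix N N F) * Er := by rw [← hgA, ← Matrix.mul_assoc, gi, Matrix.one_mul]
  have hC' : C = (↑g⁻¹ : Matrix N N F) * Ec := by rw [← hgC, ← Matrix.mul_assoc, gi, Matrix.one_mul]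
  set B0 : Matrix κ N F := B * (↑g⁻¹ : Matrix N N F) with hB0
  have h0r : B0 * Er = 0 := by rw [hB0, Matrix.mul_assoc, ← hA', h]
  have h0c : B0 * Ec = 1 := by rw [hB0, Matrix.mul_assoc, ← hC', hC]
  have hz : (B0 - Ect) * Ec = 0 := by rw [Matrix.sub_mul, h0c, hcc, sub_self]
  refine ⟨uu Ec (B0 - Ect) hz 1 * g, ?_, ?_⟩
  · rw [Units.val_mul, Matrix.mul_assoc, hgA, uu_val, Matrix.add_mul, Matrix.mul_assoc _ (B0 - Ect),
      Matrix.sub_mul, h0r, hcr]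
    simp
  · rw [Units.val_mul, ← Matrix.mul_assoc, uu_val, Matrix.mul_add, ← Matrix.mul_assoc,
      ← Matrix.mul_assoc, hcc]
    simp only [Matrix.mul_one, Matrix.one_mul, add_sub_cancel]
    rw [hB0, Matrix.mul_assoc, gi, Matrix.mul_one]

lemma rank_bound (χ₀ : AddChar F ℂ) (hχ₀ : χ₀ ≠ 1) {n k : ℕ}
    (ρ : Representation ℂ (GL (Fin n) F) V) (hrk : HasURank χ₀ ρ k) (hk : k < n / 2)
    {κ : Type} [Fintype κ] [DecidableEq κ] (hκ : Fintype.card κ = k + 1)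
    (A : Matrix (Fin n) κ F) (B : Matrix κ (Fin n) F) (h : B * A = 0)
    (R : Matrix κ (Fin n) F) (C : Matrix (Fin n) κ F) (hR : R * A = 1) (hC : B * C = 1)
    (T : Matrix κ κ F) (hT : T.det ≠ 0) (v : V) (hv : v ≠ 0)
    (hev : ∀ X, ρ (uu A B h X) v = χ₀ (T * X).trace • v) : False := by
  have hab : n / 2 + (n - n / 2) ≤ n := by omega
  obtain ⟨-, hmax⟩ := hrk
  let e : κ ≃ Fin (k + 1) := Fintype.equivFinOfCardEq hκ
  let ra : κ → Fin (n / 2) := fun i => ⟨e i, by omega⟩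
  let cb : κ → Fin (n - n / 2) := fun i => ⟨e i, by omega⟩
  let rr : Fin (n / 2) → Fin n := fun i => ⟨i, by omega⟩
  let cc : Fin (n - n / 2) → Fin n := fun j => ⟨n - (n - n / 2) + j, by omega⟩
  let f : κ ⊕ κ → Fin n := Sum.elim (rr ∘ ra) (cc ∘ cb)
  have hf : Function.Injective f := by
    apply Function.Injective.sumElim
    · intro i j hij
      simp only [rr, ra, Function.comp, Fin.mk.injEq] at hij
      exact e.injective (Fin.ext hij)
    · intro i j hij
      simp only [cc, cb, Function.comp, Fin.mk.injEq, add_right_inj] at hij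
      exact e.injective (Fin.ext hij)
    · intro i j hij
      simp only [cc, cb, rr, ra, Function.comp, Fin.mk.injEq] at hij
      have := (e i).2
      omega
  obtain ⟨g, hgA, hgB⟩ := exists_GL_pair A B h R C hR hC f hf
  have hcr : (rowM F (f ∘ Sum.inr)) * colM F (f ∘ Sum.inl) = 0 := by
    apply rowM_mul_colM_disj
    intro i j hij
    have := hf (show f (Sum.inr i) = f (Sum.inl j) from hij)
    simp at this
  have hev' : ∀ X, ρ (uu _ _ hcr X) (ρ g v) = χ₀ (T * X).trace • (ρ g v) := by
    intro X
    rw [← Module.End.mul_apply, ← map_mul, ← uu_conj A _ B _ h hcr g hgA hgB X, map_mul,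
      Module.End.mul_apply, hev, map_smul]
  have hv' : ρ g v ≠ 0 := by
    intro h0
    apply hv
    have := congrArg (ρ g⁻¹) h0
    rwa [← Module.End.mul_apply, ← map_mul, inv_mul_cancel, map_one, map_zero,
      Module.End.one_apply] at this
  have hex : ∃ T', proj χ₀ ρ _ _ (block_zero hab) T' (ρ g v) ≠ 0 := by
    by_contra! hall
    apply hv'
    rw [← sum_proj χ₀ ρ hχ₀ _ _ (block_zero hab) (ρ g v)]
    exact Finset.sum_eq_zero fun T' _ => hall T'
  obtain ⟨T', hT'⟩ := hex
  have happ : CharAppears χ₀ ρ hab T' := by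
    refine ⟨_, hT', ?_⟩
    intro X
    rw [uU_eq, proj_eig]
  have hle := hmax T' happ
  have hsub : ∀ X : Matrix κ κ F, uu _ _ hcr X = uu _ _ (block_zero hab)
      ((colM F ra) * X * rowM F cb) := by
    intro X
    apply Units.ext
    rw [uu_val, uu_val]
    have e1 : (colM F (f ∘ Sum.inl)) = colM F rr * colM F ra := by
      rw [colM_mul_colM]; rfl
    have e2 : (rowM F (f ∘ Sum.inr)) = rowM F cb * rowM F cc := by
      rw [rowM_mul_rowM]; rfl
    rw [e1, e2]
    simp only [Matrix.mul_assoc]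
    rfl
  have hTT : (rowM F cb) * T' * colM F ra = T := by
    apply trace_char_sep χ₀ hχ₀
    intro X
    have h1 := proj_eig χ₀ ρ _ _ (block_zero hab) T' (ρ g v)
      ((colM F ra) * X * rowM F cb)
    have h2 := proj_comm χ₀ ρ _ _ (block_zero hab) T' (ρ g v) (uu _ _ hcr X) _
      (by intro Y; rw [hsub, uu_mul, uu_mul, add_comm]) (hev' X)
    rw [← hsub, h2] at h1
    have h3 := smul_left_injective ℂ hT' h1
    rw [h3]
    congr 1
    rw [Matrix.mul_assoc, Matrix.mul_assoc, Matrix.trace_mul_comm]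
    simp only [Matrix.mul_assoc]
  have hrank : T.rank = k + 1 := by
    rw [← hκ]
    apply Matrix.rank_of_isUnit
    rw [Matrix.isUnit_iff_isUnit_det]
    exact isUnit_iff_ne_zero.2 hT
  have h1 := Matrix.rank_mul_le_left ((rowM F cb) * T') (colM F ra)
  have h2 := Matrix.rank_mul_le_right (rowM F cb) T'
  rw [hTT] at h1
  omega

end RankBound

section V5

variable {N κ : Type} [Fintype N] [DecidableEq N] [Fintype κ] [DecidableEq κ]

/-- The eigenspace attached to a pair of frames `A`, `C`. -/
def V5 (χ₀ : AddChar F ℂ) (ρ : Representation ℂ (GL N F) V) (A C : Matrix N κ F) :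
    Submodule ℂ V where
  carrier := {v | ∀ (Y : Matrix κ N F) (hY : Y * A = 0),
    ρ (uu A Y hY 1) v = χ₀ (Y * C).trace • v}
  zero_mem' := by intro Y hY; simp
  add_mem' := by
    intro a b ha hb Y hY
    rw [map_add, ha Y hY, hb Y hY, smul_add]
  smul_mem' := by
    intro c a ha Y hY
    rw [map_smul, ha Y hY, smul_comm]

lemma V5_conj (χ₀ : AddChar F ℂ) (ρ : Representation ℂ (GL N F) V) (A C A' C' : Matrix N κ F)
    (g : GL N F) (hA : (g : Matrix N N F) * A = A') (hC : (g : Matrix N N F) * C = C') (v : V)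
    (hv : v ∈ V5 χ₀ ρ A C) : ρ g v ∈ V5 χ₀ ρ A' C' := by
  intro Y hY
  have h1 : (Y * (g : Matrix N N F)) * A = 0 := by rw [Matrix.mul_assoc, hA, hY]
  rw [← Module.End.mul_apply, ← map_mul, ← uu_conj A A' (Y * (g : Matrix N N F)) Y h1 hY g hA rfl 1,
    map_mul, Module.End.mul_apply, hv _ h1, map_smul, Matrix.mul_assoc, hC]

lemma exists_rank_compress {a b k : ℕ} (T : Matrix (Fin b) (Fin a) F) (hT : T.rank = k) :
    ∃ (P : Matrix (Fin a) (Fin k) F) (Q : Matrix (Fin k) (Fin b) F), Q * T * P = 1 := by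
  let f := Matrix.toLin' T
  have hfr : Module.finrank F (LinearMap.range f) = k := by
    rw [← hT, Matrix.rank]; rfl
  let e : (Fin k → F) ≃ₗ[F] LinearMap.range f :=
    (LinearEquiv.ofFinrankEq _ _ (by rw [hfr]; simp))
  obtain ⟨s, hs⟩ := f.rangeRestrict.exists_rightInverse_of_surjective f.range_rangeRestrict
  let P := s ∘ₗ e.toLinearMap
  have hinj : LinearMap.ker ((LinearMap.range f).subtype ∘ₗ e.toLinearMap) = ⊥ := by
    rw [LinearMap.ker_eq_bot]
    exact (Subtype.val_injective).comp e.injective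
  obtain ⟨Q, hQ⟩ := LinearMap.exists_leftInverse_of_injective _ hinj
  have hfP : f ∘ₗ P = (LinearMap.range f).subtype ∘ₗ e.toLinearMap := by
    apply LinearMap.ext
    intro x
    have := LinearMap.congr_fun hs (e x)
    exact congrArg Subtype.val this
  refine ⟨LinearMap.toMatrix' P, LinearMap.toMatrix' Q, ?_⟩
  have hT : T = LinearMap.toMatrix' f := by simp [f]
  rw [hT, Matrix.mul_assoc, ← LinearMap.toMatrix'_comp, ← LinearMap.toMatrix'_comp, hfP, hQ]
  simp

lemma V5_nonzero_of (χ₀ : AddChar F ℂ) (hχ₀ : χ₀ ≠ 1) (ρ : Representation ℂ (GL N F) V)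
    (A : Matrix N κ F) (B : Matrix κ N F) (h : B * A = 0) (R : Matrix κ N F) (hR : R * A = 1)
    (v : V) (hv : v ≠ 0) (hev : ∀ X, ρ (uu A B h X) v = χ₀ X.trace • v)
    (f : κ ⊕ κ → N) (hf : Function.Injective f) :
    ∃ w ∈ V5 χ₀ ρ (colM F (f ∘ Sum.inl)) (colM F (f ∘ Sum.inr)), w ≠ 0 := by
  have hz : (1 - A * R) * A = 0 := by
    rw [Matrix.sub_mul, Matrix.mul_assoc, hR]; simp
  have hBB : B * (1 - A * R) = B := by
    rw [Matrix.mul_sub, ← Matrix.mul_assoc, h]; simp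
  have hex : ∃ T', proj χ₀ ρ A (1 - A * R) hz T' v ≠ 0 := by
    by_contra! hall
    apply hv
    rw [← sum_proj χ₀ ρ hχ₀ _ _ hz v]
    exact Finset.sum_eq_zero fun T' _ => hall T'
  obtain ⟨C, hC⟩ := hex
  have hsub : ∀ X : Matrix κ κ F, uu A B h X = uu A (1 - A * R) hz (X * B) := by
    intro X
    apply Units.ext
    rw [uu_val, uu_val, Matrix.mul_assoc, Matrix.mul_assoc, Matrix.mul_assoc, hBB]
  have hBC : B * C = 1 := by
    apply trace_char_sep χ₀ hχ₀
    intro X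
    have h1 := proj_eig χ₀ ρ _ _ hz C v (X * B)
    have h2 := proj_comm χ₀ ρ _ _ hz C v (uu A B h X) _
      (by intro Y; rw [hsub, uu_mul, uu_mul, add_comm]) (hev X)
    rw [← hsub, h2] at h1
    have h3 := smul_left_injective ℂ hC h1
    rw [Matrix.one_mul, h3, Matrix.mul_assoc, Matrix.trace_mul_comm, Matrix.mul_assoc]
  have hmem : proj χ₀ ρ A (1 - A * R) hz C v ∈ V5 χ₀ ρ A C := by
    intro Y hY
    have : uu A Y hY 1 = uu A (1 - A * R) hz Y := by
      apply Units.ext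
      rw [uu_val, uu_val, Matrix.mul_assoc A Y, Matrix.mul_sub, ← Matrix.mul_assoc Y, hY]
      simp
    rw [this, proj_eig, Matrix.trace_mul_comm]
  have hM : fromRows (R - R * C * B) B * fromCols A C = 1 := by
    rw [fromRows_mul_fromCols, Matrix.sub_mul, Matrix.sub_mul, Matrix.mul_assoc _ B A,
      Matrix.mul_assoc _ B C, h, hBC, hR]
    simp
  obtain ⟨g, hg⟩ := exists_GL_mul_eq (fromCols A C) (colM F f) _ (rowM F f) hM
    (rowM_mul_colM_self f hf)
  have e : (colM F f) = fromCols (colM F (f ∘ Sum.inl)) (colM F (f ∘ Sum.inr)) := by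
    ext i (j | j) <;> rfl
  rw [e, mul_fromCols, fromCols_inj.eq_iff] at hg
  refine ⟨ρ g (proj χ₀ ρ A (1 - A * R) hz C v), V5_conj χ₀ ρ A C _ _ g hg.1 hg.2 _ hmem, ?_⟩
  intro h0
  apply hC
  have := congrArg (ρ g⁻¹) h0
  rwa [← Module.End.mul_apply, ← map_mul, inv_mul_cancel, map_one, map_zero,
    Module.End.one_apply] at this

lemma V5_nonzero (χ₀ : AddChar F ℂ) (hχ₀ : χ₀ ≠ 1) {n k : ℕ}
    (ρ : Representation ℂ (GL (Fin n) F) V) (hrk : HasURank χ₀ ρ k)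
    (f : Fin k ⊕ Fin k → Fin n) (hf : Function.Injective f) :
    ∃ w ∈ V5 χ₀ ρ (colM F (f ∘ Sum.inl)) (colM F (f ∘ Sum.inr)), w ≠ 0 := by
  have hab : n / 2 + (n - n / 2) ≤ n := by omega
  obtain ⟨⟨T, ⟨v, hv, hev⟩, hT⟩, -⟩ := hrk
  obtain ⟨P, Q, hPQ⟩ := exists_rank_compress T hT
  let rr : Fin (n / 2) → Fin n := fun i => ⟨i, by omega⟩
  let cc : Fin (n - n / 2) → Fin n := fun j => ⟨n - (n - n / 2) + j, by omega⟩
  have hbz : rowM F cc * colM F rr = 0 := block_zero hab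
  have hrr : Function.Injective rr := by
    intro i j hij
    simpa [rr, Fin.ext_iff] using hij
  have hz : (Q * rowM F cc) * (colM F rr * P) = 0 := by
    rw [show (Q * rowM F cc) * (colM F rr * P) = Q * (rowM F cc * colM F rr) * P by
      simp only [Matrix.mul_assoc], hbz]
    simp
  have hR : (Q * T * rowM F rr) * (colM F rr * P) = 1 := by
    rw [show (Q * T * rowM F rr) * (colM F rr * P) = Q * T * (rowM F rr * colM F rr) * P by
      simp only [Matrix.mul_assoc], rowM_mul_colM_self rr hrr, Matrix.mul_one, hPQ]
  refine V5_nonzero_of χ₀ hχ₀ ρ (colM F rr * P) (Q * rowM F cc) hz _ hR v hv ?_ f hf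
  intro X
  have := hev (P * X * Q)
  rw [uU_eq] at this
  have e : uu (colM F rr * P) (Q * rowM F cc) hz X = uu _ _ (block_zero hab) (P * X * Q) := by
    apply Units.ext
    rw [uu_val, uu_val]
    simp only [Matrix.mul_assoc]
    rfl
  rw [e, this]
  congr 2
  rw [show T * (P * X * Q) = (T * P * X) * Q by simp only [Matrix.mul_assoc],
    Matrix.trace_mul_comm, show Q * (T * P * X) = (Q * T * P) * X by
      simp only [Matrix.mul_assoc], hPQ, Matrix.one_mul]

/-- Transvections in the complement act trivially. -/
lemma V5_transvection (χ₀ : AddChar F ℂ) (hχ₀ : χ₀ ≠ 1) {n k : ℕ}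
    (ρ : Representation ℂ (GL (Fin n) F) V) (hrk : HasURank χ₀ ρ k) (hk : k < n / 2)
    (f : Fin k ⊕ Fin k → Fin n) (hf : Function.Injective f) (l l' : Fin n) (hll : l ≠ l')
    (hl : ∀ i, f i ≠ l) (hl' : ∀ i, f i ≠ l') (t : F) (g : GL (Fin n) F)
    (hg : (g : Matrix _ _ F) = Matrix.transvection l l' t) (v : V)
    (hv : v ∈ V5 χ₀ ρ (colM F (f ∘ Sum.inl)) (colM F (f ∘ Sum.inr))) : ρ g v = v := by
  let r : Fin k ⊕ Unit → Fin n := Sum.elim (f ∘ Sum.inl) (fun _ => l)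
  let c : Fin k ⊕ Unit → Fin n := Sum.elim (f ∘ Sum.inr) (fun _ => l')
  have hr : Function.Injective r :=
    Function.Injective.sumElim (hf.comp Sum.inl_injective) (fun _ _ _ => rfl) (fun i j => hl _)
  have hc : Function.Injective c :=
    Function.Injective.sumElim (hf.comp Sum.inr_injective) (fun _ _ _ => rfl) (fun i j => hl' _)
  have hcr : ∀ i j, c i ≠ r j := by
    rintro (i | i) (j | j)
    · intro h
      have := hf (show f (Sum.inr i) = f (Sum.inl j) from h)
      simp at this
    · exact hl _
    · exact (hl' _).symm
    · exact hll.symm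
  have hz : rowM F c * colM F r = 0 := rowM_mul_colM_disj c r hcr
  have hA0 : colM F (f ∘ Sum.inl) = colM F r * colM F (Sum.inl : Fin k → Fin k ⊕ Unit) := by
    rw [colM_mul_colM]; rfl
  have hC0 : colM F (f ∘ Sum.inr) = colM F c * colM F (Sum.inl : Fin k → Fin k ⊕ Unit) := by
    rw [colM_mul_colM]; rfl
  set J : Matrix (Fin k ⊕ Unit) (Fin k) F := colM F Sum.inl with hJ
  have hguu : g = uu (colM F r) (rowM F c) hz (Matrix.single (Sum.inr ()) (Sum.inr ()) t) := by
    apply Units.ext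
    rw [hg, uu_val, Matrix.transvection]
    congr 1
    ext i j
    simp [Matrix.mul_apply, Matrix.single_apply, Matrix.one_apply, r, c, ite_and]
    grind
  have hfirst : ∀ X1 : Matrix (Fin k) (Fin k ⊕ Unit) F,
      ρ (uu (colM F r) (rowM F c) hz (J * X1)) v = χ₀ (J * X1).trace • v := by
    intro X1
    have hY : (X1 * rowM F c) * colM F (f ∘ Sum.inl) = 0 := by
      rw [hA0, Matrix.mul_assoc, ← Matrix.mul_assoc (rowM F c), hz]; simp
    have e : uu (colM F r) (rowM F c) hz (J * X1) = uu _ _ hY 1 := by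
      apply Units.ext
      rw [uu_val, uu_val, hA0]
      simp only [Matrix.mul_assoc, Matrix.one_mul]
    rw [e, hv _ hY, hC0]
    congr 2
    rw [Matrix.mul_assoc, ← Matrix.mul_assoc (rowM F c), rowM_mul_colM_self c hc, Matrix.one_mul,
      Matrix.trace_mul_comm]
  have key : ∀ T, ρ g (proj χ₀ ρ _ _ hz T v) = proj χ₀ ρ _ _ hz T v := by
    intro T
    by_cases h0 : proj χ₀ ρ _ _ hz T v = 0
    · rw [h0, map_zero]
    have hTJ : T * J = J := by
      apply trace_char_sep χ₀ hχ₀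
      intro X1
      have h1 := proj_eig χ₀ ρ _ _ hz T v (J * X1)
      have h2 := proj_comm χ₀ ρ _ _ hz T v (uu (colM F r) (rowM F c) hz (J * X1)) _
        (by intro Y; rw [uu_mul, uu_mul, add_comm]) (hfirst X1)
      rw [h2] at h1
      have h3 := smul_left_injective ℂ h0 h1
      rw [h3, Matrix.mul_assoc]
    have hT : T = fromBlocks 1 T.toBlocks₁₂ 0 T.toBlocks₂₂ := by
      conv_lhs => rw [← Matrix.fromBlocks_toBlocks T]
      have hTa : ∀ a b, T a (Sum.inl b) = J a b := by
        intro a b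
        rw [← hTJ, hJ]
        simp [Matrix.mul_apply, Matrix.one_apply]
      congr 1
      · ext a b
        rw [Matrix.toBlocks₁₁, Matrix.of_apply, hTa]
        simp [hJ, Matrix.one_apply]
      · ext a b
        rw [Matrix.toBlocks₂₁, Matrix.of_apply, hTa]
        simp [hJ]
    have hdet : T.det = T (Sum.inr ()) (Sum.inr ()) := by
      rw [hT, Matrix.det_fromBlocks_zero₂₁]
      simp [Matrix.toBlocks₂₂]
    have hTu : T (Sum.inr ()) (Sum.inr ()) = 0 := by
      by_contra hne
      refine rank_bound χ₀ hχ₀ ρ hrk hk (κ := Fin k ⊕ Unit) (by simp) _ _ hz (rowM F r) (colM F c)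
        (rowM_mul_colM_self r hr) (rowM_mul_colM_self c hc) T (by rwa [hdet]) _ h0 ?_
      intro X
      exact proj_eig χ₀ ρ _ _ hz T v X
    rw [hguu, proj_eig, Matrix.trace_mul_single, hTu]
    simp
  conv_lhs => rw [← sum_proj χ₀ ρ hχ₀ _ _ hz v]
  conv_rhs => rw [← sum_proj χ₀ ρ hχ₀ _ _ hz v]
  rw [map_sum]
  exact Finset.sum_congr rfl fun T _ => key T

end V5

section Blocks

variable {K L : Type} [Fintype K] [DecidableEq K] [Fintype L] [DecidableEq L]

/-- Block diagonal embedding `D ↦ diag(1, D)`. -/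
def dblk (K : Type) [Fintype K] [DecidableEq K] : GL L F →* GL (K ⊕ L) F :=
  Units.map
    { toFun := fun D => fromBlocks 1 0 0 D
      map_one' := Matrix.fromBlocks_one
      map_mul' := by intro a b; rw [Matrix.fromBlocks_multiply]; simp }

lemma dblk_val (D : GL L F) : (dblk K D : Matrix (K ⊕ L) (K ⊕ L) F) = fromBlocks 1 0 0 D := rfl

/-- The unipotent element with block `B` in the upper right corner. -/
def ublk (B : Matrix K L F) : GL (K ⊕ L) F where
  val := fromBlocks 1 B 0 1
  inv := fromBlocks 1 (-B) 0 1
  val_inv := by rw [Matrix.fromBlocks_multiply]; simp [Matrix.fromBlocks_one]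
  inv_val := by rw [Matrix.fromBlocks_multiply]; simp [Matrix.fromBlocks_one]

lemma ublk_val (B : Matrix K L F) :
    (ublk B : Matrix (K ⊕ L) (K ⊕ L) F) = fromBlocks 1 B 0 1 := rfl

lemma ublk_add (B B' : Matrix K L F) : ublk (B + B') = ublk B * ublk B' := by
  apply Units.ext
  rw [Units.val_mul, ublk_val, ublk_val, ublk_val, Matrix.fromBlocks_multiply]
  simp [add_comm]

/-- Transvection as an element of `GL`. -/
def tGL (i j : L) (h : i ≠ j) (t : F) : GL L F where
  val := transvection i j t
  inv := transvection i j (-t)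
  val_inv := by rw [transvection_mul_transvection_same i j h]; simp
  inv_val := by rw [transvection_mul_transvection_same i j h]; simp

lemma tGL_val (i j : L) (h : i ≠ j) (t : F) :
    (tGL i j h t : Matrix L L F) = transvection i j t := rfl

/-- Diagonal matrices as elements of `GL`. -/
def dg (L : Type) [Fintype L] [DecidableEq L] : (L → Fˣ) →* GL L F :=
  (Units.map (Matrix.diagonalRingHom L F).toMonoidHom).comp
    (MulEquiv.piUnits.symm.toMonoidHom)

lemma dg_val (d : L → Fˣ) : (dg L d : Matrix L L F) = diagonal (fun i => (d i : F)) := rfl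

lemma diag_swap (i j : L) (h : i ≠ j) (d : Fˣ) :
    (tGL i j h 1 * tGL j i h.symm (-1) * tGL i j h 1) * dg L (Pi.mulSingle i d) =
      dg L (Pi.mulSingle j d) * (tGL i j h 1 * tGL j i h.symm (-1) * tGL i j h (1 : F)) := by
  have e : ∀ i : L, (dg L (Pi.mulSingle i d) : Matrix L L F) = 1 + single i i ((d : F) - 1) := by
    intro i
    rw [dg_val]
    ext a b
    by_cases hab : a = b
    · subst hab
      by_cases hai : a = i
      · subst hai; simp
      · simp [hai, Ne.symm hai, Pi.mulSingle_eq_of_ne]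
    · simp only [Matrix.diagonal_apply, hab, if_false, Matrix.add_apply, Matrix.one_apply,
        Matrix.single_apply, zero_add]
      rw [if_neg]
      rintro ⟨h1, h2⟩
      exact hab (h1.symm.trans h2)
  apply Units.ext
  simp only [Units.val_mul, tGL_val, e, transvection]
  have hw : (1 + single i j (1 : F)) * (1 + single j i (-1)) * (1 + single i j 1) =
      1 - single i i 1 - single j j 1 + single i j 1 - single j i 1 := by
    simp [Matrix.add_mul, Matrix.mul_add, h.symm, ← Matrix.single_neg]
    abel
  rw [hw]
  simp [Matrix.add_mul, Matrix.mul_add, Matrix.sub_mul, Matrix.mul_sub, h.symm]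
  abel

lemma block_eigen [FiniteDimensional ℂ V] (σ : Representation ℂ (GL (K ⊕ L) F) V)
    (W : Submodule ℂ V) (hW : ∃ w ∈ W, w ≠ 0) (l0 l1 : L) (hl : l0 ≠ l1)
    (hinv : ∀ g : GL (K ⊕ L) F, (∃ (B : Matrix K L F) (D : Matrix L L F),
      (g : Matrix (K ⊕ L) (K ⊕ L) F) = fromBlocks 1 B 0 D) →
      ∀ w ∈ W, σ g w ∈ W)
    (htr : ∀ (l l' : L) (h : l ≠ l') (t : F), ∀ w ∈ W, σ (dblk K (tGL l l' h t)) w = w) :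
    ∃ v ∈ W, v ≠ 0 ∧ ∃ α : Fˣ →* ℂˣ, ∀ g : GL (K ⊕ L) F,
      (∃ (B : Matrix K L F) (D : Matrix L L F),
      (g : Matrix (K ⊕ L) (K ⊕ L) F) = fromBlocks 1 B 0 D) →
        σ g v = ((α (Units.map Matrix.detMonoidHom g) : ℂˣ) : ℂ) • v := by
  have hinvd : ∀ D : GL L F, ∀ w ∈ W, σ (dblk K D) w ∈ W := fun D =>
    hinv _ ⟨0, D, rfl⟩
  have hinvu : ∀ B : Matrix K L F, ∀ w ∈ W, σ (ublk B) w ∈ W := fun B =>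
    hinv _ ⟨B, 1, rfl⟩
  -- unipotent part acts trivially
  have hu1 : ∀ (B : Matrix K L F) (l l' : L) (h : l ≠ l'), ∀ w ∈ W,
      σ (ublk (B * single l l' (1 : F))) w = w := by
    intro B l l' h w hw
    have e : ublk B * dblk K (tGL l l' h 1) =
        dblk K (tGL l l' h 1) * ublk (B * single l l' (1 : F)) * ublk B := by
      apply Units.ext
      simp only [Units.val_mul, ublk_val, dblk_val, tGL_val, Matrix.fromBlocks_multiply,
        transvection]
      simp [Matrix.mul_add, add_comm]
    have hx : σ (ublk B)⁻¹ w ∈ W := by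
      have : (ublk B)⁻¹ = ublk (-B) := by
        rw [inv_eq_iff_mul_eq_one, ← ublk_add, add_neg_cancel]
        apply Units.ext
        rw [ublk_val, Matrix.fromBlocks_one]; rfl
      rw [this]
      exact hinvu _ _ hw
    have h1 := congrArg (fun g => σ g (σ (ublk B)⁻¹ w)) e
    simp only [map_mul, Module.End.mul_apply] at h1
    rw [htr l l' h 1 _ hx, ← Module.End.mul_apply, ← map_mul, mul_inv_cancel, map_one,
      Module.End.one_apply] at h1
    have h2 : σ (ublk (B * single l l' (1 : F))) w ∈ W := hinvu _ _ hw
    rw [htr l l' h 1 _ h2] at h1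
    exact h1.symm
  have hu : ∀ B : Matrix K L F, ∀ w ∈ W, σ (ublk B) w = w := by
    intro B
    induction B using Matrix.induction_on' with
    | h_zero =>
      intro w _
      have : ublk (0 : Matrix K L F) = 1 := by
        apply Units.ext
        rw [ublk_val, Matrix.fromBlocks_one]; rfl
      rw [this, map_one]; rfl
    | h_add p q hp hq =>
      intro w hw
      rw [ublk_add, map_mul, Module.End.mul_apply, hq w hw, hp w hw]
    | h_std_basis i j x =>
      intro w hw
      obtain ⟨l, hlj⟩ : ∃ l : L, l ≠ j := by
        by_cases h : l0 = j
        · exact ⟨l1, fun h' => hl (h.trans h'.symm)⟩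
        · exact ⟨l0, h⟩
      have := hu1 (single i l x) l j hlj w hw
      rwa [Matrix.single_mul_single_same, mul_one] at this
  -- eigenvector
  let δ : L → Fˣ → GL (K ⊕ L) F := fun l d => dblk K (dg L (Pi.mulSingle l d))
  obtain ⟨ζ, hζ⟩ := IsCyclic.exists_monoid_generator (α := Fˣ)
  let τ : W →ₗ[ℂ] W := (σ (δ l0 ζ)).restrict (fun w hw => hinvd _ w hw)
  obtain ⟨w0, hw0, hw0'⟩ := hW
  have : Nontrivial W := ⟨⟨⟨w0, hw0⟩, 0, fun h => hw0' (congrArg Subtype.val h)⟩⟩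
  obtain ⟨μ, hμ⟩ := Module.End.exists_eigenvalue τ
  obtain ⟨v, hv⟩ := hμ.exists_hasEigenvector
  have hv1 : σ (δ l0 ζ) (v : V) = μ • (v : V) := congrArg Subtype.val hv.apply_eq_smul
  have hv0 : (v : V) ≠ 0 := fun h => hv.2 (Subtype.ext h)
  have hex : ∀ d : Fˣ, ∃ c : ℂ, σ (δ l0 d) (v : V) = c • (v : V) := by
    intro d
    obtain ⟨m, hm⟩ := Submonoid.mem_powers_iff _ _ |>.1 (hζ d)
    have hδ : ∀ m : ℕ, δ l0 (ζ ^ m) = (δ l0 ζ) ^ m := by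
      intro m
      simp only [δ]
      rw [Pi.mulSingle_pow, map_pow, map_pow]
    subst hm
    refine ⟨μ ^ m, ?_⟩
    rw [hδ]
    clear hζ
    induction m with
    | zero => simp
    | succ m ih => rw [pow_succ, map_mul, Module.End.mul_apply, hv1, map_smul, ih, smul_smul,
        pow_succ, mul_comm]
  choose c hc using hex
  have hδ1 : δ l0 1 = 1 := by simp [δ]
  have hδm : ∀ d d', δ l0 (d * d') = δ l0 d * δ l0 d' := by
    intro d d'; simp [δ, Pi.mulSingle_mul]
  let cH : Fˣ →* ℂ :=
    { toFun := c
      map_one' := by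
        have := hc 1
        rw [hδ1, map_one, Module.End.one_apply] at this
        exact (smul_left_injective ℂ hv0 (by simpa using this)).symm
      map_mul' := by
        intro d d'
        have := hc (d * d')
        rw [hδm, map_mul, Module.End.mul_apply, hc, map_smul, hc, smul_smul] at this
        rw [mul_comm (c d)]
        exact (smul_left_injective ℂ hv0 this).symm }
  let α : Fˣ →* ℂˣ := cH.toHomUnits
  have hα : ∀ d, ((α d : ℂˣ) : ℂ) = c d := fun d => rfl
  refine ⟨v, v.2, hv0, α, ?_⟩
  let S : Submonoid (GL (K ⊕ L) F) :=
    { carrier := {g | σ g (v : V) = ((α (Units.map Matrix.detMonoidHom g) : ℂˣ) : ℂ) • (v : V)}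
      one_mem' := by simp
      mul_mem' := by
        intro a b ha hb
        simp only [Set.mem_ofPred_eq] at ha hb ⊢
        rw [map_mul, Module.End.mul_apply, hb, map_smul, ha, smul_smul, map_mul, map_mul,
          Units.val_mul, mul_comm] }
  have hS : ∀ g, g ∈ S ↔ σ g (v : V) =
      ((α (Units.map Matrix.detMonoidHom g) : ℂˣ) : ℂ) • (v : V) := fun g => Iff.rfl
  have hdetd : ∀ D : GL L F, (Units.map Matrix.detMonoidHom (dblk K D) : Fˣ) =
      Units.map Matrix.detMonoidHom D := by
    intro D
    apply Units.ext
    change Matrix.det (fromBlocks 1 0 0 (D : Matrix L L F)) = Matrix.det (D : Matrix L L F)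
    rw [Matrix.det_fromBlocks_zero₂₁]; simp
  have hdetdg : ∀ (l : L) (d : Fˣ), (Units.map Matrix.detMonoidHom (δ l d) : Fˣ) = d := by
    intro l d
    simp only [δ]
    rw [hdetd]
    apply Units.ext
    change Matrix.det (diagonal (fun i => ((Pi.mulSingle l d : L → Fˣ) i : F))) = d
    rw [Matrix.det_diagonal, ← Units.coe_prod, Fintype.prod_pi_mulSingle']
  have htS : ∀ (i j : L) (h : i ≠ j) (t : F), dblk K (tGL i j h t) ∈ S := by
    intro i j h t
    rw [hS, htr _ _ _ _ _ v.2, hdetd]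
    have : (Units.map Matrix.detMonoidHom (tGL i j h t) : Fˣ) = 1 := by
      apply Units.ext
      change Matrix.det (transvection i j t) = 1
      exact det_transvection_of_ne i j h t
    rw [this]; simp
  have hδl : ∀ (l : L) (d : Fˣ), δ l d ∈ S := by
    intro l d
    have h0 : σ (δ l0 d) (v : V) = ((α d : ℂˣ) : ℂ) • (v : V) := by rw [hα, hc]
    rw [hS, hdetdg, ← h0]
    by_cases hll : l = l0
    · rw [hll]
    have e := congrArg (fun g => σ (dblk K g) (v : V)) (diag_swap l l0 hll d)
    simp only [map_mul, Module.End.mul_apply] at e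
    have hm := hinvd (dg L (Pi.mulSingle l d)) _ v.2
    rw [htr _ _ _ _ _ v.2, htr _ _ _ _ _ v.2, htr _ _ _ _ _ v.2, htr _ _ _ _ _ hm,
      htr _ _ _ _ _ hm, htr _ _ _ _ _ hm] at e
    exact e
  have hdS : ∀ d : L → Fˣ, dblk K (dg L d) ∈ S := by
    intro d
    have : d ∈ S.comap ((dblk K).comp (dg L)) := by
      rw [← Finset.univ_prod_mulSingle d]
      exact Submonoid.prod_mem _ fun l _ => hδl l (d l)
    exact this
  have hDS : ∀ M : Matrix L L F, M.det ≠ 0 →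
      ∀ D : GL L F, (D : Matrix L L F) = M → dblk K D ∈ S := by
    intro M hM
    refine diagonal_transvection_induction_of_det_ne_zero
      (fun M => ∀ D : GL L F, (D : Matrix L L F) = M → dblk K D ∈ S) M hM ?_ ?_ ?_
    · intro d hd D hD
      rw [Matrix.det_diagonal] at hd
      have hd' : ∀ i, d i ≠ 0 := fun i => Finset.prod_ne_zero_iff.1 hd i (Finset.mem_univ i)
      have : D = dg L (fun i => Units.mk0 (d i) (hd' i)) := by
        apply Units.ext
        rw [hD, dg_val]; rfl
      rw [this]
      exact hdS _
    · intro t D hD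
      have : D = tGL t.i t.j t.hij t.c := by
        apply Units.ext
        rw [hD, tGL_val]; rfl
      rw [this]
      exact htS _ _ _ _
    · intro A B hA hB ihA ihB D hD
      have : D = GeneralLinearGroup.mkOfDetNeZero A hA * GeneralLinearGroup.mkOfDetNeZero B hB := by
        apply Units.ext
        rw [hD, Units.val_mul]; rfl
      rw [this, map_mul]
      exact S.mul_mem (ihA _ rfl) (ihB _ rfl)
  have huS : ∀ B : Matrix K L F, ublk B ∈ S := by
    intro B
    rw [hS, hu B v v.2]
    have : (Units.map Matrix.detMonoidHom (ublk B) : Fˣ) = 1 := by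
      apply Units.ext
      change Matrix.det (fromBlocks 1 B 0 1) = 1
      rw [Matrix.det_fromBlocks_zero₂₁]; simp
    rw [this]; simp
  rintro g ⟨B, D, hg⟩
  have hdet : D.det ≠ 0 := by
    have h1 : (g : Matrix (K ⊕ L) (K ⊕ L) F).det ≠ 0 :=
      ((Matrix.isUnit_iff_isUnit_det _).1 g.isUnit).ne_zero
    rw [hg, Matrix.det_fromBlocks_zero₂₁] at h1
    simpa using h1
  have hgd : g = dblk K (GeneralLinearGroup.mkOfDetNeZero D hdet) * ublk B := by
    apply Units.ext
    rw [Units.val_mul, hg, dblk_val, ublk_val, Matrix.fromBlocks_multiply]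
    simp
  rw [← hS, hgd]
  exact S.mul_mem (hDS D hdet _ rfl) (huS B)

end Blocks

section Final

lemma mul_colM_eq {n : ℕ} {ι : Type} (M : Matrix (Fin n) (Fin n) F) (f : ι → Fin n)
    (h : ∀ i j, M i (f j) = (1 : Matrix (Fin n) (Fin n) F) i (f j)) : M * colM F f = colM F f := by
  ext i j
  have : (M * colM F f) i j = M i (f j) := by
    simp [Matrix.mul_apply, Matrix.one_apply]
  rw [this, h]; rfl

lemma Hsub_col {n m : ℕ} (g : GL (Fin n) F) (hg : g ∈ Hsub n m) (i j : Fin n)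
    (hj : (j : ℕ) < m) : (g : Matrix (Fin n) (Fin n) F) i j = (1 : Matrix (Fin n) (Fin n) F) i j := by
  have := hg (Pi.single j 1) (by
    intro i' hi'
    rw [Pi.single_eq_of_ne]
    rintro rfl
    omega)
  have := congrFun this i
  rw [Matrix.mulVec_single_one] at this
  simp only [Matrix.col_apply] at this
  rw [this, Matrix.one_apply, Pi.single_apply]

lemma mem_Hsub_of_col {n m : ℕ} (g : GL (Fin n) F)
    (hg : ∀ i j : Fin n, (j : ℕ) < m →
      (g : Matrix (Fin n) (Fin n) F) i j = (1 : Matrix (Fin n) (Fin n) F) i j) :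
    g ∈ Hsub n m := by
  intro v hv
  ext i
  have : v i = ((1 : Matrix (Fin n) (Fin n) F) *ᵥ v) i := by simp
  rw [this]
  simp only [Matrix.mulVec, dotProduct]
  apply Finset.sum_congr rfl
  intro j _
  by_cases hj : (j : ℕ) < m
  · rw [hg i j hj]
  · rw [hv j (by omega)]; simp

/-- Reindexing of general linear groups. -/
def reGL {n : ℕ} {M : Type} [Fintype M] [DecidableEq M] (e : M ≃ Fin n) :
    GL M F →* GL (Fin n) F :=
  Units.map (Matrix.reindexAlgEquiv F F e).toMonoidHom

/-- Reindexing of general linear groups, backwards. -/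
def reGL' {n : ℕ} {M : Type} [Fintype M] [DecidableEq M] (e : M ≃ Fin n) :
    GL (Fin n) F →* GL M F :=
  Units.map (Matrix.reindexAlgEquiv F F e.symm).toMonoidHom

lemma reGL_val {n : ℕ} {M : Type} [Fintype M] [DecidableEq M] (e : M ≃ Fin n)
    (g : GL M F) (a b : M) : (reGL e g : Matrix (Fin n) (Fin n) F) (e a) (e b) =
      (g : Matrix M M F) a b := by
  change (g : Matrix M M F) (e.symm (e a)) (e.symm (e b)) = _
  rw [Equiv.symm_apply_apply, Equiv.symm_apply_apply]

lemma reGL'_val {n : ℕ} {M : Type} [Fintype M] [DecidableEq M] (e : M ≃ Fin n)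
    (g : GL (Fin n) F) (a b : M) : (reGL' e g : Matrix M M F) a b =
      (g : Matrix (Fin n) (Fin n) F) (e a) (e b) := rfl

lemma one_reindex {n : ℕ} {M : Type} [DecidableEq M] (e : M ≃ Fin n) (a b : M) :
    (1 : Matrix (Fin n) (Fin n) F) (e a) (e b) = (1 : Matrix M M F) a b := by
  simp only [Matrix.one_apply, e.injective.eq_iff]

lemma reGL_reGL' {n : ℕ} {M : Type} [Fintype M] [DecidableEq M] (e : M ≃ Fin n)
    (g : GL (Fin n) F) : reGL e (reGL' e g) = g := by
  ext i j
  obtain ⟨a, rfl⟩ := e.surjective i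
  obtain ⟨b, rfl⟩ := e.surjective j
  rw [reGL_val, reGL'_val]

lemma reGL'_det {n : ℕ} {M : Type} [Fintype M] [DecidableEq M] (e : M ≃ Fin n)
    (g : GL (Fin n) F) : (Units.map Matrix.detMonoidHom (reGL' e g) : Fˣ) = detHom n g := by
  apply Units.ext
  change Matrix.det (Matrix.reindexAlgEquiv F F e.symm (g : Matrix (Fin n) (Fin n) F)) =
    Matrix.det (g : Matrix (Fin n) (Fin n) F)
  exact Matrix.det_reindexAlgEquiv F F e.symm _

lemma exists_det_eigen_aux (χ₀ : AddChar F ℂ) (hχ₀ : χ₀ ≠ 1)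
    {n : ℕ} [FiniteDimensional ℂ V] (ρ : Representation ℂ (GL (Fin n) F) V)
    {k : ℕ} (hrk : HasURank χ₀ ρ k) (hk : k < n / 2)
    (f : Fin k ⊕ Fin k → Fin n) (hf2 : ∀ i, ((f i : Fin n) : ℕ) < 2 * k)
    (hf : Function.Injective f)
    {K L : Type} [Fintype K] [DecidableEq K] [Fintype L] [DecidableEq L]
    (e : K ⊕ L ≃ Fin n)
    (hK : ∀ j : Fin n, (j : ℕ) < 2 * k → ∃ a, j = e (Sum.inl a))
    (hK2 : ∀ a, ((e (Sum.inl a) : Fin n) : ℕ) < 2 * k)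
    (hL : ∀ l, ¬ ((e (Sum.inr l) : Fin n) : ℕ) < 2 * k)
    (l0 l1 : L) (hl : l0 ≠ l1) :
    ∃ v : V, v ≠ 0 ∧ ∃ α : Fˣ →* ℂˣ, ∀ g ∈ Hsub n (2 * k),
      ρ g v = ((α (detHom n g) : ℂˣ) : ℂ) • v := by
  obtain ⟨v, -, hv0, α, hα⟩ := block_eigen (K := K) (L := L) (ρ.comp (reGL e))
    (V5 χ₀ ρ (colM F (f ∘ Sum.inl)) (colM F (f ∘ Sum.inr)))
    (V5_nonzero χ₀ hχ₀ ρ hrk f hf) l0 l1 hl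
    (by
      rintro g ⟨B, D, hg⟩ w hw
      have hcol : ∀ i (j : Fin n), (j : ℕ) < 2 * k →
          (reGL e g : Matrix (Fin n) (Fin n) F) i j =
          (1 : Matrix (Fin n) (Fin n) F) i j := by
        intro i j hj
        obtain ⟨a, rfl⟩ := e.surjective i
        obtain ⟨b, rfl⟩ := hK j hj
        rw [reGL_val, one_reindex, hg]
        rcases a with a | a
        · simp [Matrix.one_apply]
        · simp
      exact V5_conj χ₀ ρ _ _ _ _ (reGL e g) (mul_colM_eq _ _ fun i j => hcol i _ (hf2 _))
        (mul_colM_eq _ _ fun i j => hcol i _ (hf2 _)) w hw)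
    (by
      intro l l' h t w hw
      refine V5_transvection χ₀ hχ₀ ρ hrk hk f hf (e (Sum.inr l)) (e (Sum.inr l'))
        (fun h' => h (Sum.inr_injective (e.injective h'))) ?_ ?_ t
        (reGL e (dblk K (tGL l l' h t))) ?_ w hw
      · intro i hi
        exact hL l (hi ▸ hf2 i)
      · intro i hi
        exact hL l' (hi ▸ hf2 i)
      · ext i j
        obtain ⟨a, rfl⟩ := e.surjective i
        obtain ⟨b, rfl⟩ := e.surjective j
        rw [reGL_val, dblk_val, tGL_val, transvection, transvection, Matrix.add_apply,
          one_reindex, Matrix.single_apply]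
        simp only [EmbeddingLike.apply_eq_iff_eq]
        rcases a with a | a <;> rcases b with b | b <;>
          simp [Matrix.one_apply, Matrix.single_apply])
  refine ⟨v, hv0, α, ?_⟩
  intro g hg
  have hmem : ∃ (B : Matrix K L F) (D : Matrix L L F),
      (reGL' e g : Matrix (K ⊕ L) (K ⊕ L) F) = Matrix.fromBlocks 1 B 0 D := by
    refine ⟨(reGL' e g : Matrix (K ⊕ L) (K ⊕ L) F).toBlocks₁₂,
      (reGL' e g : Matrix (K ⊕ L) (K ⊕ L) F).toBlocks₂₂, ?_⟩
    conv_lhs => rw [← Matrix.fromBlocks_toBlocks (reGL' e g : Matrix (K ⊕ L) (K ⊕ L) F)]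
    congr 1
    · ext a b
      rw [Matrix.toBlocks₁₁, Matrix.of_apply, reGL'_val, Hsub_col g hg _ _ (hK2 b), one_reindex]
      simp [Matrix.one_apply]
    · ext a b
      rw [Matrix.toBlocks₂₁, Matrix.of_apply, reGL'_val, Hsub_col g hg _ _ (hK2 b), one_reindex]
      simp
  have := hα (reGL' e g) hmem
  rw [reGL'_det] at this
  rw [← this]
  change ρ g v = ρ (reGL e (reGL' e g)) v
  rw [reGL_reGL']

lemma exists_det_eigen (χ₀ : AddChar F ℂ) (hχ₀ : χ₀ ≠ 1)
    {n : ℕ} [FiniteDimensional ℂ V] (ρ : Representation ℂ (GL (Fin n) F) V)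
    {k : ℕ} (hrk : HasURank χ₀ ρ k) (hk : k < n / 2) :
    ∃ v : V, v ≠ 0 ∧ ∃ α : Fˣ →* ℂˣ, ∀ g ∈ Hsub n (2 * k),
      ρ g v = ((α (detHom n g) : ℂˣ) : ℂ) • v := by
  obtain ⟨f, hf2, hf⟩ : ∃ f : Fin k ⊕ Fin k → Fin n,
      (∀ i, ((f i : Fin n) : ℕ) < 2 * k) ∧ Function.Injective f := by
    refine ⟨Sum.elim (fun i => ⟨i, by omega⟩) (fun i => ⟨k + i, by omega⟩), ?_, ?_⟩
    · rintro (i | i) <;> simp only [Sum.elim_inl, Sum.elim_inr] <;> omega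
    · apply Function.Injective.sumElim
      · intro i j hij
        simpa [Fin.ext_iff] using hij
      · intro i j hij
        simpa [Fin.ext_iff] using hij
      · intro i j hij
        simp only [Fin.mk.injEq] at hij
        omega
  refine exists_det_eigen_aux χ₀ hχ₀ ρ hrk hk f hf2 hf
    (Equiv.sumCompl (fun i : Fin n => (i : ℕ) < 2 * k)) ?_ ?_ ?_
    ⟨⟨2 * k, by omega⟩, by simp⟩ ⟨⟨2 * k + 1, by omega⟩, by simp⟩ ?_
  · intro j hj
    exact ⟨⟨j, hj⟩, rfl⟩
  · intro a
    exact a.2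
  · intro l
    exact l.2
  · intro h
    have h2 := congrArg (fun x => ((x.1 : Fin n) : ℕ)) h
    simp at h2

lemma occurs_of_fixed {n m : ℕ} (hm : m ≤ n) (σ : Representation ℂ (GL (Fin n) F) V)
    (v : V) (hv : v ≠ 0) (hfix : ∀ g ∈ Hsub n m, σ g v = v) : Occurs σ (permRep n m) := by
  obtain ⟨lam, hlam⟩ : ∃ lam : Module.Dual ℂ V, lam v ≠ 0 := by
    by_contra! h
    exact hv ((Module.forall_dual_apply_eq_zero_iff ℂ v).1 h)
  let E : Matrix (Fin n) (Fin m) F := colM F (Fin.castLE hm)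
  let φ : V →ₗ[ℂ] (Matrix (Fin n) (Fin m) F → ℂ) :=
    { toFun := fun w T => ∑ g : GL (Fin n) F,
        if (g : Matrix (Fin n) (Fin n) F) * E = T then lam (σ g⁻¹ w) else 0
      map_add' := by
        intro x y
        funext T
        simp only [map_add, Pi.add_apply, ← Finset.sum_add_distrib]
        apply Finset.sum_congr rfl
        intro g _
        split_ifs <;> simp
      map_smul' := by
        intro c x
        funext T
        simp only [map_smul, Pi.smul_apply, RingHom.id_apply, Finset.smul_sum]
        apply Finset.sum_congr rfl
        intro g _
        split_ifs <;> simp }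
  have hφ : ∀ w T, φ w T = ∑ g : GL (Fin n) F,
        if (g : Matrix (Fin n) (Fin n) F) * E = T then lam (σ g⁻¹ w) else 0 := fun _ _ => rfl
  refine ⟨φ, ?_, ?_⟩
  · intro h0
    have h1 : φ v E = 0 := by rw [h0]; rfl
    rw [hφ] at h1
    have h2 : ∀ g : GL (Fin n) F, (if (g : Matrix (Fin n) (Fin n) F) * E = E then
        lam (σ g⁻¹ v) else 0) = (if (g : Matrix (Fin n) (Fin n) F) * E = E then (1 : ℂ) else 0) *
          lam v := by
      intro g
      split_ifs with hg
      · have hmem : g ∈ Hsub n m := by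
          apply mem_Hsub_of_col
          intro i j hj
          have := congrFun (congrFun hg i) ⟨j, hj⟩
          simpa [E, Matrix.mul_apply, Matrix.one_apply] using this
        rw [hfix _ (inv_mem hmem), one_mul]
      · simp
    simp only [h2] at h1
    rw [← Finset.sum_mul, mul_eq_zero, or_iff_left hlam, Finset.sum_boole, Nat.cast_eq_zero,
      Finset.card_eq_zero] at h1
    have : (1 : GL (Fin n) F) ∈ (∅ : Finset (GL (Fin n) F)) := by
      rw [← h1]; simp
    simp at this
  · intro x
    apply LinearMap.ext
    intro w
    funext T
    change φ (σ x w) T = φ w ((↑x⁻¹ : Matrix (Fin n) (Fin n) F) * T)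
    rw [hφ, hφ, ← Equiv.sum_comp (Equiv.mulLeft x)]
    apply Finset.sum_congr rfl
    intro g _
    have hiff : ((Equiv.mulLeft x g : GL (Fin n) F) : Matrix (Fin n) (Fin n) F) * E = T ↔
        (g : Matrix (Fin n) (Fin n) F) * E = (↑x⁻¹ : Matrix (Fin n) (Fin n) F) * T := by
      rw [Equiv.coe_mulLeft, Units.val_mul, Matrix.mul_assoc]
      constructor
      · intro h
        rw [← h, ← Matrix.mul_assoc, ← Units.val_mul, inv_mul_cancel]; simp
      · intro h
        rw [h, ← Matrix.mul_assoc, ← Units.val_mul, mul_inv_cancel]; simp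
    simp only [hiff]
    congr 2
    rw [← Module.End.mul_apply, ← map_mul, Equiv.coe_mulLeft]
    congr 2
    group

end Final


/-- Proposition 11.1. -/
theorem eigenvector_of_low_uRank
    (χ₀ : AddChar F ℂ) (hχ₀ : χ₀ ≠ 1)
    {n : ℕ} {V : Type} [AddCommGroup V] [Module ℂ V] [FiniteDimensional ℂ V]
    (ρ : Representation ℂ (GL (Fin n) F) V) (hρ : IsIrred ρ)
    {k : ℕ} (hrk : HasURank χ₀ ρ k) (hk : k < n / 2) :
    HasEigenVec ρ (Hsub n (2 * k)) ∧
      -- equivalently: the tensor rank of `ρ` is at most `2k`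
      sInf {j : ℕ | ∃ α : Fˣ →* ℂˣ, Occurs (twistRep α ρ) (permRep n j)} ≤ 2 * k := by
  obtain ⟨v, hv0, α, hα⟩ := exists_det_eigen χ₀ hχ₀ ρ hrk hk
  refine ⟨⟨(Units.coeHom ℂ).comp (α.comp ((detHom n).comp (Hsub n (2 * k)).subtype)), v, hv0,
    fun h => hα h h.2⟩, ?_⟩
  apply Nat.sInf_le
  refine ⟨α⁻¹, occurs_of_fixed (by omega) _ v hv0 ?_⟩
  intro g hg
  change (((α⁻¹ (detHom n g) : ℂˣ)) : ℂ) • ρ g v = v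
  rw [hα g hg, smul_smul, MonoidHom.inv_apply, ← Units.val_mul, inv_mul_cancel]
  simp

end Stmt17
end

section
/- Let ρ be an irreducible complex representation of GL_n(F_q) of U-rank k with k < n/4. Then the tensor rank of ρ equals k; equivalently, the least j for which ρ has a nonzero H_j-eigenvector is j = k. -/
/-!
STATEMENT 18: An irreducible representation ρ of GL_n(F_q) of U-rank k with
k < n/4 has tensor rank exactly k; equivalently, the least j for which ρ has a
nonzero H_j-eigenvector is j = k.
-/

open Matrix
open scoped MatrixGroups

set_option linter.unusedSectionVars false

namespace Stmt18

variable {F : Type} [Field F] [Fintype F] [DecidableEq F]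

/-- The `n × n` matrix with the `a × b` matrix `X` placed in the block occupying
rows `0,…,a-1` and columns `n-b,…,n-1`, and `0` elsewhere. -/
def blockEmbed (n a b : ℕ) (X : Matrix (Fin a) (Fin b) F) : Matrix (Fin n) (Fin n) F :=
  Matrix.of fun i j =>
    if hi : (i : ℕ) < a then
      if hj : n - b ≤ (j : ℕ) ∧ (j : ℕ) - (n - b) < b then
        X ⟨i, hi⟩ ⟨(j : ℕ) - (n - b), hj.2⟩
      else 0
    else 0

lemma blockEmbed_mul_blockEmbed {n a b : ℕ} (hab : a + b ≤ n)
    (X Y : Matrix (Fin a) (Fin b) F) :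
    blockEmbed n a b X * blockEmbed n a b Y = 0 := by
  ext i j
  rw [Matrix.mul_apply, Matrix.zero_apply]
  apply Finset.sum_eq_zero
  intro k _
  rcases Nat.lt_or_ge (k : ℕ) a with hk | hk
  · have h2 : ¬ (n - b ≤ (k : ℕ) ∧ (k : ℕ) - (n - b) < b) := by
      rintro ⟨h, -⟩; omega
    have hz : blockEmbed n a b X i k = 0 := by
      unfold blockEmbed
      by_cases hi : (i : ℕ) < a
      · rw [Matrix.of_apply, dif_pos hi, dif_neg h2]
      · rw [Matrix.of_apply, dif_neg hi]
    rw [hz, zero_mul]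
  · have hz : blockEmbed n a b Y k j = 0 := by
      unfold blockEmbed
      rw [Matrix.of_apply, dif_neg (Nat.not_lt.2 hk)]
    rw [hz, mul_zero]

/-- The element `I_n + blockEmbed X` of `GL_n(F)`; for `a + b ≤ n` these elements
form the abelian subgroup `U_{a,b}` (identified with `(M_{a,b}(F), +)`). -/
def uU (n a b : ℕ) (hab : a + b ≤ n) (X : Matrix (Fin a) (Fin b) F) : GL (Fin n) F where
  val := 1 + blockEmbed n a b X
  inv := 1 - blockEmbed n a b X
  val_inv := by
    have h := blockEmbed_mul_blockEmbed hab X X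
    have e : (1 + blockEmbed n a b X) * (1 - blockEmbed n a b X)
        = 1 - blockEmbed n a b X * blockEmbed n a b X := by noncomm_ring
    rw [e, h, sub_zero]
  inv_val := by
    have h := blockEmbed_mul_blockEmbed hab X X
    have e : (1 - blockEmbed n a b X) * (1 + blockEmbed n a b X)
        = 1 - blockEmbed n a b X * blockEmbed n a b X := by noncomm_ring
    rw [e, h, sub_zero]

variable {V : Type} [AddCommGroup V] [Module ℂ V]

/-- The character `γ_T` of `U_{a,b} ≅ M_{a,b}(F_q)`, `γ_T(X) = χ₀(trace (T*X))`,
appears in (the restriction to `U_{a,b}` of) the representation `π`, i.e. its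
eigenspace is nonzero. -/
def CharAppears (χ₀ : AddChar F ℂ) {n : ℕ} (π : Representation ℂ (GL (Fin n) F) V)
    {a b : ℕ} (hab : a + b ≤ n) (T : Matrix (Fin b) (Fin a) F) : Prop :=
  ∃ v : V, v ≠ 0 ∧ ∀ X : Matrix (Fin a) (Fin b) F,
    π (uU n a b hab X) v = χ₀ ((T * X).trace) • v

/-- `rank_{a,b}(π) = k` : the maximal rank of a character of `U_{a,b}`
appearing in `π|U_{a,b}` is `k`.  (The rank of `γ_T` is `rank T`.) -/
def HasRankAB (χ₀ : AddChar F ℂ) {n : ℕ} (π : Representation ℂ (GL (Fin n) F) V)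
    {a b : ℕ} (hab : a + b ≤ n) (k : ℕ) : Prop :=
  (∃ T, CharAppears χ₀ π hab T ∧ T.rank = k) ∧
  (∀ T, CharAppears χ₀ π hab T → T.rank ≤ k)


/-- The `U`-rank of a representation `π` of `GL_n(F_q)` equals `k`:
this is `rank_{⌊n/2⌋,⌈n/2⌉}(π) = k`. -/
def HasURank (χ₀ : AddChar F ℂ) {n : ℕ} (π : Representation ℂ (GL (Fin n) F) V) (k : ℕ) : Prop :=
  HasRankAB χ₀ π (show n / 2 + (n - n / 2) ≤ n by omega) k

/-- The subgroup `H_k ≤ GL_n(F)` of elements fixing the first `k` standard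
basis vectors of `F^n` (equivalently, fixing pointwise every vector supported
in the first `k` coordinates). -/
def Hsub (n k : ℕ) : Subgroup (GL (Fin n) F) where
  carrier := {g | ∀ v : Fin n → F, (∀ i : Fin n, k ≤ (i : ℕ) → v i = 0) →
      (↑g : Matrix (Fin n) (Fin n) F) *ᵥ v = v}
  one_mem' := by intro v hv; simp
  mul_mem' := by
    intro g h hg hh v hv
    rw [Units.val_mul, ← Matrix.mulVec_mulVec, hh v hv, hg v hv]
  inv_mem' := by
    intro g hg v hv
    calc (↑g⁻¹ : Matrix (Fin n) (Fin n) F) *ᵥ v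
        = (↑g⁻¹ : Matrix (Fin n) (Fin n) F) *ᵥ ((↑g : Matrix (Fin n) (Fin n) F) *ᵥ v) := by
          rw [hg v hv]
      _ = ((↑g⁻¹ * ↑g : Matrix (Fin n) (Fin n) F)) *ᵥ v := Matrix.mulVec_mulVec ..
      _ = v := by rw [← Units.val_mul, inv_mul_cancel, Units.val_one, Matrix.one_mulVec]

/-- The permutation representation of `GL_n(F)` on complex-valued functions on
`M_{n,k}(F)`, by left matrix multiplication: `(g · f)(T) = f (g⁻¹ * T)`. -/
def permRep (n k : ℕ) : Representation ℂ (GL (Fin n) F) (Matrix (Fin n) (Fin k) F → ℂ) where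
  toFun g :=
    { toFun := fun f T => f ((↑g⁻¹ : Matrix (Fin n) (Fin n) F) * T)
      map_add' := fun _ _ => rfl
      map_smul' := fun _ _ => rfl }
  map_one' := by
    refine LinearMap.ext fun f => funext fun T => ?_
    show f ((↑(1 : GL (Fin n) F)⁻¹ : Matrix (Fin n) (Fin n) F) * T) = f T
    congr 1
    simp
  map_mul' := by
    intro g h
    refine LinearMap.ext fun f => funext fun T => ?_
    show f _ = f _
    congr 1
    simp [_root_.mul_inv_rev, Units.val_mul, Matrix.mul_assoc]

/-- The determinant character `GL_n(F) → Fˣ`. -/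
def detHom (n : ℕ) : GL (Fin n) F →* Fˣ :=
  Units.map Matrix.detMonoidHom

/-- The twist `(α ∘ det) ⊗ ρ` of a representation `ρ` of `GL_n(F)` by the
linear character `α ∘ det`. -/
def twistRep {n : ℕ} {V : Type} [AddCommGroup V] [Module ℂ V]
    (α : Fˣ →* ℂˣ) (ρ : Representation ℂ (GL (Fin n) F) V) :
    Representation ℂ (GL (Fin n) F) V where
  toFun g := ((α (detHom n g) : ℂˣ) : ℂ) • ρ g
  map_one' := by simp
  map_mul' := by
    intro g h
    show ((α (detHom n (g * h)) : ℂˣ) : ℂ) • ρ (g * h)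
        = (((α (detHom n g) : ℂˣ) : ℂ) • ρ g) * (((α (detHom n h) : ℂˣ) : ℂ) • ρ h)
    rw [smul_mul_assoc, mul_smul_comm, smul_smul, ← Units.val_mul, ← _root_.map_mul,
      ← _root_.map_mul, _root_.map_mul ρ]

/-- `ρ` occurs in `σ` : there is a nonzero intertwining operator from `ρ` to
`σ`.  (For irreducible `ρ` this says exactly that `ρ` occurs as a
subrepresentation of `σ`.) -/
def Occurs {G : Type} [Group G] {V W : Type} [AddCommGroup V] [Module ℂ V]
    [AddCommGroup W] [Module ℂ W]
    (ρ : Representation ℂ G V) (σ : Representation ℂ G W) : Prop :=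
  ∃ φ : V →ₗ[ℂ] W, φ ≠ 0 ∧ ∀ g, φ.comp (ρ g) = (σ g).comp φ

/-- `ρ` has a nonzero vector fixed by the subgroup `H`. -/
def HasFixedVec {G : Type} [Group G] {V : Type} [AddCommGroup V] [Module ℂ V]
    (ρ : Representation ℂ G V) (H : Subgroup G) : Prop :=
  ∃ v : V, v ≠ 0 ∧ ∀ h ∈ H, ρ h v = v

/-- `ρ` has a nonzero eigenvector for the subgroup `H`: a nonzero `v` with
`ρ(h) v = c(h) • v` for all `h ∈ H`, for some character `c` of `H`. -/
def HasEigenVec {G : Type} [Group G] {V : Type} [AddCommGroup V] [Module ℂ V]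
    (ρ : Representation ℂ G V) (H : Subgroup G) : Prop :=
  ∃ c : H →* ℂ, ∃ v : V, v ≠ 0 ∧ ∀ h : H, ρ (h : G) v = c h • v

/-- Irreducibility of a representation: the space is nonzero, and the only
invariant subspaces are `⊥` and `⊤`. -/
def IsIrred {G : Type} [Group G] {V : Type} [AddCommGroup V] [Module ℂ V]
    (ρ : Representation ℂ G V) : Prop :=
  (∃ v : V, v ≠ 0) ∧
    ∀ p : Submodule ℂ V, (∀ g : G, ∀ v ∈ p, ρ g v ∈ p) → p = ⊥ ∨ p = ⊤

/-- Elementary transvection as an element of `GL`. -/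
def tv {n : ℕ} (i j : Fin n) (h : i ≠ j) (c : F) : GL (Fin n) F where
  val := transvection i j c
  inv := transvection i j (-c)
  val_inv := by rw [transvection_mul_transvection_same i j h]; simp
  inv_val := by rw [transvection_mul_transvection_same i j h]; simp

/-- Diagonal matrices with one nontrivial entry. -/
def dl {n : ℕ} (i : Fin n) : Fˣ →* GL (Fin n) F where
  toFun d :=
    { val := diagonal (Function.update 1 i (d : F))
      inv := diagonal (Function.update 1 i ((d⁻¹ : Fˣ) : F))
      val_inv := by
        rw [diagonal_mul_diagonal, ← diagonal_one]
        congr 1; ext r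
        by_cases h : r = i
        · subst h; simp
        · simp [h]
      inv_val := by
        rw [diagonal_mul_diagonal, ← diagonal_one]
        congr 1; ext r
        by_cases h : r = i
        · subst h; simp
        · simp [h] }
  map_one' := by
    apply Units.ext
    show diagonal (Function.update 1 i ((1 : Fˣ) : F)) = 1
    rw [← diagonal_one]
    congr 1; ext r
    by_cases h : r = i
    · subst h; simp
    · simp [h]
  map_mul' d e := by
    apply Units.ext
    show diagonal (Function.update 1 i ((d * e : Fˣ) : F)) = diagonal _ * diagonal _
    rw [diagonal_mul_diagonal]
    congr 1; ext r
    by_cases h : r = i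
    · subst h; simp
    · simp [h]

/-- Pointwise stabilizer of a set of basis vectors. -/
def HI {n : ℕ} (I : Finset (Fin n)) : Subgroup (GL (Fin n) F) where
  carrier := {g | ∀ i ∈ I, (g : Matrix (Fin n) (Fin n) F) *ᵥ Pi.single i 1 = Pi.single i 1}
  one_mem' := by intro v hv; rw [Units.val_one, one_mulVec]
  mul_mem' := by
    intro g h hg hh v hv
    rw [Units.val_mul, ← Matrix.mulVec_mulVec, hh v hv, hg v hv]
  inv_mem' := by
    intro g hg v hv
    nth_rewrite 1 [← hg v hv]
    rw [Matrix.mulVec_mulVec, ← Units.val_mul, inv_mul_cancel, Units.val_one, Matrix.one_mulVec]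

lemma mem_HI {n : ℕ} {I : Finset (Fin n)} {g : GL (Fin n) F} :
    g ∈ HI I ↔ ∀ i ∈ I, (g : Matrix (Fin n) (Fin n) F) *ᵥ Pi.single i 1 = Pi.single i 1 :=
  Iff.rfl

lemma tv_mulVec {n : ℕ} (i j : Fin n) (h : i ≠ j) (c : F) (x : Fin n → F) :
    (tv i j h c : Matrix (Fin n) (Fin n) F) *ᵥ x = x + Pi.single i (c * x j) := by
  show (1 + single i j c) *ᵥ x = _
  rw [add_mulVec, one_mulVec]
  congr 1
  ext r
  by_cases hr : r = i
  · subst hr; simp [mulVec, dotProduct, single_apply]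
  · simp [mulVec, dotProduct, single_apply, hr, Ne.symm hr]

lemma tv_mem_HI {n : ℕ} (I : Finset (Fin n)) (i j : Fin n) (h : i ≠ j) (hj : j ∉ I) (c : F) :
    tv i j h c ∈ HI I := by
  intro l hl
  have : j ≠ l := fun e => hj (e ▸ hl)
  rw [tv_mulVec]
  simp [this]

lemma det_tv {n : ℕ} (i j : Fin n) (h : i ≠ j) (c : F) : detHom n (tv i j h c) = 1 := by
  apply Units.ext
  exact det_transvection_of_ne i j h c

lemma det_dl {n : ℕ} (i : Fin n) (d : Fˣ) : detHom n (dl i d) = d := by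
  apply Units.ext
  show det (diagonal _) = _
  rw [det_diagonal, Finset.prod_update_of_mem (Finset.mem_univ i)]
  simp

lemma dl_mem_HI {n : ℕ} (I : Finset (Fin n)) (i : Fin n) (hi : i ∉ I) (d : Fˣ) :
    dl i d ∈ HI I := by
  intro l hl
  have : l ≠ i := fun e => hi (e ▸ hl)
  show diagonal _ *ᵥ _ = _
  ext r
  rw [mulVec_diagonal]
  by_cases hr : r = l
  · subst hr; simp [this]
  · simp [hr]

lemma clear_col {n : ℕ} (N : Subgroup (GL (Fin n) F)) (j : Fin n)
    (hN : ∀ i (h : i ≠ j) c, tv i j h c ∈ N) (x : Fin n → F) (hx : x j = 1)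
    (s : Finset (Fin n)) (hs : j ∉ s) :
    ∃ u ∈ N, (u : Matrix (Fin n) (Fin n) F) *ᵥ x = fun i => if i ∈ s then 0 else x i := by
  induction s using Finset.induction_on with
  | empty => exact ⟨1, N.one_mem, by simp⟩
  | insert i s his ih =>
    obtain ⟨u, hu, hux⟩ := ih (fun h => hs (Finset.mem_insert_of_mem h))
    have hij : i ≠ j := fun e => hs (e ▸ Finset.mem_insert_self _ _)
    refine ⟨tv i j hij (- x i) * u, N.mul_mem (hN _ _ _) hu, ?_⟩
    rw [Units.val_mul, ← mulVec_mulVec, hux, tv_mulVec]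
    have hjs : j ∉ s := fun h => hs (Finset.mem_insert_of_mem h)
    ext r
    by_cases hr : r = i
    · subst hr; simp [his, hjs, hx]
    · simp [hr]

lemma clear_col' {n : ℕ} (N : Subgroup (GL (Fin n) F)) (j : Fin n)
    (hN : ∀ i (h : i ≠ j) c, tv i j h c ∈ N) (x : Fin n → F) (hx : x j = 1) :
    ∃ u ∈ N, (u : Matrix (Fin n) (Fin n) F) *ᵥ x = Pi.single j 1 := by
  obtain ⟨u, hu, h⟩ := clear_col N j hN x hx (Finset.univ.erase j) (by simp)
  refine ⟨u, hu, h.trans ?_⟩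
  ext r
  by_cases hr : r = j
  · subst hr; simp [hx]
  · simp [hr]

lemma col_ne {n : ℕ} (I : Finset (Fin n)) (g : GL (Fin n) F) (hg : g ∈ HI I) (j : Fin n)
    (hj : j ∉ I) :
    ∃ l, l ∉ I ∧ ((g : Matrix (Fin n) (Fin n) F) *ᵥ Pi.single j 1) l ≠ 0 := by
  by_contra! hcon
  set x := (g : Matrix (Fin n) (Fin n) F) *ᵥ Pi.single j 1 with hx
  have hgx : (g : Matrix (Fin n) (Fin n) F) *ᵥ x = x := by
    have : x = ∑ i, x i • Pi.single i (1 : F) := by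
      ext r; simp [Finset.sum_apply, Pi.single_apply]
    conv_lhs => rw [this]
    conv_rhs => rw [this]
    rw [Matrix.mulVec_sum]
    apply Finset.sum_congr rfl
    intro i _
    rw [mulVec_smul]
    by_cases hi : i ∈ I
    · rw [hg i hi]
    · rw [hcon i hi]; simp
  have hinj : Function.Injective (fun y => (g : Matrix (Fin n) (Fin n) F) *ᵥ y) :=
    mulVec_injective_of_isUnit g.isUnit
  have h2 : x = Pi.single j 1 := hinj (by simp only; rw [hgx])
  have := hcon j hj
  rw [h2] at this
  simp at this

/-- The stabilizer of basis vectors is generated by transvections and one-entry diagonals. -/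
lemma gen_HI {n : ℕ} (i1 : Fin n) (N : Subgroup (GL (Fin n) F)) (m : ℕ) :
    ∀ I : Finset (Fin n), Iᶜ.card = m → i1 ∉ I →
      (∀ i j (h : i ≠ j) c, j ∉ I → tv i j h c ∈ N) →
      ∀ g ∈ HI I, ∃ s ∈ N, ∃ d : Fˣ, g = s * dl i1 d := by
  induction m with
  | zero =>
    intro I hI hi1
    rw [Finset.card_eq_zero] at hI
    have : i1 ∈ Iᶜ := by simpa using hi1
    rw [hI] at this; simp at this
  | succ m ih =>
    intro I hI hi1 hN g hg
    by_cases hex : ∃ j, j ∉ I ∧ j ≠ i1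
    · obtain ⟨j, hjI, hji⟩ := hex
      set N' := N ⊓ HI I with hN'
      have hNt : ∀ i l (h : i ≠ l) c, l ∉ I → tv i l h c ∈ N' := fun i l h c hl =>
        ⟨hN i l h c hl, tv_mem_HI I i l h hl c⟩
      -- make the entry nonzero outside j
      have step1 : ∃ u ∈ N', ∃ l, l ∉ I ∧ l ≠ j ∧
          ((u : Matrix (Fin n) (Fin n) F) *ᵥ
            ((g : Matrix (Fin n) (Fin n) F) *ᵥ Pi.single j 1)) l ≠ 0 := by
        obtain ⟨l, hl, hl0⟩ := col_ne I g hg j hjI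
        by_cases hi0 : ((g : Matrix (Fin n) (Fin n) F) *ᵥ Pi.single j 1) i1 = 0
        · by_cases hlj : l = j
          · subst hlj
            refine ⟨tv i1 l hji.symm 1, hNt _ _ _ _ hl, i1, hi1, hji.symm, ?_⟩
            rw [tv_mulVec]
            simp only [Pi.add_apply, hi0, Pi.single_eq_same, one_mul, zero_add]
            exact hl0
          · exact ⟨1, N'.one_mem, l, hl, hlj, by simpa using hl0⟩
        · exact ⟨1, N'.one_mem, i1, hi1, hji.symm, by simpa using hi0⟩
      obtain ⟨u, hu, l, hl, hlj, hul⟩ := step1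
      set x := (u : Matrix (Fin n) (Fin n) F) *ᵥ
            ((g : Matrix (Fin n) (Fin n) F) *ᵥ Pi.single j 1) with hx
      set y := (tv j l hlj.symm ((1 - x j) / x l) : Matrix (Fin n) (Fin n) F) *ᵥ x with hy
      have hyj : y j = 1 := by
        rw [hy, tv_mulVec]
        simp only [Pi.add_apply, Pi.single_eq_same]
        field_simp
        ring
      obtain ⟨w, hw, hwy⟩ := clear_col' N' j (fun i h c => hNt i j h c hjI) y hyj
      set t := tv j l hlj.symm ((1 - x j) / x l) with ht
      have htm : t ∈ N' := hNt _ _ _ _ hl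
      have hsm : w * t * u ∈ N' := N'.mul_mem (N'.mul_mem hw htm) hu
      have hg' : w * t * u * g ∈ HI (insert j I) := by
        intro i hi
        rcases Finset.mem_insert.1 hi with rfl | hi
        · rw [Units.val_mul, Units.val_mul, Units.val_mul, ← mulVec_mulVec, ← mulVec_mulVec,
            ← mulVec_mulVec, ← hx, ← hy, hwy]
        · exact (HI I).mul_mem hsm.2 hg i hi
      obtain ⟨s, hs, d, hd⟩ := ih (insert j I) (by
          rw [Finset.compl_insert, Finset.card_erase_of_mem (by simpa using hjI), hI]; rfl)
          (by simp [hi1, hji.symm]) (fun i l h c hl' => hN i l h c (by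
            intro h'; exact hl' (Finset.mem_insert_of_mem h'))) _ hg'
      refine ⟨(w * t * u)⁻¹ * s, N.mul_mem (N.inv_mem hsm.1) hs, d, ?_⟩
      rw [mul_assoc, ← hd]; group
    · push Not at hex
      obtain ⟨l, hl, hl0⟩ := col_ne I g hg i1 hi1
      obtain rfl := hex l hl
      set x := (g : Matrix (Fin n) (Fin n) F) *ᵥ Pi.single l 1 with hx
      let d : Fˣ := Units.mk0 (x l) hl0
      have hdl : ((dl l d⁻¹ : GL (Fin n) F) : Matrix (Fin n) (Fin n) F) *ᵥ Pi.single l 1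
          = (x l)⁻¹ • Pi.single l 1 := by
        show diagonal _ *ᵥ _ = _
        ext r
        rw [mulVec_diagonal]
        by_cases hr : r = l
        · subst hr; simp [d]
        · simp [hr]
      set y := (x l)⁻¹ • x with hy
      have hyj : y l = 1 := by simp [hy, hl0]
      obtain ⟨w, hw, hwy⟩ := clear_col' (N ⊓ HI I) l (fun i h c =>
        ⟨hN i l h c hi1, tv_mem_HI I i l h hi1 c⟩) y hyj
      have h1 : w * g * dl l d⁻¹ = 1 := by
        apply Units.ext
        have : ∀ i, ((w * g * dl l d⁻¹ : GL (Fin n) F) : Matrix (Fin n) (Fin n) F)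
            *ᵥ Pi.single i 1 = Pi.single i 1 := by
          intro i
          by_cases hi : i ∈ I
          · exact (HI I).mul_mem ((HI I).mul_mem hw.2 hg) (dl_mem_HI I l hi1 _) i hi
          · obtain rfl := hex i hi
            rw [Units.val_mul, Units.val_mul, ← mulVec_mulVec, ← mulVec_mulVec, hdl,
              mulVec_smul, ← hx, ← hy, hwy]
        ext r i
        have := congrFun (this i) r
        rw [mulVec_single_one] at this
        rw [Units.val_one]
        simpa [Matrix.one_apply, Pi.single_apply] using this
      refine ⟨w⁻¹, N.inv_mem hw.1, d, ?_⟩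
      rw [map_inv] at h1
      rw [eq_inv_mul_iff_mul_eq]
      exact mul_inv_eq_one.1 h1

lemma same_ker {n : ℕ} {ι : Type} [Fintype ι] [DecidableEq ι] (Z Z' : Matrix (Fin n) ι F)
    (h : ∀ x, Z *ᵥ x = 0 ↔ Z' *ᵥ x = 0) :
    ∃ g : GL (Fin n) F, (g : Matrix (Fin n) (Fin n) F) * Z = Z' := by
  set f := Z.mulVecLin with hf
  set f' := Z'.mulVecLin with hf'
  have hker : LinearMap.ker f = LinearMap.ker f' := by
    ext x; simpa [hf, hf'] using h x
  let e1 : LinearMap.range f ≃ₗ[F] LinearMap.range f' :=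
    f.quotKerEquivRange.symm ≪≫ₗ Submodule.quotEquivOfEq _ _ hker ≪≫ₗ f'.quotKerEquivRange
  have he1 : ∀ x, e1 ⟨f x, LinearMap.mem_range_self f x⟩ = ⟨f' x, LinearMap.mem_range_self f' x⟩ := by
    intro x
    have : f.quotKerEquivRange.symm ⟨f x, LinearMap.mem_range_self f x⟩
        = Submodule.Quotient.mk x := by
      rw [LinearEquiv.symm_apply_eq]
      rfl
    simp only [e1, LinearEquiv.trans_apply, this]
    rfl
  obtain ⟨C, hC⟩ := Submodule.exists_isCompl (LinearMap.range f)
  obtain ⟨C', hC'⟩ := Submodule.exists_isCompl (LinearMap.range f')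
  have hfin : Module.finrank F C = Module.finrank F C' := by
    have h1 := Submodule.finrank_add_eq_of_isCompl hC
    have h2 := Submodule.finrank_add_eq_of_isCompl hC'
    have h3 := e1.finrank_eq
    omega
  let e2 : C ≃ₗ[F] C' := LinearEquiv.ofFinrankEq _ _ hfin
  let E : (Fin n → F) ≃ₗ[F] (Fin n → F) :=
    (Submodule.prodEquivOfIsCompl _ _ hC).symm ≪≫ₗ (e1.prodCongr e2) ≪≫ₗ
      Submodule.prodEquivOfIsCompl _ _ hC'
  have hE : ∀ x, E (f x) = f' x := by
    intro x
    have : (Submodule.prodEquivOfIsCompl _ _ hC).symm (f x)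
        = (⟨f x, LinearMap.mem_range_self f x⟩, 0) := by
      rw [LinearEquiv.symm_apply_eq]; simp
    simp only [E, LinearEquiv.trans_apply, this]
    simp [LinearEquiv.prodCongr_apply, he1]
  refine ⟨⟨LinearMap.toMatrix' E.toLinearMap, LinearMap.toMatrix' E.symm.toLinearMap, ?_, ?_⟩, ?_⟩
  · rw [← LinearMap.toMatrix'_comp]; simp
  · rw [← LinearMap.toMatrix'_comp]; simp
  · show LinearMap.toMatrix' E.toLinearMap * Z = Z'
    apply Matrix.toLin'.injective
    rw [toLin'_mul, toLin'_toMatrix']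
    ext x : 1
    apply LinearMap.ext
    intro y
    exact hE _

lemma exists_section {a b k : ℕ} (T : Matrix (Fin b) (Fin a) F) (hT : T.rank = k) :
    ∃ J : Matrix (Fin a) (Fin k) F, ∀ x, (T * J) *ᵥ x = 0 → x = 0 := by
  set f := T.mulVecLin with hf
  obtain ⟨g, hg⟩ := f.rangeRestrict.exists_rightInverse_of_surjective f.range_rangeRestrict
  have hfr : Module.finrank F (Fin k → F) = Module.finrank F (LinearMap.range f) := by
    rw [Module.finrank_fin_fun, ← hT]; rfl
  let e : (Fin k → F) ≃ₗ[F] LinearMap.range f := LinearEquiv.ofFinrankEq _ _ hfr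
  refine ⟨LinearMap.toMatrix' (g ∘ₗ e.toLinearMap), fun x hx => ?_⟩
  rw [← mulVec_mulVec, ← toLin'_apply, ← toLin'_apply, toLin'_toMatrix'] at hx
  have h1 : f.rangeRestrict (g (e x)) = 0 := Subtype.ext hx
  have h2 : f.rangeRestrict (g (e x)) = e x := LinearMap.congr_fun hg (e x)
  rw [h2] at h1
  simpa using h1

lemma squash {n k : ℕ} (S : Matrix (Fin n) (Fin k) F) (hk : k ≤ n) :
    ∃ g : GL (Fin n) F, ∀ (i : Fin n) (j : Fin k), k ≤ (i : ℕ) →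
      ((g : Matrix (Fin n) (Fin n) F) * S) i j = 0 := by
  set f := S.mulVecLin with hf
  have hle : Module.finrank F (LinearMap.range f) ≤ Module.finrank F (Fin k → F) :=
    LinearMap.finrank_range_le f
  obtain ⟨q, hq⟩ := finrank_le_iff_exists_linearMap.1 hle
  let Q := LinearMap.toMatrix' (q ∘ₗ f.rangeRestrict)
  have hQ : ∀ x, Q *ᵥ x = q (f.rangeRestrict x) := by
    intro x
    rw [← toLin'_apply, toLin'_toMatrix']; rfl
  let S' : Matrix (Fin n) (Fin k) F := Matrix.of fun i j => if h : (i : ℕ) < k then Q ⟨i, h⟩ j else 0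
  have hS' : ∀ x (i : Fin n), (S' *ᵥ x) i = if h : (i : ℕ) < k then (Q *ᵥ x) ⟨i, h⟩ else 0 := by
    intro x i
    by_cases h : (i : ℕ) < k <;> simp [S', mulVec, dotProduct, h]
  obtain ⟨g, hg⟩ := same_ker S S' (by
    intro x
    have e1 : S *ᵥ x = 0 ↔ f.rangeRestrict x = 0 := by
      rw [Subtype.ext_iff]; rfl
    rw [e1, ← map_eq_zero_iff q hq, ← hQ]
    constructor
    · intro h; ext i; rw [hS']; simp [h]
    · intro h; ext i
      have := congrFun h ⟨i, by omega⟩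
      rw [hS'] at this
      simpa using this)
  refine ⟨g, fun i j hij => ?_⟩
  rw [hg]
  simp [S', hij]

lemma char_eq_zero (χ₀ : AddChar F ℂ) (hχ₀ : χ₀ ≠ 1) (t : F) (h : ∀ x, χ₀ (t * x) = 1) : t = 0 := by
  by_contra ht
  apply hχ₀
  ext x
  have := h (t⁻¹ * x)
  rw [mul_inv_cancel_left₀ ht] at this
  simpa using this

/-- If the character `γ_T` is trivial at all multiples of `X` then `tr (TX) = 0`. -/
lemma trace_eq_zero (χ₀ : AddChar F ℂ) (hχ₀ : χ₀ ≠ 1) {a b : ℕ} (T : Matrix (Fin b) (Fin a) F)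
    (X : Matrix (Fin a) (Fin b) F) (h : ∀ c : F, χ₀ ((T * (c • X)).trace) = 1) :
    (T * X).trace = 0 := by
  apply char_eq_zero χ₀ hχ₀
  intro c
  have := h c
  rwa [Matrix.mul_smul, trace_smul, smul_eq_mul, mul_comm] at this

lemma trace_mul_single {a b : ℕ} (T : Matrix (Fin b) (Fin a) F) (i : Fin a) (j : Fin b) (c : F) :
    (T * single i j c).trace = T j i * c := by
  rw [Matrix.trace_mul_single]; simp [mul_comm]

lemma orth (χ₀ : AddChar F ℂ) (hχ₀ : χ₀ ≠ 1) {a b : ℕ} (X : Matrix (Fin a) (Fin b) F) :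
    ∑ T : Matrix (Fin b) (Fin a) F, χ₀ ((T * X).trace)
      = if X = 0 then (Fintype.card (Matrix (Fin b) (Fin a) F) : ℂ) else 0 := by
  by_cases hX : X = 0
  · subst hX; simp
  · rw [if_neg hX]
    have hex : ∃ i j, X i j ≠ 0 := by
      by_contra! hc
      exact hX (by ext i j; exact hc i j)
    obtain ⟨i, j, hij⟩ := hex
    have h1 : ∃ c : F, χ₀ c ≠ 1 := by
      by_contra! hc
      exact hχ₀ (by ext x; simpa using hc x)
    obtain ⟨c, hc⟩ := h1
    let T0 : Matrix (Fin b) (Fin a) F := single j i (c / X i j)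
    have hT0 : (T0 * X).trace = c := by
      rw [trace_mul_comm, trace_mul_single]
      field_simp
    have h2 : ∑ T : Matrix (Fin b) (Fin a) F, χ₀ ((T * X).trace)
        = χ₀ c * ∑ T : Matrix (Fin b) (Fin a) F, χ₀ ((T * X).trace) := by
      rw [Finset.mul_sum]
      refine (Fintype.sum_equiv (Equiv.addLeft T0) _ _ fun T => ?_).symm
      simp only [Equiv.coe_addLeft]
      rw [Matrix.add_mul, trace_add, hT0, AddChar.map_add_eq_mul]
    have h3 : (χ₀ c - 1) * ∑ T : Matrix (Fin b) (Fin a) F, χ₀ ((T * X).trace) = 0 := by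
      linear_combination -h2
    exact (mul_eq_zero.1 h3).resolve_left (sub_ne_zero.2 hc)

/-- Equivariance of a linear map. -/
def Equi {G : Type} [Group G] {V W : Type} [AddCommGroup V] [Module ℂ V]
    [AddCommGroup W] [Module ℂ W]
    (ρ : Representation ℂ G V) (σ : Representation ℂ G W) (φ : V →ₗ[ℂ] W) : Prop :=
  ∀ g v, φ (ρ g v) = σ g (φ v)

section general
variable {G : Type} [Group G] {V W : Type} [AddCommGroup V] [Module ℂ V]
    [AddCommGroup W] [Module ℂ W]

lemma occurs_iff {ρ : Representation ℂ G V} {σ : Representation ℂ G W} :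
    Occurs ρ σ ↔ ∃ φ : V →ₗ[ℂ] W, φ ≠ 0 ∧ Equi ρ σ φ := by
  constructor
  · rintro ⟨φ, h0, h⟩
    exact ⟨φ, h0, fun g v => LinearMap.congr_fun (h g) v⟩
  · rintro ⟨φ, h0, h⟩
    exact ⟨φ, h0, fun g => LinearMap.ext fun v => h g v⟩

/-- Average of a linear map. -/
noncomputable def avg [Fintype G] (ρ : Representation ℂ G V) (σ : Representation ℂ G W) (f : V →ₗ[ℂ] W) :
    V →ₗ[ℂ] W :=
  (Fintype.card G : ℂ)⁻¹ • ∑ g : G, (σ g⁻¹) ∘ₗ f ∘ₗ (ρ g)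

lemma avg_apply [Fintype G] (ρ : Representation ℂ G V) (σ : Representation ℂ G W) (f : V →ₗ[ℂ] W)
    (v : V) : avg ρ σ f v = (Fintype.card G : ℂ)⁻¹ • ∑ g : G, σ g⁻¹ (f (ρ g v)) := by
  simp [avg, LinearMap.sum_apply]

lemma avg_equi [Fintype G] (ρ : Representation ℂ G V) (σ : Representation ℂ G W) (f : V →ₗ[ℂ] W) :
    Equi ρ σ (avg ρ σ f) := by
  intro h v
  rw [avg_apply, avg_apply, map_smul, map_sum]
  congr 1
  refine Fintype.sum_equiv (Equiv.mulRight h) _ _ fun g => ?_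
  simp only [Equiv.coe_mulRight]
  rw [← Module.End.mul_apply (ρ g), ← map_mul, ← Module.End.mul_apply (σ h), ← map_mul]
  simp

lemma exists_retract [Fintype G] {ρ : Representation ℂ G V} {σ : Representation ℂ G W}
    {φ : V →ₗ[ℂ] W} (hφ : Equi ρ σ φ) (hinj : Function.Injective φ) :
    ∃ ψ : W →ₗ[ℂ] V, Equi σ ρ ψ ∧ ∀ v, ψ (φ v) = v := by
  obtain ⟨f, hf⟩ := LinearMap.exists_leftInverse_of_injective φ (LinearMap.ker_eq_bot.2 hinj)
  refine ⟨avg σ ρ f, avg_equi _ _ _, fun v => ?_⟩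
  rw [avg_apply]
  have : ∀ g : G, ρ g⁻¹ (f (σ g (φ v))) = v := by
    intro g
    rw [← hφ, show f (φ (ρ g v)) = ρ g v from LinearMap.congr_fun hf _,
      ← Module.End.mul_apply, ← map_mul]
    simp
  simp [this, ← Nat.cast_smul_eq_nsmul ℂ, smul_smul]

lemma exists_sect [Fintype G] {ρ : Representation ℂ G V} {σ : Representation ℂ G W}
    {ψ : W →ₗ[ℂ] V} (hψ : Equi σ ρ ψ) (hsurj : Function.Surjective ψ) :
    ∃ φ : V →ₗ[ℂ] W, Equi ρ σ φ ∧ ∀ v, ψ (φ v) = v := by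
  obtain ⟨f, hf⟩ := LinearMap.exists_rightInverse_of_surjective ψ (LinearMap.range_eq_top.2 hsurj)
  refine ⟨avg ρ σ f, avg_equi _ _ _, fun v => ?_⟩
  rw [avg_apply, map_smul, map_sum]
  have : ∀ g : G, ψ (σ g⁻¹ (f (ρ g v))) = v := by
    intro g
    rw [hψ, show ψ (f (ρ g v)) = ρ g v from LinearMap.congr_fun hf _,
      ← Module.End.mul_apply, ← map_mul]
    simp
  simp [this, ← Nat.cast_smul_eq_nsmul ℂ, smul_smul]

lemma irr_inj {ρ : Representation ℂ G V} (hρ : IsIrred ρ) {σ : Representation ℂ G W}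
    {φ : V →ₗ[ℂ] W} (hφ : Equi ρ σ φ) (h0 : φ ≠ 0) : Function.Injective φ := by
  rw [← LinearMap.ker_eq_bot]
  refine (hρ.2 (LinearMap.ker φ) fun g v hv => ?_).resolve_right fun h => h0 ?_
  · rw [LinearMap.mem_ker] at hv ⊢
    rw [hφ, hv, map_zero]
  · exact LinearMap.ker_eq_top.1 h

lemma irr_surj {ρ : Representation ℂ G V} (hρ : IsIrred ρ) {σ : Representation ℂ G W}
    {ψ : W →ₗ[ℂ] V} (hψ : Equi σ ρ ψ) (h0 : ψ ≠ 0) : Function.Surjective ψ := by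
  rw [← LinearMap.range_eq_top]
  refine (hρ.2 (LinearMap.range ψ) fun g v hv => ?_).resolve_left fun h => h0 ?_
  · obtain ⟨w, rfl⟩ := hv
    exact ⟨σ g w, hψ g w⟩
  · exact LinearMap.range_eq_bot.1 h

end general

variable {V : Type} [AddCommGroup V] [Module ℂ V]

lemma twist_apply {n : ℕ} (α : Fˣ →* ℂˣ) (ρ : Representation ℂ (GL (Fin n) F) V) (g) (v : V) :
    twistRep α ρ g v = ((α (detHom n g) : ℂˣ) : ℂ) • ρ g v := rfl

lemma twist_irr {n : ℕ} (α : Fˣ →* ℂˣ) {ρ : Representation ℂ (GL (Fin n) F) V} (hρ : IsIrred ρ) :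
    IsIrred (twistRep α ρ) := by
  refine ⟨hρ.1, fun p hp => hρ.2 p fun g v hv => ?_⟩
  have := hp g v hv
  rw [twist_apply] at this
  have h2 := p.smul_mem ((α (detHom n g) : ℂˣ) : ℂ)⁻¹ this
  rwa [smul_smul, inv_mul_cancel₀ (Units.ne_zero _), one_smul] at h2

lemma perm_apply {n j : ℕ} (g : GL (Fin n) F) (f : Matrix (Fin n) (Fin j) F → ℂ) (S) :
    permRep n j g f S = f ((↑g⁻¹ : Matrix (Fin n) (Fin n) F) * S) := rfl

lemma perm_single {n j : ℕ} (g : GL (Fin n) F) (S : Matrix (Fin n) (Fin j) F) :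
    permRep n j g (Pi.single S 1) = Pi.single ((g : Matrix (Fin n) (Fin n) F) * S) (1 : ℂ) := by
  ext T
  rw [perm_apply]
  simp only [Pi.single_apply]
  congr 1
  apply propext
  constructor
  · rintro rfl
    rw [← Matrix.mul_assoc, ← Units.val_mul]; simp
  · rintro rfl
    rw [← Matrix.mul_assoc, ← Units.val_mul]; simp

lemma occurs_of_stab {n j : ℕ} {τ : Representation ℂ (GL (Fin n) F) V} (hτ : IsIrred τ)
    (S : Matrix (Fin n) (Fin j) F) (v : V) (hv : v ≠ 0)
    (h : ∀ g : GL (Fin n) F, (g : Matrix (Fin n) (Fin n) F) * S = S → τ g v = v) :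
    Occurs τ (permRep n j) := by
  classical
  let ψ : (Matrix (Fin n) (Fin j) F → ℂ) →ₗ[ℂ] V :=
    ∑ g : GL (Fin n) F, (LinearMap.proj ((g : Matrix (Fin n) (Fin n) F) * S)).smulRight (τ g v)
  have hψa : ∀ f, ψ f = ∑ g : GL (Fin n) F, f ((g : Matrix (Fin n) (Fin n) F) * S) • τ g v := by
    intro f; simp [ψ, LinearMap.sum_apply]
  have hψ : Equi (permRep n j) τ ψ := by
    intro g f
    rw [hψa, hψa, map_sum]
    refine Fintype.sum_equiv (Equiv.mulLeft g⁻¹) _ _ fun u => ?_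
    simp only [Equiv.coe_mulLeft]
    rw [perm_apply, map_smul, ← Module.End.mul_apply (τ g), ← map_mul, ← Matrix.mul_assoc,
      ← Units.val_mul]
    simp
  have h0 : ψ ≠ 0 := by
    intro h0
    have h1 := LinearMap.congr_fun h0 (Pi.single S 1)
    rw [hψa, LinearMap.zero_apply] at h1
    have h2 : ∀ g : GL (Fin n) F, (Pi.single S (1 : ℂ) : Matrix (Fin n) (Fin j) F → ℂ)
        ((g : Matrix (Fin n) (Fin n) F) * S) • τ g v
        = if (g : Matrix (Fin n) (Fin n) F) * S = S then v else 0 := by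
      intro g
      by_cases hg : (g : Matrix (Fin n) (Fin n) F) * S = S
      · simp [hg, h g hg]
      · simp [hg]
    rw [Finset.sum_congr rfl fun g _ => h2 g, ← Finset.sum_filter, Finset.sum_const,
      ← Nat.cast_smul_eq_nsmul ℂ, smul_eq_zero] at h1
    refine h1.elim (fun hc => ?_) hv
    rw [Nat.cast_eq_zero, Finset.card_eq_zero] at hc
    have : (1 : GL (Fin n) F) ∈ Finset.univ.filter
      (fun g : GL (Fin n) F => (g : Matrix (Fin n) (Fin n) F) * S = S) := by simp
    rw [hc] at this
    simp at this
  obtain ⟨φ, hφ, hid⟩ := exists_sect hψ (irr_surj hτ hψ h0)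
  refine occurs_iff.2 ⟨φ, ?_, hφ⟩
  rintro rfl
  apply hv
  rw [← hid v]; simp

lemma stab_of_occurs {n j : ℕ} {τ : Representation ℂ (GL (Fin n) F) V} (hτ : IsIrred τ)
    (h : Occurs τ (permRep n j)) :
    ∃ (S : Matrix (Fin n) (Fin j) F) (v : V), v ≠ 0 ∧
      ∀ g : GL (Fin n) F, (g : Matrix (Fin n) (Fin n) F) * S = S → τ g v = v := by
  classical
  obtain ⟨φ, h0, hφ⟩ := occurs_iff.1 h
  obtain ⟨ψ, hψ, hid⟩ := exists_retract hφ (irr_inj hτ hφ h0)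
  have : ∃ S, ψ (Pi.single S 1) ≠ 0 := by
    by_contra! hc
    obtain ⟨v, hv⟩ := hτ.1
    apply hv
    have hz : ψ = 0 := by
      apply LinearMap.pi_ext'
      intro S
      apply LinearMap.ext_ring
      simpa using hc S
    rw [← hid v, hz]; simp
  obtain ⟨S, hS⟩ := this
  refine ⟨S, _, hS, fun g hg => ?_⟩
  rw [← hψ, perm_single, hg]

/-! ### The groups `U` -/

lemma blockEmbed_add {n a b : ℕ} (X Y : Matrix (Fin a) (Fin b) F) :
    blockEmbed n a b (X + Y) = blockEmbed n a b X + blockEmbed n a b Y := by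
  ext i j
  simp only [blockEmbed, Matrix.of_apply, Matrix.add_apply]
  split_ifs <;> simp

lemma uU_mul {n a b : ℕ} (hab : a + b ≤ n) (X Y : Matrix (Fin a) (Fin b) F) :
    uU n a b hab X * uU n a b hab Y = uU n a b hab (X + Y) := by
  apply Units.ext
  show (1 + blockEmbed n a b X) * (1 + blockEmbed n a b Y) = 1 + blockEmbed n a b (X + Y)
  rw [blockEmbed_add, add_mul, mul_add, mul_add, blockEmbed_mul_blockEmbed hab]
  simp only [mul_one, one_mul]
  abel

lemma uU_zero {n a b : ℕ} (hab : a + b ≤ n) : uU n a b hab (0 : Matrix (Fin a) (Fin b) F) = 1 := by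
  apply Units.ext
  show 1 + blockEmbed n a b 0 = 1
  have : blockEmbed n a b (0 : Matrix (Fin a) (Fin b) F) = 0 := by
    ext i j
    simp only [blockEmbed, Matrix.of_apply]
    split_ifs <;> simp
  rw [this, add_zero]

lemma uU_inv {n a b : ℕ} (hab : a + b ≤ n) (X : Matrix (Fin a) (Fin b) F) :
    (uU n a b hab X)⁻¹ = uU n a b hab (-X) := by
  rw [inv_eq_iff_mul_eq_one, uU_mul]; simp [uU_zero]

lemma det_uU {n a b : ℕ} (hab : a + b ≤ n) (X : Matrix (Fin a) (Fin b) F) :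
    detHom n (uU n a b hab X) = 1 := by
  apply Units.ext
  show det (1 + blockEmbed n a b X) = 1
  rw [det_of_isUpperTriangular]
  · apply Finset.prod_eq_one
    intro i _
    simp only [blockEmbed, Matrix.add_apply, Matrix.of_apply, Matrix.one_apply_eq]
    split_ifs
    · omega
    · simp
    · simp
  · intro i j hij
    simp only [id] at hij
    have : (j : ℕ) < i := hij
    simp only [blockEmbed, Matrix.add_apply, Matrix.of_apply, Matrix.one_apply_ne (Ne.symm hij.ne)]
    split_ifs
    · omega
    · simp
    · simp

lemma charAppears_twist (χ₀ : AddChar F ℂ) {n : ℕ} (α : Fˣ →* ℂˣ)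
    (ρ : Representation ℂ (GL (Fin n) F) V) {a b : ℕ} (hab : a + b ≤ n)
    (T : Matrix (Fin b) (Fin a) F) :
    CharAppears χ₀ (twistRep α ρ) hab T ↔ CharAppears χ₀ ρ hab T := by
  simp only [CharAppears, twist_apply, det_uU, map_one, Units.val_one, one_smul]

lemma exists_decomp (χ₀ : AddChar F ℂ) (hχ₀ : χ₀ ≠ 1) {n : ℕ}
    (ρ : Representation ℂ (GL (Fin n) F) V) {a b : ℕ} (hab : a + b ≤ n) (v : V) :
    ∃ w : Matrix (Fin b) (Fin a) F → V, v = ∑ T, w T ∧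
      (∀ T X, ρ (uU n a b hab X) (w T) = χ₀ ((T * X).trace) • w T) ∧
      ∀ (g : GL (Fin n) F) (c : ℂ), (∀ X, Commute g (uU n a b hab X)) → ρ g v = c • v →
        ∀ T, ρ g (w T) = c • w T := by
  set K : ℂ := (Fintype.card (Matrix (Fin b) (Fin a) F) : ℂ) with hK
  have hK0 : K ≠ 0 := by simp [hK, Fintype.card_ne_zero]
  refine ⟨fun T => K⁻¹ • ∑ X : Matrix (Fin a) (Fin b) F,
    χ₀ ((T * -X).trace) • ρ (uU n a b hab X) v, ?_, ?_, ?_⟩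
  · rw [← Finset.smul_sum, Finset.sum_comm]
    simp_rw [← Finset.sum_smul, orth χ₀ hχ₀]
    rw [Finset.sum_eq_single 0]
    · simp [uU_zero, smul_smul, ← hK, hK0]
    · intro X _ hX; simp [hX]
    · simp
  · intro T X
    rw [map_smul, smul_comm, map_sum]
    congr 1
    rw [Finset.smul_sum]
    refine Fintype.sum_equiv (Equiv.addLeft X) _ _ fun Y => ?_
    simp only [Equiv.coe_addLeft]
    rw [map_smul, smul_smul, ← AddChar.map_add_eq_mul, ← trace_add, ← Matrix.mul_add,
      ← Module.End.mul_apply, ← map_mul, uU_mul]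
    congr 4
    abel_nf
  · intro g c hc hv T
    rw [map_smul, map_sum, smul_comm c]
    congr 1
    rw [Finset.smul_sum]
    apply Finset.sum_congr rfl
    intro X _
    rw [map_smul, ← Module.End.mul_apply, ← map_mul, (hc X).eq, map_mul, Module.End.mul_apply, hv,
      map_smul, smul_comm]

/-- The rows of `S` with index in the last `b`. -/
def low {n : ℕ} {ι : Type} (b : ℕ) (hb : b ≤ n) (S : Matrix (Fin n) ι F) : Matrix (Fin b) ι F :=
  S.submatrix (fun r => ⟨n - b + r, by omega⟩) id

lemma blockEmbed_mul {n a b : ℕ} {ι : Type} (hb : b ≤ n) (X : Matrix (Fin a) (Fin b) F)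
    (S : Matrix (Fin n) ι F) (i : Fin n) (c : ι) :
    (blockEmbed n a b X * S) i c
      = if h : (i : ℕ) < a then (X * low b hb S) ⟨i, h⟩ c else 0 := by
  by_cases h : (i : ℕ) < a
  · rw [dif_pos h, mul_apply, mul_apply]
    symm
    refine Finset.sum_of_injOn (fun r : Fin b => (⟨n - b + r, by omega⟩ : Fin n)) ?_ ?_ ?_ ?_
    · intro x _ y _ hxy
      simp only [Fin.mk.injEq] at hxy
      ext; omega
    · intro x _; simp
    · intro j _ hj
      have : ¬ (n - b ≤ (j : ℕ) ∧ (j : ℕ) - (n - b) < b) := by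
        rintro ⟨h1, h2⟩
        apply hj
        exact ⟨⟨j - (n - b), h2⟩, by simp, by ext; simp; omega⟩
      simp only [blockEmbed, Matrix.of_apply, dif_pos h, dif_neg this, zero_mul]
    · intro r _
      simp only [blockEmbed, Matrix.of_apply, dif_pos h, low, submatrix_apply, id]
      rw [dif_pos (by omega)]
      congr 3
      ext; simp
  · rw [dif_neg h, mul_apply]
    apply Finset.sum_eq_zero
    intro j _
    simp only [blockEmbed, Matrix.of_apply, dif_neg h, zero_mul]

lemma rank_le_of_appears (χ₀ : AddChar F ℂ) (hχ₀ : χ₀ ≠ 1) {n j a b : ℕ} (hab : a + b ≤ n)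
    (T : Matrix (Fin b) (Fin a) F)
    (h : CharAppears χ₀ (permRep (F := F) n j) hab T) : T.rank ≤ j := by
  obtain ⟨f, hf0, hf⟩ := h
  obtain ⟨S, hS⟩ := Function.ne_iff.1 hf0
  have hb : b ≤ n := by omega
  have key : ∀ w : Fin b → F, w ᵥ* low b hb S = 0 → w ᵥ* T = 0 := by
    intro w hw
    ext x
    have h1 := trace_eq_zero χ₀ hχ₀ T (vecMulVec (Pi.single x 1) w) (fun c => by
      have h2 := congrFun (hf (c • vecMulVec (Pi.single x 1) w)) S
      rw [perm_apply, uU_inv] at h2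
      have h3 : (uU n a b hab (-(c • vecMulVec (Pi.single x 1) w)) : Matrix (Fin n) (Fin n) F) * S
          = S := by
        show (1 + blockEmbed n a b _) * S = S
        rw [Matrix.add_mul, Matrix.one_mul]
        have : blockEmbed n a b (-(c • vecMulVec (Pi.single x 1) w)) * S = 0 := by
          ext i l
          rw [blockEmbed_mul hb]
          rw [Matrix.neg_mul, Matrix.smul_mul, vecMulVec_mul, hw]
          simp [vecMulVec]
        rw [this, add_zero]
      rw [h3, Pi.smul_apply, smul_eq_mul] at h2
      exact (mul_eq_right₀ hS).1 h2.symm)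
    rw [mul_vecMulVec, trace_vecMulVec] at h1
    rw [mulVec_single_one] at h1
    simpa [vecMul, dotProduct, mul_comm] using h1
  have hle : LinearMap.ker (low b hb S)ᵀ.mulVecLin ≤ LinearMap.ker Tᵀ.mulVecLin := by
    intro w hw
    simp only [LinearMap.mem_ker, mulVecLin_apply, mulVec_transpose] at hw ⊢
    exact key w hw
  have h1 := Submodule.finrank_mono hle
  have h2 := LinearMap.finrank_range_add_finrank_ker (low b hb S)ᵀ.mulVecLin
  have h3 := LinearMap.finrank_range_add_finrank_ker Tᵀ.mulVecLin
  have h4 : (low b hb S)ᵀ.rank ≤ j := by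
    have := rank_le_card_height (low b hb S)ᵀ
    simpa using this
  rw [← rank_transpose]
  unfold Matrix.rank at h4 ⊢
  omega

/-- The relation module of a pair of matrices. -/
def relW {n i j : ℕ} (S : Matrix (Fin n) (Fin i) F) (T : Matrix (Fin n) (Fin j) F) :
    Submodule F ((Fin i → F) × (Fin j → F)) where
  carrier := {p | S *ᵥ p.1 + T *ᵥ p.2 = 0}
  add_mem' := by
    intro p q hp hq
    simp only [Set.mem_ofPred_eq, Prod.fst_add, Prod.snd_add, mulVec_add] at *
    rw [add_add_add_comm, hp, hq, add_zero]
  zero_mem' := by simp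
  smul_mem' := by
    intro c p hp
    simp only [Set.mem_ofPred_eq, Prod.smul_fst, Prod.smul_snd, mulVec_smul] at *
    rw [← smul_add, hp, smul_zero]

lemma mem_relW {n i j : ℕ} {S : Matrix (Fin n) (Fin i) F} {T : Matrix (Fin n) (Fin j) F}
    {p : (Fin i → F) × (Fin j → F)} : p ∈ relW S T ↔ S *ᵥ p.1 + T *ᵥ p.2 = 0 := Iff.rfl

lemma relW_mul {n i j : ℕ} (g : GL (Fin n) F) (S : Matrix (Fin n) (Fin i) F)
    (T : Matrix (Fin n) (Fin j) F) :
    relW ((g : Matrix (Fin n) (Fin n) F) * S) ((g : Matrix (Fin n) (Fin n) F) * T) = relW S T := by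
  ext p
  rw [mem_relW, mem_relW, ← mulVec_mulVec, ← mulVec_mulVec, ← mulVec_add]
  constructor
  · intro h
    have := congrArg (fun x => (↑g⁻¹ : Matrix (Fin n) (Fin n) F) *ᵥ x) h
    simpa only [mulVec_mulVec, ← Units.val_mul, inv_mul_cancel, Units.val_one, one_mulVec,
      mulVec_zero] using this
  · intro h; rw [h, mulVec_zero]

open Classical in
/-- The operator attached to a module of relations. -/
noncomputable def kop (n : ℕ) {i j : ℕ} (R : Submodule F ((Fin i → F) × (Fin j → F))) :
    (Matrix (Fin n) (Fin j) F → ℂ) →ₗ[ℂ] (Matrix (Fin n) (Fin i) F → ℂ) where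
  toFun f S := ∑ T, if R ≤ relW S T then f T else 0
  map_add' f f' := by
    ext S
    simp only [Pi.add_apply]
    rw [← Finset.sum_add_distrib]
    refine Finset.sum_congr rfl fun T _ => ?_
    split_ifs <;> simp
  map_smul' c f := by
    ext S
    simp only [Pi.smul_apply, RingHom.id_apply, smul_eq_mul]
    rw [Finset.mul_sum]
    refine Finset.sum_congr rfl fun T _ => ?_
    split_ifs <;> simp

open Classical in
lemma kop_apply {n i j : ℕ} (R : Submodule F ((Fin i → F) × (Fin j → F)))
    (f : Matrix (Fin n) (Fin j) F → ℂ) (S) :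
    kop n R f S = ∑ T, if R ≤ relW S T then f T else 0 := rfl

lemma kop_equi (n : ℕ) {i j : ℕ} (R : Submodule F ((Fin i → F) × (Fin j → F))) :
    Equi (permRep n j) (permRep n i) (kop n R) := by
  classical
  intro g f
  ext S
  rw [perm_apply, kop_apply, kop_apply]
  refine Fintype.sum_equiv
    ⟨fun T => (↑g⁻¹ : Matrix (Fin n) (Fin n) F) * T, fun T => (g : Matrix (Fin n) (Fin n) F) * T,
      fun T => ?_, fun T => ?_⟩ _ _ fun T => ?_
  · simp only [← Matrix.mul_assoc, ← Units.val_mul]; simp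
  · simp only [← Matrix.mul_assoc, ← Units.val_mul]; simp
  · simp only [Equiv.coe_fn_mk]
    rw [relW_mul, perm_apply]

/-- Graph-like relations. -/
def IsoRel {j : ℕ} (R : Submodule F ((Fin j → F) × (Fin j → F))) : Prop :=
  ∃ G G' : Matrix (Fin j) (Fin j) F, G * G' = 1 ∧ ∀ p, p ∈ R ↔ p.1 + G *ᵥ p.2 = 0

lemma kop_iso {n j : ℕ} (R : Submodule F ((Fin j → F) × (Fin j → F)))
    (G : Matrix (Fin j) (Fin j) F) (hG : ∀ p, p ∈ R ↔ p.1 + G *ᵥ p.2 = 0)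
    (f : Matrix (Fin n) (Fin j) F → ℂ) (S) : kop n R f S = f (S * G) := by
  classical
  rw [kop_apply, Finset.sum_eq_single (S * G)]
  · rw [if_pos]
    intro p hp
    rw [mem_relW, ← mulVec_mulVec, ← mulVec_add, (hG p).1 hp, mulVec_zero]
  · intro T _ hT
    rw [if_neg]
    intro h
    apply hT
    apply Matrix.toLin'.injective
    refine LinearMap.ext fun y => ?_
    have h1 := mem_relW.1 (h ((hG (-(G *ᵥ y), y)).2 (by simp)))
    simp only [mulVec_neg, mulVec_mulVec] at h1
    simp only [toLin'_apply]
    exact (neg_add_eq_zero.1 h1).symm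
  · simp

/-- A matrix with range containing a proper submodule. -/
lemma exists_range {m : ℕ} (P : Submodule F (Fin (m+1) → F)) (hP : P ≠ ⊤) :
    ∃ Q : Matrix (Fin (m+1)) (Fin m) F, ∀ x ∈ P, ∃ x', Q *ᵥ x' = x := by
  have h1 : Module.finrank F P ≤ m := by
    have := Submodule.finrank_lt hP
    rw [Module.finrank_fin_fun] at this
    omega
  have h2 : Module.finrank F P ≤ Module.finrank F (Fin m → F) := by rwa [Module.finrank_fin_fun]
  obtain ⟨f, hf⟩ := (finrank_le_iff_exists_linearMap (R := F) (M := P) (M' := Fin m → F)).1 h2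
  obtain ⟨g, hg⟩ := f.exists_leftInverse_of_injective (LinearMap.ker_eq_bot.2 hf)
  refine ⟨LinearMap.toMatrix' (P.subtype ∘ₗ g), fun x hx => ⟨f ⟨x, hx⟩, ?_⟩⟩
  rw [LinearMap.toMatrix'_mulVec]
  have := LinearMap.congr_fun hg ⟨x, hx⟩
  simp only [LinearMap.comp_apply, LinearMap.id_apply] at this ⊢
  rw [this]; rfl

lemma exists_proj {m : ℕ} (z : Fin (m+1) → F) (hz : z ≠ 0) :
    ∃ (P : Matrix (Fin m) (Fin (m+1)) F) (P' : Matrix (Fin (m+1)) (Fin m) F),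
      ∀ x, ∃ c : F, (P' * P) *ᵥ x = x + c • z := by
  obtain ⟨i, hi⟩ := Function.ne_iff.1 hz
  refine ⟨LinearMap.toMatrix' (LinearMap.funLeft F F i.succAbove ∘ₗ
    (LinearMap.id - (LinearMap.proj i).smulRight ((z i)⁻¹ • z))),
    LinearMap.toMatrix' (LinearMap.pi fun l => if h : l = i then 0 else
      LinearMap.proj (Fin.exists_succAbove_eq h).choose), fun x => ⟨-(x i * (z i)⁻¹), ?_⟩⟩
  rw [← mulVec_mulVec, LinearMap.toMatrix'_mulVec, LinearMap.toMatrix'_mulVec]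
  ext l
  rw [LinearMap.pi_apply]
  by_cases h : l = i
  · subst h
    simp only [dif_pos, LinearMap.zero_apply, Pi.add_apply, Pi.smul_apply, smul_eq_mul]
    have : z l ≠ 0 := hi
    field_simp
    ring
  · rw [dif_neg h]
    have := (Fin.exists_succAbove_eq h).choose_spec
    simp only [LinearMap.proj_apply, LinearMap.comp_apply, LinearMap.funLeft_apply, this]
    simp
    ring

lemma noniso {m : ℕ} (R : Submodule F ((Fin (m+1) → F) × (Fin (m+1) → F))) (hR : ¬ IsoRel R)
    (n : ℕ) : ∃ R' : Submodule F ((Fin m → F) × (Fin (m+1) → F)),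
      ∀ f, kop n R' f = 0 → kop n R f = 0 := by
  classical
  by_cases h1 : R.map (LinearMap.fst F _ _) = ⊤
  swap
  · obtain ⟨Q, hQ⟩ := exists_range _ h1
    refine ⟨R.comap (Q.mulVecLin.prodMap LinearMap.id), fun f hf => ?_⟩
    ext S
    have := congrFun hf (S * Q)
    rw [Pi.zero_apply] at this ⊢
    rw [← this, kop_apply, kop_apply]
    refine Finset.sum_congr rfl fun T _ => ?_
    congr 1
    apply propext
    constructor
    · intro h p hp
      have := h (Submodule.mem_comap.1 hp)
      rw [mem_relW] at this ⊢
      simpa using this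
    · rintro h ⟨x, y⟩ hp
      obtain ⟨x', rfl⟩ := hQ x ⟨_, hp, rfl⟩
      have := h (show (x', y) ∈ _ from hp)
      rw [mem_relW] at this ⊢
      simpa using this
  by_cases h2 : ∃ z, z ≠ 0 ∧ (z, (0 : Fin (m+1) → F)) ∈ R
  · obtain ⟨z, hz, hzR⟩ := h2
    obtain ⟨P, P', hP⟩ := exists_proj z hz
    refine ⟨R.map (P.mulVecLin.prodMap LinearMap.id), fun f hf => ?_⟩
    ext S
    rw [Pi.zero_apply]
    by_cases hS : S *ᵥ z = 0
    · have h3 : (S * P') * P = S := by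
        apply Matrix.toLin'.injective
        refine LinearMap.ext fun y => ?_
        obtain ⟨c, hc⟩ := hP y
        rw [toLin'_apply, toLin'_apply, Matrix.mul_assoc, ← mulVec_mulVec, hc, mulVec_add,
          mulVec_smul, hS, smul_zero, add_zero]
      have := congrFun hf (S * P')
      rw [Pi.zero_apply] at this
      rw [← this, kop_apply, kop_apply]
      refine Finset.sum_congr rfl fun T _ => ?_
      congr 1
      apply propext
      rw [Submodule.map_le_iff_le_comap]
      refine forall_congr' fun p => imp_congr_right fun _ => ?_
      rw [Submodule.mem_comap, mem_relW, mem_relW]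
      simp only [LinearMap.prodMap_apply, mulVecLin_apply, LinearMap.id_apply, mulVec_mulVec, h3]
    · rw [kop_apply]
      apply Finset.sum_eq_zero
      intro T _
      rw [if_neg]
      intro h
      apply hS
      have := h hzR
      rw [mem_relW] at this
      simpa using this
  exfalso
  apply hR
  let a1 : R →ₗ[F] (Fin (m+1) → F) := (LinearMap.fst F _ _) ∘ₗ R.subtype
  let a2 : R →ₗ[F] (Fin (m+1) → F) := (LinearMap.snd F _ _) ∘ₗ R.subtype
  have hs1 : Function.Surjective a1 := by
    intro x
    have : x ∈ R.map (LinearMap.fst F _ _) := by rw [h1]; trivial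
    obtain ⟨p, hp, rfl⟩ := this
    exact ⟨⟨p, hp⟩, rfl⟩
  have hi2 : Function.Injective a2 := by
    rw [← LinearMap.ker_eq_bot, LinearMap.ker_eq_bot']
    rintro ⟨⟨x, y⟩, hp⟩ h
    change y = 0 at h
    subst h
    by_contra hne
    refine h2 ⟨x, ?_, hp⟩
    rintro rfl
    exact hne rfl
  have hfr : Module.finrank F R = Module.finrank F (Fin (m+1) → F) := by
    have := LinearMap.finrank_le_finrank_of_injective hi2
    have := LinearMap.finrank_le_finrank_of_surjective hs1
    omega
  have hi1 : Function.Injective a1 := (LinearMap.injective_iff_surjective_of_finrank_eq_finrank hfr).2 hs1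
  have hs2 : Function.Surjective a2 := (LinearMap.injective_iff_surjective_of_finrank_eq_finrank hfr).1 hi2
  let e1 := LinearEquiv.ofBijective a1 ⟨hi1, hs1⟩
  let e2 := LinearEquiv.ofBijective a2 ⟨hi2, hs2⟩
  let h := e2.symm ≪≫ₗ e1
  refine ⟨-LinearMap.toMatrix' h.toLinearMap, -LinearMap.toMatrix' h.symm.toLinearMap, ?_, ?_⟩
  · rw [neg_mul_neg, ← LinearMap.toMatrix'_comp]
    simp
  · rintro ⟨x, y⟩
    rw [neg_mulVec, LinearMap.toMatrix'_mulVec]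
    constructor
    · intro hp
      have : e2.symm y = ⟨(x, y), hp⟩ := by
        rw [LinearEquiv.symm_apply_eq]; rfl
      show x + -(e1 (e2.symm y)) = 0
      rw [this]
      show x + - x = 0
      simp
    · intro hp
      have h3 : x = e1 (e2.symm y) := by
        change x + -(e1 (e2.symm y)) = 0 at hp
        rwa [← sub_eq_add_neg, sub_eq_zero] at hp
      have h4 : y = e2 (e2.symm y) := by simp
      have h5 : ((x, y) : _ × _) = (e2.symm y : R).1 := by
        ext1
        · exact h3
        · exact h4
      rw [h5]
      exact (e2.symm y).2

open Classical in
lemma moebius {X : Type} [Fintype X] [PartialOrder X] (κ : X → ℂ) :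
    ∃ c : X → ℂ, ∀ w, κ w = ∑ R, if R ≤ w then c R else 0 := by
  let L : (X → ℂ) →ₗ[ℂ] (X → ℂ) :=
    { toFun := fun c w => ∑ R, if R ≤ w then c R else 0
      map_add' := by
        intro f g
        ext w
        simp only [Pi.add_apply]
        rw [← Finset.sum_add_distrib]
        refine Finset.sum_congr rfl fun T _ => ?_
        split_ifs <;> simp
      map_smul' := by
        intro c f
        ext w
        simp only [Pi.smul_apply, RingHom.id_apply, smul_eq_mul]
        rw [Finset.mul_sum]
        refine Finset.sum_congr rfl fun T _ => ?_
        split_ifs <;> simp }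
  have hinj : Function.Injective L := by
    rw [← LinearMap.ker_eq_bot, LinearMap.ker_eq_bot']
    intro c hc
    ext w
    induction w using WellFoundedLT.induction with
    | ind w ih =>
      have h := congrFun hc w
      change (∑ R, if R ≤ w then c R else 0) = 0 at h
      rw [Finset.sum_eq_single w] at h
      · simpa using h
      · intro R _ hR
        split_ifs with h1
        · exact ih R (lt_of_le_of_ne h1 hR)
        · rfl
      · simp
  obtain ⟨c, hc⟩ := LinearMap.injective_iff_surjective.1 hinj κ
  exact ⟨c, fun w => (congrFun hc w).symm⟩

lemma equi_decomp {n j : ℕ}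
    (p : (Matrix (Fin n) (Fin j) F → ℂ) →ₗ[ℂ] (Matrix (Fin n) (Fin j) F → ℂ))
    (hp : Equi (permRep n j) (permRep n j) p) :
    ∃ (s : Fintype (Submodule F ((Fin j → F) × (Fin j → F))))
      (c : Submodule F ((Fin j → F) × (Fin j → F)) → ℂ),
      ∀ f, p f = ∑ R, c R • kop n R f := by
  classical
  have s : Fintype (Submodule F ((Fin j → F) × (Fin j → F))) := Fintype.ofFinite _
  let K : Matrix (Fin n) (Fin j) F × Matrix (Fin n) (Fin j) F → ℂ :=
    fun q => p (Pi.single q.2 1) q.1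
  have hK : Function.FactorsThrough K (fun q => relW q.1 q.2) := by
    rintro ⟨S, T⟩ ⟨S', T'⟩ h
    change relW S T = relW S' T' at h
    obtain ⟨g, hg⟩ := same_ker (fromCols S T) (fromCols S' T') (by
      intro x
      have := SetLike.ext_iff.1 h (x ∘ Sum.inl, x ∘ Sum.inr)
      rw [mem_relW, mem_relW] at this
      rw [fromCols_mulVec, fromCols_mulVec]
      exact this)
    rw [mul_fromCols, fromCols_ext_iff] at hg
    obtain ⟨rfl, rfl⟩ := hg
    show p _ _ = p _ _
    simp only
    rw [← perm_single, hp, perm_apply, ← Matrix.mul_assoc, ← Units.val_mul]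
    simp
  obtain ⟨c, hc⟩ := moebius (Function.extend (fun q => relW q.1 q.2) K 0)
  refine ⟨s, c, fun f => ?_⟩
  ext S
  have h1 : f = ∑ T, f T • Pi.single T (1 : ℂ) := by
    ext T; simp [Finset.sum_apply, Pi.single_apply]
  conv_lhs => rw [h1, map_sum, Finset.sum_apply]
  rw [Finset.sum_apply]
  have h2 : ∀ T, p (f T • Pi.single T 1) S = ∑ R, c R * (if R ≤ relW S T then f T else 0) := by
    intro T
    rw [map_smul, Pi.smul_apply, smul_eq_mul]
    have h3 : p (Pi.single T 1) S = K (S, T) := rfl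
    rw [h3, ← hK.extend_apply 0 (S, T), hc, Finset.mul_sum]
    refine Finset.sum_congr rfl fun R _ => ?_
    split_ifs <;> simp [mul_comm]
  rw [Finset.sum_congr rfl fun T _ => h2 T, Finset.sum_comm]
  refine Finset.sum_congr rfl fun R _ => ?_
  rw [Pi.smul_apply, kop_apply, smul_eq_mul, Finset.mul_sum]

/-- inclusion matrix -/
def inc (F : Type) [Field F] (a j : ℕ) : Matrix (Fin a) (Fin j) F := Matrix.of fun r c => if (r : ℕ) = c then 1 else 0

lemma inc_mul (a j : ℕ) (h : j ≤ a) : (inc F a j)ᵀ * inc F a j = 1 := by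
  ext i l
  rw [mul_apply, Finset.sum_eq_single (⟨i, by omega⟩ : Fin a)]
  · simp [inc, Matrix.one_apply, Fin.ext_iff]
  · intro r _ hr
    have : (r : ℕ) ≠ i := fun h => hr (Fin.ext h)
    simp [inc, this]
  · simp

lemma low_uU {n a b j : ℕ} (hab : a + b ≤ n) (hb : b ≤ n) (X : Matrix (Fin a) (Fin b) F)
    (S : Matrix (Fin n) (Fin j) F) :
    low b hb ((uU n a b hab X : Matrix (Fin n) (Fin n) F) * S) = low b hb S := by
  ext r c
  show ((1 + blockEmbed n a b X) * S : Matrix (Fin n) (Fin j) F) _ _ = S _ _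
  rw [Matrix.add_mul, Matrix.add_apply, Matrix.one_mul, blockEmbed_mul hb, dif_neg, add_zero]
  simp; omega

/-- top rows -/
def top {n : ℕ} {ι : Type} (a : ℕ) (ha : a ≤ n) (S : Matrix (Fin n) ι F) : Matrix (Fin a) ι F :=
  S.submatrix (fun r => ⟨r, by omega⟩) id

lemma top_uU {n a b j : ℕ} (hab : a + b ≤ n) (ha : a ≤ n) (hb : b ≤ n) (X : Matrix (Fin a) (Fin b) F)
    (S : Matrix (Fin n) (Fin j) F) :
    top a ha ((uU n a b hab X : Matrix (Fin n) (Fin n) F) * S) = top a ha S + X * low b hb S := by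
  ext r c
  show ((1 + blockEmbed n a b X) * S : Matrix (Fin n) (Fin j) F) _ _ = _
  rw [Matrix.add_mul, Matrix.add_apply, Matrix.one_mul, blockEmbed_mul hb, dif_pos (by simp)]
  rfl

lemma descent (χ₀ : AddChar F ℂ) (hχ₀ : χ₀ ≠ 1) {n m a b : ℕ} (hab : a + b ≤ n)
    (hja : m + 1 ≤ a) (hjb : m + 1 ≤ b)
    {τ : Representation ℂ (GL (Fin n) F) V} (hτ : IsIrred τ)
    (hocc : Occurs τ (permRep n (m+1)))
    (hno : ∀ T : Matrix (Fin b) (Fin a) F, T.rank = m + 1 → ¬ CharAppears χ₀ τ hab T) :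
    Occurs τ (permRep n m) := by
  classical
  by_contra hcon
  rw [occurs_iff] at hocc hcon
  obtain ⟨φ, hφ0, hφ⟩ := hocc
  obtain ⟨ψ, hψ, hψφ⟩ := exists_retract hφ (irr_inj hτ hφ hφ0)
  obtain ⟨s, c, hc⟩ := equi_decomp (φ ∘ₗ ψ) (fun g v => by
    rw [LinearMap.comp_apply, hψ, hφ]; rfl)
  have hb : b ≤ n := by omega
  have ha : a ≤ n := by omega
  -- isomorphism coefficients vanish
  have hz : ∀ R, IsoRel R → c R = 0 := by
    rintro R0 ⟨G0, G0', hG, hR0⟩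
    have hG' : G0' * G0 = 1 := mul_eq_one_comm.1 hG
    let f : Matrix (Fin n) (Fin (m+1)) F → ℂ := fun S =>
      χ₀ (-((inc F a (m+1))ᵀ * top a ha S).trace) * if low b hb S = inc F b (m+1) then 1 else 0
    let T : Matrix (Fin b) (Fin a) F := inc F b (m+1) * (inc F a (m+1))ᵀ
    have hf : ∀ X, permRep n (m+1) (uU n a b hab X) f = χ₀ ((T * X).trace) • f := by
      intro X
      ext S
      rw [perm_apply, uU_inv, Pi.smul_apply, smul_eq_mul]
      simp only [f, low_uU, top_uU hab ha hb]
      split_ifs with h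
      · rw [h, Matrix.mul_add, Matrix.neg_mul, Matrix.mul_neg, trace_add, trace_neg, neg_add,
          neg_neg, AddChar.map_add_eq_mul, mul_one, mul_one, mul_comm]
        congr 2
        simp only [T]
        rw [← Matrix.mul_assoc, trace_mul_comm, Matrix.mul_assoc]
      · simp
    have hTr : T.rank = m + 1 := by
      apply le_antisymm
      · refine (rank_mul_le_left _ _).trans ?_
        simpa using rank_le_width (inc F b (m+1) : Matrix _ _ F)
      · have h1 : (inc F b (m+1) : Matrix _ _ F)ᵀ * T * inc F a (m+1) = 1 := by
          simp only [T]
          rw [← Matrix.mul_assoc, inc_mul _ _ hjb, Matrix.one_mul, inc_mul _ _ hja]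
        have h2 := rank_mul_le_left ((inc F b (m+1) : Matrix _ _ F)ᵀ * T) (inc F a (m+1))
        have h3 := rank_mul_le_right ((inc F b (m+1) : Matrix _ _ F)ᵀ) T
        rw [h1, rank_one, Fintype.card_fin] at h2
        omega
    have hψf : ψ f = 0 := by
      by_contra hne
      refine hno T hTr ⟨ψ f, hne, fun X => ?_⟩
      rw [← hψ, hf, map_smul]
    have hkf : ∀ R, ¬ IsoRel R → kop n R f = 0 := by
      intro R hR
      obtain ⟨R', hR'⟩ := noniso R hR n
      apply hR'
      by_contra hne
      have := rank_le_of_appears χ₀ hχ₀ hab T ⟨kop n R' f, hne, fun X => by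
        rw [← kop_equi, hf, map_smul]⟩
      omega
    let S0 : Matrix (Fin n) (Fin (m+1)) F := Matrix.of fun i l =>
      if h : n - b ≤ (i : ℕ) then (inc F b (m+1) * G0' : Matrix _ _ F) ⟨i - (n - b), by omega⟩ l else 0
    have hlow : low b hb S0 = inc F b (m+1) * G0' := by
      ext r l
      simp only [low, S0, submatrix_apply, Matrix.of_apply, id]
      rw [dif_pos (by simp)]
      congr 2
      simp
    have htop : top a ha S0 = 0 := by
      ext r l
      simp only [top, S0, submatrix_apply, Matrix.of_apply]
      rw [dif_neg (by omega)]; rfl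
    have hfin := congrFun (hc f) S0
    rw [LinearMap.comp_apply, hψf, map_zero, Finset.sum_apply, Finset.sum_eq_single R0] at hfin
    · rw [Pi.smul_apply, kop_iso R0 G0 hR0] at hfin
      have h1 : low b hb (S0 * G0) = inc F b (m+1) := by
        have : low b hb (S0 * G0) = low b hb S0 * G0 := by
          ext; simp [low, mul_apply]
        rw [this, hlow, Matrix.mul_assoc, hG', Matrix.mul_one]
      have h2 : top a ha (S0 * G0) = 0 := by
        have : top a ha (S0 * G0) = top a ha S0 * G0 := by
          ext; simp [top, mul_apply]
        rw [this, htop, Matrix.zero_mul]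
      simp only [f, h1, h2] at hfin
      simpa using hfin.symm
    · intro R _ hR
      by_cases hiso : IsoRel R
      · obtain ⟨G, G', hGG, hRG⟩ := hiso
        rw [Pi.smul_apply, kop_iso R G hRG]
        have h1 : low b hb (S0 * G) ≠ inc F b (m+1) := by
          have h2 : low b hb (S0 * G) = low b hb S0 * G := by
            ext; simp [low, mul_apply]
          rw [h2, hlow]
          intro h
          apply hR
          have h3 := congrArg (fun M => (inc F b (m+1))ᵀ * M) h
          simp only [← Matrix.mul_assoc, inc_mul _ _ hjb, Matrix.one_mul] at h3
          have h4 : G = G0 := by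
            rw [← Matrix.one_mul G, ← hG, Matrix.mul_assoc, h3, Matrix.mul_one]
          subst h4
          ext p
          rw [hRG, hR0]
        simp [f, h1]
      · rw [hkf R hiso]; simp
    · simp
  apply hφ0
  refine LinearMap.ext fun v => ?_
  have h := hc (φ v)
  rw [LinearMap.comp_apply, hψφ] at h
  rw [h, LinearMap.zero_apply]
  apply Finset.sum_eq_zero
  intro R _
  by_cases hR : IsoRel R
  · rw [hz R hR, zero_smul]
  · obtain ⟨R', hR'⟩ := noniso R hR n
    rw [hR', smul_zero]
    by_contra hne
    refine hcon ⟨kop n R' ∘ₗ φ, fun h0 => hne (LinearMap.congr_fun h0 v), fun g v => ?_⟩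
    rw [LinearMap.comp_apply, hφ, kop_equi]; rfl

/-- projection to the last coordinates -/
def loM (F : Type) [Field F] (n b : ℕ) : Matrix (Fin b) (Fin n) F :=
  Matrix.of fun r i => if (i : ℕ) = n - b + r then 1 else 0

lemma inc_inc {n a k : ℕ} (h1 : k ≤ a) : inc F n a * inc F a k = inc F n k := by
  ext i l
  rw [mul_apply, Finset.sum_eq_single (⟨l, by omega⟩ : Fin a)]
  · simp [inc]
  · intro r _ hr
    have : (r : ℕ) ≠ l := fun h => hr (Fin.ext h)
    simp [inc, this]
  · simp

lemma lo_lo {n b c : ℕ} (h1 : c ≤ b) (h2 : b ≤ n) : loM F b c * loM F n b = loM F n c := by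
  ext i l
  rw [mul_apply, Finset.sum_eq_single (⟨b - c + i, by omega⟩ : Fin b)]
  · simp only [loM, of_apply, if_true, one_mul]
    congr 1
    apply propext; omega
  · intro r _ hr
    have : (r : ℕ) ≠ b - c + i := fun h => hr (Fin.ext h)
    simp [loM, this]
  · simp

lemma lo_loT {n b : ℕ} (h : b ≤ n) : loM F n b * (loM F n b)ᵀ = 1 := by
  ext i l
  rw [mul_apply, Finset.sum_eq_single (⟨n - b + i, by omega⟩ : Fin n)]
  · simp [loM, one_apply, Fin.ext_iff]
  · intro r _ hr
    have : (r : ℕ) ≠ n - b + i := fun h => hr (Fin.ext h)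
    simp [loM, this]
  · simp

lemma lo_inc {n a b : ℕ} (h : a + b ≤ n) : loM F n b * inc F n a = 0 := by
  ext i l
  rw [mul_apply]
  apply Finset.sum_eq_zero
  intro r _
  simp only [loM, inc, of_apply]
  split_ifs with h1 h2
  · omega
  · simp
  · simp
  · simp

lemma inc_lo_sum {n a b : ℕ} (h : a + b = n) :
    inc F n a * (inc F n a)ᵀ + (loM F n b)ᵀ * loM F n b = 1 := by
  ext i l
  rw [Matrix.add_apply, mul_apply, mul_apply, one_apply]
  by_cases hi : (i : ℕ) < a
  · rw [Finset.sum_eq_single (⟨i, hi⟩ : Fin a)]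
    · rw [Finset.sum_eq_zero]
      · simp only [inc, transpose_apply, of_apply, Fin.ext_iff, if_true, one_mul, add_zero]
        congr 1
        apply propext; omega
      · intro r _
        simp only [loM, transpose_apply, of_apply]
        rw [if_neg (by omega), zero_mul]
    · intro r _ hr
      have : (i : ℕ) ≠ r := fun h => hr (Fin.ext h.symm)
      simp [inc, this]
    · simp
  · rw [Finset.sum_eq_zero, zero_add]
    · rw [Finset.sum_eq_single (⟨i - a, by omega⟩ : Fin b)]
      · simp only [loM, transpose_apply, of_apply, Fin.ext_iff]
        rw [if_pos (by omega), one_mul]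
        congr 1
        apply propext; omega
      · intro r _ hr
        have : (i : ℕ) ≠ n - b + r := fun h => hr (Fin.ext (by simp; omega))
        simp [loM, this]
      · simp
    · intro r _
      simp only [inc, transpose_apply, of_apply]
      rw [if_neg (by omega), zero_mul]

lemma lo_mul_apply {n b : ℕ} {ι : Type} (hb : b ≤ n) (S : Matrix (Fin n) ι F) :
    loM F n b * S = low b hb S := by
  ext r c
  rw [mul_apply, Finset.sum_eq_single (⟨n - b + r, by omega⟩ : Fin n)]
  · simp [loM, low]
  · intro i _ hi
    have : (i : ℕ) ≠ n - b + r := fun h => hi (Fin.ext h)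
    simp [loM, this]
  · simp

lemma bE {n a b : ℕ} (hab : a + b ≤ n) (X : Matrix (Fin a) (Fin b) F) :
    blockEmbed n a b X = inc F n a * X * loM F n b := by
  have hb : b ≤ n := by omega
  ext i c
  have h := blockEmbed_mul hb X (1 : Matrix (Fin n) (Fin n) F) i c
  rw [Matrix.mul_one, ← lo_mul_apply hb, Matrix.mul_one] at h
  rw [h, Matrix.mul_assoc, mul_apply]
  split_ifs with hi
  · rw [Finset.sum_eq_single (⟨i, hi⟩ : Fin a)]
    · simp [inc]
    · intro r _ hr
      have : (i : ℕ) ≠ r := fun h => hr (Fin.ext h.symm)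
      simp [inc, this]
    · simp
  · symm
    apply Finset.sum_eq_zero
    intro r _
    simp only [inc, of_apply]
    rw [if_neg (by omega), zero_mul]

lemma uU_val {n a b : ℕ} (hab : a + b ≤ n) (X : Matrix (Fin a) (Fin b) F) :
    (uU n a b hab X : Matrix (Fin n) (Fin n) F) = 1 + inc F n a * X * loM F n b := by
  rw [← bE hab]; rfl

/-- common subgroup of two unipotent radicals -/
lemma uU_common {n a b k c : ℕ} (hab : a + b ≤ n) (hkc : k + c ≤ n) (h1 : k ≤ a) (h2 : b ≤ c)
    (X : Matrix (Fin k) (Fin b) F) :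
    uU n a b hab (inc F a k * X) = uU n k c hkc (X * loM F c b) := by
  apply Units.ext
  rw [uU_val, uU_val, ← Matrix.mul_assoc, inc_inc h1, Matrix.mul_assoc (inc F n k) (X * _),
    Matrix.mul_assoc X, lo_lo h2 (by omega), Matrix.mul_assoc]

lemma uU_comm {n a b : ℕ} (hab : a + b ≤ n) (X Y : Matrix (Fin a) (Fin b) F) :
    Commute (uU n a b hab X) (uU n a b hab Y) := by
  show _ * _ = _ * _
  rw [uU_mul, uU_mul, add_comm]

/-- Levi element -/
def lev {n p q : ℕ} (h : p + q = n) (P : GL (Fin p) F) (Q : GL (Fin q) F) : GL (Fin n) F := by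
  have key : ∀ (P : GL (Fin p) F) (Q : GL (Fin q) F),
     (inc F n p * (P : Matrix (Fin p) (Fin p) F) * (inc F n p)ᵀ +
        (loM F n q)ᵀ * (Q : Matrix (Fin q) (Fin q) F) * loM F n q) *
      (inc F n p * ((P⁻¹ : GL (Fin p) F) : Matrix (Fin p) (Fin p) F) * (inc F n p)ᵀ +
        (loM F n q)ᵀ * ((Q⁻¹ : GL (Fin q) F) : Matrix (Fin q) (Fin q) F) * loM F n q) = 1 := by
    intro P Q
    have e1 := inc_mul (F := F) n p (by omega)
    have e2 := lo_loT (F := F) (show q ≤ n by omega)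
    have e3 := lo_inc (F := F) (show p + q ≤ n by omega)
    have e4 : (inc F n p)ᵀ * (loM F n q)ᵀ = 0 := by
      rw [← transpose_mul, e3, transpose_zero]
    have e5 : (P : Matrix (Fin p) (Fin p) F) * ((P⁻¹ : GL (Fin p) F) : Matrix (Fin p) (Fin p) F) = 1 := by
      rw [← Units.val_mul]; simp
    have e6 : (Q : Matrix (Fin q) (Fin q) F) * ((Q⁻¹ : GL (Fin q) F) : Matrix (Fin q) (Fin q) F) = 1 := by
      rw [← Units.val_mul]; simp
    rw [Matrix.add_mul, Matrix.mul_add, Matrix.mul_add]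
    simp only [Matrix.mul_assoc]
    rw [← Matrix.mul_assoc (inc F n p)ᵀ, e1, ← Matrix.mul_assoc (inc F n p)ᵀ, e4,
      ← Matrix.mul_assoc (loM F n q), e3, ← Matrix.mul_assoc (loM F n q), e2]
    simp only [Matrix.zero_mul, Matrix.mul_zero, Matrix.one_mul, add_zero, zero_add]
    rw [← Matrix.mul_assoc (P : Matrix (Fin p) (Fin p) F), e5,
      ← Matrix.mul_assoc (Q : Matrix (Fin q) (Fin q) F), e6, Matrix.one_mul, Matrix.one_mul]
    exact inc_lo_sum h
  exact
  { val := inc F n p * (P : Matrix (Fin p) (Fin p) F) * (inc F n p)ᵀ +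
        (loM F n q)ᵀ * (Q : Matrix (Fin q) (Fin q) F) * loM F n q
    inv := inc F n p * ((P⁻¹ : GL (Fin p) F) : Matrix (Fin p) (Fin p) F) * (inc F n p)ᵀ +
        (loM F n q)ᵀ * ((Q⁻¹ : GL (Fin q) F) : Matrix (Fin q) (Fin q) F) * loM F n q
    val_inv := key P Q
    inv_val := by simpa using key P⁻¹ Q⁻¹ }

lemma lev_conj {n p q : ℕ} (h : p + q = n) (hpq : p + q ≤ n) (P : GL (Fin p) F) (Q : GL (Fin q) F)
    (X : Matrix (Fin p) (Fin q) F) :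
    uU n p q hpq X * lev h P Q = lev h P Q *
      uU n p q hpq (((P⁻¹ : GL (Fin p) F) : Matrix (Fin p) (Fin p) F) * X *
        (Q : Matrix (Fin q) (Fin q) F)) := by
  apply Units.ext
  have e1 := inc_mul (F := F) n p (by omega)
  have e2 := lo_loT (F := F) (show q ≤ n by omega)
  have e3 := lo_inc (F := F) (show p + q ≤ n by omega)
  have e5 : (P : Matrix (Fin p) (Fin p) F) * ((P⁻¹ : GL (Fin p) F) : Matrix (Fin p) (Fin p) F) = 1 := by
    rw [← Units.val_mul]; simp
  rw [Units.val_mul, Units.val_mul, uU_val, uU_val, Matrix.add_mul, Matrix.mul_add, Matrix.one_mul,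
    Matrix.mul_one]
  congr 1
  show _ * (inc F n p * (P : Matrix (Fin p) (Fin p) F) * (inc F n p)ᵀ +
        (loM F n q)ᵀ * (Q : Matrix (Fin q) (Fin q) F) * loM F n q) =
    (inc F n p * (P : Matrix (Fin p) (Fin p) F) * (inc F n p)ᵀ +
        (loM F n q)ᵀ * (Q : Matrix (Fin q) (Fin q) F) * loM F n q) * _
  rw [Matrix.mul_add, Matrix.add_mul]
  simp only [Matrix.mul_assoc]
  rw [← Matrix.mul_assoc (loM F n q) (inc F n p), e3, ← Matrix.mul_assoc (loM F n q) (loM F n q)ᵀ, e2,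
    ← Matrix.mul_assoc (inc F n p)ᵀ (inc F n p), e1, Matrix.one_mul,
    ← Matrix.mul_assoc (loM F n q) (inc F n p), e3]
  simp only [Matrix.one_mul, Matrix.zero_mul, Matrix.mul_zero, zero_add, add_zero]
  rw [← Matrix.mul_assoc (P : Matrix (Fin p) (Fin p) F), e5, Matrix.one_mul]

lemma rho_ne {G : Type} [Group G] (ρ : Representation ℂ G V) (g : G) {v : V} (hv : v ≠ 0) :
    ρ g v ≠ 0 := by
  intro h
  apply hv
  have := congrArg (ρ g⁻¹) h
  rw [map_zero, ← Module.End.mul_apply, ← map_mul] at this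
  simpa using this

lemma appears_levi (χ₀ : AddChar F ℂ) {n p q : ℕ} (h : p + q = n) (hpq : p + q ≤ n)
    (ρ : Representation ℂ (GL (Fin n) F) V) (P : GL (Fin p) F) (Q : GL (Fin q) F)
    (T : Matrix (Fin q) (Fin p) F) (hT : CharAppears χ₀ ρ hpq T) :
    CharAppears χ₀ ρ hpq ((Q : Matrix (Fin q) (Fin q) F) * T * (P : Matrix (Fin p) (Fin p) F)) := by
  obtain ⟨v, hv, hX⟩ := hT
  refine ⟨ρ (lev h P⁻¹ Q) v, rho_ne ρ _ hv, fun X => ?_⟩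
  rw [← Module.End.mul_apply, ← map_mul, lev_conj, map_mul, Module.End.mul_apply, hX, map_smul,
    inv_inv]
  congr 2
  rw [← Matrix.mul_assoc, trace_mul_comm]
  simp only [Matrix.mul_assoc]

lemma inj_inc {a k : ℕ} (h : k ≤ a) (x : Fin k → F) : inc F a k *ᵥ x = 0 → x = 0 := by
  intro hx
  have := congrArg ((inc F a k)ᵀ *ᵥ ·) hx
  simpa only [mulVec_mulVec, inc_mul _ _ h, one_mulVec, mulVec_zero] using this

/-- if two eigencharacters on a nonzero vector agree then the matrices agree -/
lemma mat_eq (χ₀ : AddChar F ℂ) (hχ₀ : χ₀ ≠ 1) {a b : ℕ} (A B : Matrix (Fin b) (Fin a) F)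
    (h : ∀ X : Matrix (Fin a) (Fin b) F, χ₀ (A * X).trace = χ₀ (B * X).trace) : A = B := by
  rw [← sub_eq_zero]
  ext r c
  rw [Matrix.zero_apply]
  apply char_eq_zero χ₀ hχ₀
  intro x
  rw [← trace_mul_single, Matrix.sub_mul, trace_sub, AddChar.map_sub_eq_div, h, div_self]
  exact (AddChar.val_isUnit χ₀ _).ne_zero

lemma appears_inj (χ₀ : AddChar F ℂ) (hχ₀ : χ₀ ≠ 1) {n a b k : ℕ} (hab' : a + b = n)
    (hab : a + b ≤ n) (hk' : k + (n - k) = n) (hkn : k + (n - k) ≤ n) (hka : k ≤ a)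
    (ρ : Representation ℂ (GL (Fin n) F) V)
    (T0 : Matrix (Fin b) (Fin a) F) (hr : T0.rank = k) (hT0 : CharAppears χ₀ ρ hab T0)
    (T1 : Matrix (Fin (n-k)) (Fin k) F) (hT1 : ∀ x, T1 *ᵥ x = 0 → x = 0) :
    CharAppears χ₀ ρ hkn T1 := by
  obtain ⟨J, hJ⟩ := exists_section T0 hr
  obtain ⟨g, hg⟩ := same_ker (inc F a k) J (by
    intro x
    constructor
    · intro h; rw [inj_inc hka x h, mulVec_zero]
    · intro h
      rw [hJ x (by rw [← mulVec_mulVec, h, mulVec_zero]), mulVec_zero])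
  obtain ⟨v, hv, hX⟩ := appears_levi χ₀ hab' hab ρ g 1 T0 hT0
  set T2 := ((1 : GL (Fin b) F) : Matrix (Fin b) (Fin b) F) * T0 * (g : Matrix (Fin a) (Fin a) F) with hT2
  have hT2i : T2 * inc F a k = T0 * J := by
    rw [hT2, Matrix.mul_assoc, hg]; simp
  obtain ⟨w, hw1, hw2, hw3⟩ := exists_decomp χ₀ hχ₀ ρ hkn v
  obtain ⟨T', hT'⟩ : ∃ T', w T' ≠ 0 := by
    by_contra hcon
    push Not at hcon
    apply hv
    rw [hw1]
    exact Finset.sum_eq_zero fun T _ => hcon T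
  have hP : loM F (n-k) b * T' = T2 * inc F a k := by
    apply mat_eq χ₀ hχ₀
    intro X
    have h1 := hX (inc F a k * X)
    rw [uU_common hab hkn hka (by omega)] at h1
    have h2 := hw3 _ _ (fun Y => uU_comm hkn _ Y) h1 T'
    rw [hw2] at h2
    have h3 := smul_left_injective ℂ hT' h2
    rw [Matrix.mul_assoc T2, ← h3]
    congr 1
    rw [Matrix.mul_assoc, trace_mul_comm, Matrix.mul_assoc]
  obtain ⟨P, hP'⟩ := same_ker T' T1 (by
    intro x
    constructor
    · intro h
      rw [hJ x (by rw [← hT2i, ← hP, ← mulVec_mulVec, h, mulVec_zero]), mulVec_zero]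
    · intro h; rw [hT1 x h, mulVec_zero])
  have := appears_levi χ₀ hk' hkn ρ 1 P T' ⟨w T', hT', hw2 T'⟩
  rwa [hP', Units.val_one, Matrix.mul_one] at this

lemma GL_ext {n : ℕ} {g h : GL (Fin n) F}
    (H : ∀ x : Fin n → F, (g : Matrix (Fin n) (Fin n) F) *ᵥ x = (h : Matrix (Fin n) (Fin n) F) *ᵥ x) :
    g = h := by
  apply Units.ext
  apply Matrix.toLin'.injective
  exact LinearMap.ext fun x => by simpa using H x

lemma tv_c1 {n : ℕ} (i l j : Fin n) (hil : i ≠ l) (hlj : l ≠ j) (hij : i ≠ j) (c : F) :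
    tv i l hil 1 * tv l j hlj c = tv i j hij c * tv l j hlj c * tv i l hil 1 := by
  apply GL_ext
  intro x
  simp only [Units.val_mul, ← mulVec_mulVec, tv_mulVec]
  ext r
  simp only [Pi.add_apply, Pi.single_apply]
  split_ifs <;> simp_all <;> ring

lemma tv_c2 {n : ℕ} (i l j : Fin n) (hil : i ≠ l) (hlj : l ≠ j) (hij : i ≠ j) (c : F) :
    tv i l hil c * tv l j hlj 1 = tv l j hlj 1 * tv i l hil c * tv i j hij c := by
  apply GL_ext
  intro x
  simp only [Units.val_mul, ← mulVec_mulVec, tv_mulVec]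
  ext r
  simp only [Pi.add_apply, Pi.single_apply]
  split_ifs <;> simp_all <;> ring

lemma tv_c3 {n : ℕ} (i j : Fin n) (hij : i ≠ j) (hji : j ≠ i) (c : F) :
    (tv i j hij 1 * tv j i hji (-1) * tv i j hij 1) * tv i j hij c
      = tv j i hji (-c) * (tv i j hij 1 * tv j i hji (-1) * tv i j hij 1) := by
  apply GL_ext
  intro x
  simp only [Units.val_mul, ← mulVec_mulVec, tv_mulVec]
  ext r
  simp only [Pi.add_apply, Pi.single_apply]
  split_ifs <;> simp_all <;> ring

/-- all transvections from a single root subgroup -/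
lemma all_tv {n : ℕ} (I : Finset (Fin n)) (N : Subgroup (GL (Fin n) F))
    (hnorm : ∀ g ∈ HI (F := F) I, ∀ s ∈ N, g * s * g⁻¹ ∈ N)
    (i0 j0 : Fin n) (h0 : i0 ≠ j0) (hi0 : i0 ∉ I) (hj0 : j0 ∉ I)
    (hN : ∀ c, tv i0 j0 h0 c ∈ N) :
    ∀ i j (h : i ≠ j) c, j ∉ I → tv i j h c ∈ N := by
  have C1 : ∀ i l j (hil : i ≠ l) (hlj : l ≠ j) (hij : i ≠ j), l ∉ I →
      (∀ c, tv l j hlj c ∈ N) → ∀ c, tv i j hij c ∈ N := by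
    intro i l j hil hlj hij hl h c
    have h1 := tv_c1 i l j hil hlj hij c
    have h2 := hnorm _ (tv_mem_HI I i l hil hl 1) _ (h c)
    rw [h1, mul_inv_cancel_right] at h2
    exact (Subgroup.mul_mem_cancel_right N (h c)).1 h2
  have C2 : ∀ i l j (hil : i ≠ l) (hlj : l ≠ j) (hij : i ≠ j), j ∉ I →
      (∀ c, tv i l hil c ∈ N) → ∀ c, tv i j hij c ∈ N := by
    intro i l j hil hlj hij hj h c
    have h1 := tv_c2 i l j hil hlj hij c
    have h2 := hnorm _ (inv_mem (tv_mem_HI I l j hlj hj 1)) _ (h c)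
    rw [inv_inv, mul_assoc, h1, mul_assoc, inv_mul_cancel_left] at h2
    exact (Subgroup.mul_mem_cancel_left N (h c)).1 h2
  have C3 : ∀ i j (hij : i ≠ j) (hji : j ≠ i), i ∉ I → j ∉ I →
      (∀ c, tv i j hij c ∈ N) → ∀ c, tv j i hji c ∈ N := by
    intro i j hij hji hi hj h c
    have h1 := tv_c3 i j hij hji (-c)
    have h2 := hnorm (tv i j hij 1 * tv j i hji (-1) * tv i j hij 1)
      (mul_mem (mul_mem (tv_mem_HI I _ _ _ hj _) (tv_mem_HI I _ _ _ hi _)) (tv_mem_HI I _ _ _ hj _))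
      _ (h (-c))
    rw [h1, mul_inv_cancel_right, neg_neg] at h2
    exact h2
  intro i j h c hj
  by_cases hjj : j = j0
  · subst hjj
    by_cases hii : i = i0
    · subst hii; exact hN c
    · exact C1 i i0 j hii h0 h hi0 hN c
  · by_cases hii : i = i0
    · subst hii
      exact C2 i j0 j h0 (Ne.symm hjj) h hj hN c
    · by_cases hji : j = i0
      · subst hji
        have h3 := C3 j j0 h0 h0.symm hj hj0 hN
        by_cases hi : i = j0
        · subst hi; exact h3 c
        · exact C1 i j0 j hi h0.symm h hj0 h3 c
      · have h3 := C2 i0 j0 j h0 (Ne.symm hjj) (Ne.symm hji) hj hN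
        exact C1 i i0 j hii (Ne.symm hji) h hi0 h3 c

lemma char_of_eig {G : Type} [Group G] (r : Representation ℂ G V) (v : V) (hv : v ≠ 0)
    (h : ∀ g, ∃ c : ℂ, r g v = c • v) : ∃ β : G →* ℂˣ, ∀ g, r g v = ((β g : ℂˣ) : ℂ) • v := by
  choose c hc using h
  have hinj := smul_left_injective ℂ hv
  let β : G →* ℂ :=
    { toFun := c
      map_one' := by
        apply hinj
        show c 1 • v = (1 : ℂ) • v
        rw [← hc]; simp
      map_mul' := by
        intro g k
        apply hinj
        show c (g * k) • v = (c g * c k) • v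
        rw [← hc, map_mul, Module.End.mul_apply, hc, map_smul, hc, smul_smul, mul_comm] }
  exact ⟨β.toHomUnits, fun g => hc g⟩

/-- The index set of the first and last k coordinates. -/
def II (n k : ℕ) : Finset (Fin n) := Finset.univ.filter fun i => (i : ℕ) < k ∨ n - k ≤ (i : ℕ)

lemma HI_cols {n j : ℕ} (f : Fin j → Fin n) (I : Finset (Fin n)) (g : GL (Fin n) F) (hg : g ∈ HI (F := F) I)
    (hf : ∀ c, f c ∈ I) (S : Matrix (Fin n) (Fin j) F) (hS : ∀ i c, S i c = if i = f c then 1 else 0) :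
    (g : Matrix (Fin n) (Fin n) F) * S = S := by
  ext i c
  have h := congrFun (mem_HI.1 hg (f c) (hf c)) i
  rw [mulVec_single_one] at h
  rw [mul_apply, Finset.sum_eq_single (f c)]
  · rw [hS, if_pos rfl, mul_one, hS]
    simpa [Pi.single_apply] using h
  · intro r _ hr
    rw [hS, if_neg hr, mul_zero]
  · simp

lemma cols_HI {n j : ℕ} (f : Fin j → Fin n) (I : Finset (Fin n)) (g : GL (Fin n) F)
    (hf : ∀ i ∈ I, ∃ c, f c = i) (S : Matrix (Fin n) (Fin j) F)
    (hS : ∀ i c, S i c = if i = f c then 1 else 0)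
    (hg : (g : Matrix (Fin n) (Fin n) F) * S = S) : g ∈ HI (F := F) I := by
  rw [mem_HI]
  intro i hi
  obtain ⟨c, rfl⟩ := hf i hi
  have h1 : S *ᵥ Pi.single c 1 = Pi.single (f c) 1 := by
    ext r
    rw [mulVec_single_one]
    simp [hS, Pi.single_apply]
  rw [← h1, mulVec_mulVec, hg]

/-- The matrix T1 -/
def TT (F : Type) [Field F] (n k : ℕ) : Matrix (Fin (n-k)) (Fin k) F :=
  Matrix.of fun r c => if (r : ℕ) = n - 2 * k + c then 1 else 0

lemma TT_eq {n k : ℕ} (h : 2 * k ≤ n) : TT F n k = (loM F (n-k) k)ᵀ := by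
  ext r c
  simp only [TT, loM, of_apply, transpose_apply]
  congr 1
  apply propext; omega

lemma TT_inj {n k : ℕ} (h : 2 * k ≤ n) (x) : TT F n k *ᵥ x = 0 → x = 0 := by
  intro hx
  have := congrArg (loM F (n-k) k *ᵥ ·) hx
  simpa only [mulVec_mulVec, TT_eq h, lo_loT (show k ≤ n - k by omega), one_mulVec, mulVec_zero]
    using this

/-- The eigenspace V1. -/
def V1 (χ₀ : AddChar F ℂ) {n p q : ℕ} (ρ : Representation ℂ (GL (Fin n) F) V) (hpq : p + q ≤ n)
    (T : Matrix (Fin q) (Fin p) F) : Submodule ℂ V where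
  carrier := {v | ∀ X : Matrix (Fin p) (Fin q) F, ρ (uU n p q hpq X) v = χ₀ ((T * X).trace) • v}
  add_mem' := by
    intro v w hv hw X
    rw [map_add, hv, hw, smul_add]
  zero_mem' := by intro X; simp
  smul_mem' := by
    intro c v hv X
    rw [map_smul, hv, smul_comm]

lemma mem_V1 {χ₀ : AddChar F ℂ} {n p q : ℕ} {ρ : Representation ℂ (GL (Fin n) F) V} {hpq : p + q ≤ n}
    {T : Matrix (Fin q) (Fin p) F} {v : V} : v ∈ V1 χ₀ ρ hpq T ↔
     ∀ X : Matrix (Fin p) (Fin q) F, ρ (uU n p q hpq X) v = χ₀ ((T * X).trace) • v := Iff.rfl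

lemma loT_TT {n k : ℕ} (h : 2 * k ≤ n) : (loM F n (n-k))ᵀ * TT F n k = (loM F n k)ᵀ := by
  rw [TT_eq h, ← transpose_mul, lo_lo (by omega) (by omega)]

lemma HI_V1 (χ₀ : AddChar F ℂ) {n k : ℕ} (ρ : Representation ℂ (GL (Fin n) F) V)
    (hk : 2 * k ≤ n) (hkn : k + (n - k) ≤ n)
    (g : GL (Fin n) F) (hg : g ∈ HI (F := F) (II n k)) (v : V) (hv : v ∈ V1 χ₀ ρ hkn (TT F n k)) :
    ρ g v ∈ V1 χ₀ ρ hkn (TT F n k) := by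
  intro X
  have h1 : (g : Matrix (Fin n) (Fin n) F) * inc F n k = inc F n k :=
    HI_cols (fun c : Fin k => ⟨c, by omega⟩) (II n k) g hg (fun c => by simp [II]) _
      (fun i c => by simp [inc, Fin.ext_iff])
  have h2 : (g : Matrix (Fin n) (Fin n) F) * (loM F n k)ᵀ = (loM F n k)ᵀ :=
    HI_cols (fun c : Fin k => ⟨n - k + c, by omega⟩) (II n k) g hg (fun c => by simp [II]; omega) _
      (fun i c => by simp [loM, Fin.ext_iff])
  have e4 := inc_lo_sum (F := F) (show k + (n - k) = n by omega)
  set Y := loM F n (n-k) * (g : Matrix (Fin n) (Fin n) F) * (loM F n (n-k))ᵀ with hY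
  have h3 : loM F n (n-k) * (g : Matrix (Fin n) (Fin n) F) = Y * loM F n (n-k) := by
    have : loM F n (n-k) * (g : Matrix (Fin n) (Fin n) F) =
       loM F n (n-k) * (g : Matrix (Fin n) (Fin n) F) *
        (inc F n k * (inc F n k)ᵀ + (loM F n (n-k))ᵀ * loM F n (n-k)) := by
      rw [e4, Matrix.mul_one]
    rw [this, Matrix.mul_add, ← Matrix.mul_assoc, Matrix.mul_assoc _ _ (inc F n k), h1,
      lo_inc hkn, Matrix.zero_mul, zero_add, hY]
    simp only [Matrix.mul_assoc]
  have h4 : Y * TT F n k = TT F n k := by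
    rw [hY, Matrix.mul_assoc, loT_TT hk, Matrix.mul_assoc, h2, ← loT_TT hk, ← Matrix.mul_assoc,
      lo_loT (by omega), Matrix.one_mul]
  have h5 : uU n k (n-k) hkn X * g = g * uU n k (n-k) hkn (X * Y) := by
    apply Units.ext
    rw [Units.val_mul, Units.val_mul, uU_val, uU_val, Matrix.add_mul, Matrix.mul_add, Matrix.one_mul,
      Matrix.mul_one]
    congr 1
    rw [Matrix.mul_assoc, h3]
    simp only [← Matrix.mul_assoc, h1]
  rw [← Module.End.mul_apply, ← map_mul, h5, map_mul, Module.End.mul_apply, hv, map_smul]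
  congr 2
  rw [← Matrix.mul_assoc, trace_mul_comm, ← Matrix.mul_assoc, h4]

/-- matrices of small rank with prescribed first columns -/
lemma rows_zero {a b k : ℕ} (hkb : k ≤ b) (T : Matrix (Fin b) (Fin a) F) (hr : T.rank ≤ k)
    (hT : T * inc F a k = (loM F b k)ᵀ) (r : Fin b) (i : Fin a) (hrb : (r : ℕ) < b - k) :
    T r i = 0 := by
  have h1 : LinearMap.range ((loM F b k)ᵀ).mulVecLin ≤ LinearMap.range T.mulVecLin := by
    rintro _ ⟨x, rfl⟩
    refine ⟨inc F a k *ᵥ x, ?_⟩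
    simp [← hT]
  have h2 : k ≤ ((loM F b k)ᵀ).rank := by
    have := rank_mul_le_right (loM F b k) (loM F b k)ᵀ
    rwa [lo_loT hkb, rank_one, Fintype.card_fin] at this
  have h3 := Submodule.eq_of_le_of_finrank_le h1 (hr.trans h2)
  have h4 : T *ᵥ Pi.single i 1 ∈ LinearMap.range T.mulVecLin := ⟨_, rfl⟩
  rw [← h3] at h4
  obtain ⟨x, hx⟩ := h4
  have h5 := congrFun hx r
  rw [mulVec_single_one] at h5
  change _ = T r i at h5
  rw [← h5]
  show ∑ c : Fin k, ((loM F b k)ᵀ r c) * x c = 0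
  apply Finset.sum_eq_zero
  intro c _
  simp only [loM, transpose_apply, of_apply]
  rw [if_neg (by omega), zero_mul]

lemma tv_triv (χ₀ : AddChar F ℂ) (hχ₀ : χ₀ ≠ 1) {n a b k : ℕ} (hab' : a + b = n)
    (hab : a + b ≤ n) (hkn : k + (n - k) ≤ n) (hka : k ≤ a) (hkb : k ≤ b)
    (ρ : Representation ℂ (GL (Fin n) F) V)
    (hr : ∀ T, CharAppears χ₀ ρ hab T → T.rank ≤ k)
    (v : V) (hv : v ∈ V1 χ₀ ρ hkn (TT F n k)) (i j : Fin n) (hij : i ≠ j) (hi : (i : ℕ) < a)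
    (hj : a ≤ (j : ℕ)) (hj' : (j : ℕ) < n - k) (c : F) : ρ (tv i j hij c) v = v := by
  obtain ⟨w, hw1, hw2, hw3⟩ := exists_decomp χ₀ hχ₀ ρ hab v
  have ht : tv i j hij c = uU n a b hab (Matrix.single ⟨i, hi⟩ ⟨j - a, by omega⟩ c) := by
    apply Units.ext
    show 1 + single i j c = 1 + blockEmbed n a b _
    congr 1
    ext r s
    simp only [blockEmbed, of_apply, single_apply, Fin.ext_iff]
    by_cases hr : (r : ℕ) < a
    · rw [dif_pos hr]
      by_cases hs : n - b ≤ (s : ℕ) ∧ (s : ℕ) - (n - b) < b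
      · rw [dif_pos hs]
        congr 1
        apply propext; omega
      · rw [dif_neg hs, if_neg (by omega)]
    · rw [dif_neg hr, if_neg (by omega)]
  rw [hw1, map_sum, ht]
  refine Finset.sum_congr rfl fun T _ => ?_
  rw [hw2]
  by_cases h0 : w T = 0
  · rw [h0, smul_zero]
  have hrk := hr T ⟨w T, h0, hw2 T⟩
  have hT : T * inc F a k = (loM F b k)ᵀ := by
    have e : loM F (n-k) b * TT F n k = (loM F b k)ᵀ := by
      rw [TT_eq (by omega)]
      have : loM F (n-k) k = loM F b k * loM F (n-k) b := (lo_lo (by omega) (by omega)).symm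
      rw [this, transpose_mul, ← Matrix.mul_assoc, lo_loT (by omega), Matrix.one_mul]
    rw [← e]
    apply mat_eq χ₀ hχ₀
    intro X
    have h1 := hv (X * loM F (n-k) b)
    rw [← uU_common hab hkn hka (by omega)] at h1
    have h2 := hw3 _ _ (fun Y => uU_comm hab _ Y) h1 T
    rw [hw2] at h2
    have h3 := smul_left_injective ℂ h0 h2
    rw [Matrix.mul_assoc T, h3]
    congr 1
    rw [Matrix.mul_assoc (loM F (n-k) b), trace_mul_comm (loM F (n-k) b), Matrix.mul_assoc]
  rw [trace_mul_single, rows_zero hkb T hrk hT _ _ (by simp; omega)]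
  simp

/-- elements of HI acting trivially on a subspace, with determinant one -/
def NN {n : ℕ} (ρ : Representation ℂ (GL (Fin n) F) V) (I : Finset (Fin n)) (U : Submodule ℂ V) :
    Subgroup (GL (Fin n) F) where
  carrier := {g | detHom n g = 1 ∧ ∀ v ∈ U, ρ g v = v}
  one_mem' := ⟨map_one _, fun v _ => by simp⟩
  mul_mem' := by
    rintro g h ⟨h2, h3⟩ ⟨k2, k3⟩
    refine ⟨by rw [map_mul, h2, k2, mul_one], fun v hv => ?_⟩
    rw [map_mul, Module.End.mul_apply, k3 v hv, h3 v hv]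
  inv_mem' := by
    rintro g ⟨h2, h3⟩
    refine ⟨by rw [map_inv, h2, inv_one], fun v hv => ?_⟩
    nth_rewrite 1 [← h3 v hv]
    rw [← Module.End.mul_apply, ← map_mul]
    simp

lemma occ_two (χ₀ : AddChar F ℂ) (hχ₀ : χ₀ ≠ 1) {n k : ℕ} [FiniteDimensional ℂ V]
    (ρ : Representation ℂ (GL (Fin n) F) V) (hρ : IsIrred ρ)
    (hrk : HasURank χ₀ ρ k) (hk : 4 * k < n) :
    ∃ α : Fˣ →* ℂˣ, Occurs (twistRep α ρ) (permRep n (2 * k)) := by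
  obtain ⟨⟨T0, hT0, hr0⟩, hmax⟩ := hrk
  have hkn : k + (n - k) ≤ n := by omega
  obtain ⟨v0, hv0, hv0X⟩ := appears_inj χ₀ hχ₀ (by omega) _ (by omega) hkn (by omega) ρ T0 hr0 hT0
    (TT F n k) (TT_inj (by omega))
  set U := V1 χ₀ ρ hkn (TT F n k) with hU
  have hstab : ∀ g ∈ HI (F := F) (II n k), ∀ v ∈ U, ρ g v ∈ U :=
    fun g hg v hv => HI_V1 χ₀ ρ (by omega) hkn g hg v hv
  let i1 : Fin n := ⟨k, by omega⟩
  have hi1 : i1 ∉ II n k := by simp [II, i1]; omega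
  let N := NN ρ (II n k) U
  have htv : ∀ i j (h : i ≠ j) (c : F), j ∉ II n k → tv i j h c ∈ N ⊓ HI (II n k) := by
    by_cases hn : n = 1
    · intro i j h
      exact absurd (Fin.ext (by omega)) h
    have h0 : i1 ≠ (⟨n - k - 1, by omega⟩ : Fin n) := by
      simp [i1, Fin.ext_iff]; omega
    have hj0 : (⟨n - k - 1, by omega⟩ : Fin n) ∉ II n k := by simp [II]; omega
    refine all_tv (II n k) (N ⊓ HI (II n k)) ?_ i1 ⟨n - k - 1, by omega⟩ h0 hi1 hj0 ?_
    · rintro g hg s ⟨⟨h1, h2⟩, h3⟩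
      refine ⟨⟨?_, fun v hv => ?_⟩, (HI (F := F) (II n k)).mul_mem
        ((HI (F := F) (II n k)).mul_mem hg h3) ((HI (F := F) (II n k)).inv_mem hg)⟩
      · rw [map_mul, map_mul, h1, mul_one, map_inv, mul_inv_cancel]
      · rw [map_mul, map_mul, Module.End.mul_apply, Module.End.mul_apply,
          h2 _ (hstab _ ((HI (F := F) (II n k)).inv_mem hg) _ hv), ← Module.End.mul_apply, ← map_mul]
        simp
    · intro c
      refine ⟨⟨det_tv _ _ _ _, fun v hv => ?_⟩, tv_mem_HI _ _ _ _ hj0 _⟩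
      exact tv_triv χ₀ hχ₀ (by omega) _ hkn (by omega) (by omega) ρ hmax v hv _ _ h0
        (by simp only [i1]; omega) (by simp only; omega) (by simp only; omega) c
  -- eigenvector for the torus
  obtain ⟨d0, hd0⟩ := IsCyclic.exists_generator (α := Fˣ)
  have hdl : ∀ d : Fˣ, dl i1 d ∈ HI (F := F) (II n k) := fun d => dl_mem_HI _ _ hi1 d
  let A : U →ₗ[ℂ] U := (ρ (dl i1 d0)).restrict (hstab _ (hdl d0))
  have : Nontrivial U := ⟨⟨v0, hv0X⟩, 0, fun h => hv0 (congrArg Subtype.val h)⟩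
  obtain ⟨μ, hμ⟩ := Module.End.exists_eigenvalue A
  obtain ⟨v, hv⟩ := hμ.exists_hasEigenvector
  have hvne : (v : V) ≠ 0 := fun h => hv.2 (Subtype.ext h)
  have hvμ : ρ (dl i1 d0) (v : V) = μ • (v : V) := congrArg Subtype.val hv.apply_eq_smul
  obtain ⟨β, hβ⟩ := char_of_eig (ρ.comp (dl i1)) (v : V) hvne (by
    intro d
    obtain ⟨m, rfl⟩ := (mem_powers_iff_mem_zpowers (x := d0)).2 (hd0 d)
    refine ⟨μ ^ m, ?_⟩
    show ρ (dl i1 (d0 ^ m)) (v : V) = _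
    induction m with
    | zero => simp
    | succ m ih =>
      rw [pow_succ, map_mul, map_mul, Module.End.mul_apply, hvμ, map_smul, ih, smul_smul, pow_succ,
        mul_comm])
  refine ⟨β⁻¹, occurs_of_stab (twist_irr _ hρ)
    (Matrix.of fun i c => if i = (if h : (c : ℕ) < k then (⟨c, by omega⟩ : Fin n) else
      ⟨n - 2 * k + c, by omega⟩) then 1 else 0) (v : V) hvne ?_⟩
  intro g hg
  have hgI : g ∈ HI (F := F) (II n k) := by
    refine cols_HI _ (II n k) g ?_ _ (fun i c => rfl) hg
    intro i hi
    simp only [II, Finset.mem_filter, Finset.mem_univ, true_and] at hi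
    by_cases h : (i : ℕ) < k
    · refine ⟨⟨i, by omega⟩, ?_⟩
      rw [dif_pos h]
    · refine ⟨⟨i - (n - 2 * k), by omega⟩, ?_⟩
      rw [dif_neg (by simp only; omega)]
      apply Fin.ext
      simp only
      omega
  obtain ⟨s, ⟨⟨hs1, hs2⟩, -⟩, d, rfl⟩ := gen_HI i1 (N ⊓ HI (II n k)) _ (II n k) rfl hi1 htv g hgI
  have hd : ρ (dl i1 d) (v : V) = ((β d : ℂˣ) : ℂ) • (v : V) := hβ d
  rw [twist_apply, map_mul, map_mul ρ, hs1, det_dl, one_mul, Module.End.mul_apply, hd, map_smul,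
    hs2 _ v.2, smul_smul, MonoidHom.inv_apply, ← Units.val_mul, inv_mul_cancel, Units.val_one, one_smul]

lemma occ_k (χ₀ : AddChar F ℂ) (hχ₀ : χ₀ ≠ 1) {n k : ℕ}
    (τ : Representation ℂ (GL (Fin n) F) V) (hτ : IsIrred τ)
    (hrk : HasURank χ₀ τ k) (m : ℕ) :
    k + m ≤ n / 2 → Occurs τ (permRep n (k + m)) → Occurs τ (permRep n k) := by
  induction m with
  | zero => intro _ h; exact h
  | succ m ih =>
    intro h1 h2
    refine ih (by omega) (descent χ₀ hχ₀ (a := n / 2) (b := n - n / 2) (by omega) (by omega) (by omega) hτ h2 ?_)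
    intro T hT h
    have := hrk.2 T h
    omega

lemma urank_twist (χ₀ : AddChar F ℂ) {n k : ℕ} (α : Fˣ →* ℂˣ)
    (ρ : Representation ℂ (GL (Fin n) F) V) (hrk : HasURank χ₀ ρ k) :
    HasURank χ₀ (twistRep α ρ) k := by
  obtain ⟨⟨T, h1, h2⟩, h3⟩ := hrk
  exact ⟨⟨T, (charAppears_twist χ₀ α ρ _ T).2 h1, h2⟩,
    fun T h => h3 T ((charAppears_twist χ₀ α ρ _ T).1 h)⟩

lemma le_of_occ (χ₀ : AddChar F ℂ) (hχ₀ : χ₀ ≠ 1) {n k j : ℕ}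
    (τ : Representation ℂ (GL (Fin n) F) V) (hτ : IsIrred τ)
    (hrk : HasURank χ₀ τ k) (h : Occurs τ (permRep n j)) : k ≤ j := by
  obtain ⟨⟨T, ⟨v, hv, hX⟩, hr⟩, -⟩ := hrk
  obtain ⟨φ, hφ0, hφ⟩ := occurs_iff.1 h
  have hinj := irr_inj hτ hφ hφ0
  rw [← hr]
  refine rank_le_of_appears χ₀ hχ₀ (j := j)
    (show n / 2 + (n - n / 2) ≤ n by omega) T ⟨φ v, fun h => hv (hinj (by rw [h, map_zero])), fun X => ?_⟩
  rw [← hφ, hX, map_smul]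

lemma eig_of_occ {n k : ℕ} (hk : k ≤ n) (α : Fˣ →* ℂˣ)
    (ρ : Representation ℂ (GL (Fin n) F) V) (hρ : IsIrred ρ)
    (h : Occurs (twistRep α ρ) (permRep n k)) : HasEigenVec ρ (Hsub n k) := by
  obtain ⟨S, v, hv, hS⟩ := stab_of_occurs (twist_irr α hρ) h
  obtain ⟨g, hg⟩ := squash S hk
  let c : GL (Fin n) F →* ℂ := (Units.coeHom ℂ).comp (α⁻¹.comp (detHom n))
  refine ⟨c.comp (Hsub n k).subtype, ρ g v, rho_ne ρ g hv, ?_⟩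
  rintro ⟨u, hu⟩
  have hu1 : (u : Matrix (Fin n) (Fin n) F) * ((g : Matrix (Fin n) (Fin n) F) * S) = (g : Matrix (Fin n) (Fin n) F) * S := by
    ext i l
    have := hu (fun r => ((g : Matrix (Fin n) (Fin n) F) * S) r l) (fun r hr => hg r l hr)
    exact congrFun this i
  have h1 := hS (g⁻¹ * u * g) (by
    rw [Units.val_mul, Units.val_mul, Matrix.mul_assoc, Matrix.mul_assoc, hu1, ← Matrix.mul_assoc,
      ← Units.val_mul]
    simp)
  rw [twist_apply] at h1
  have h2 : detHom n (g⁻¹ * u * g) = detHom n u := by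
    rw [map_mul, map_mul, map_inv, mul_right_comm, inv_mul_cancel, one_mul]
  rw [h2, mul_assoc, map_mul, Module.End.mul_apply] at h1
  have h3 := congrArg (ρ g) h1
  rw [map_smul, ← Module.End.mul_apply (ρ g), ← map_mul, mul_inv_cancel, map_one,
    Module.End.one_apply, map_mul, Module.End.mul_apply] at h3
  show ρ u (ρ g v) = (((α (detHom n u))⁻¹ : ℂˣ) : ℂ) • ρ g v
  have h4 := congrArg (fun w => (((α (detHom n u))⁻¹ : ℂˣ) : ℂ) • w) h3
  simp only [smul_smul, ← Units.val_mul, inv_mul_cancel, Units.val_one, one_smul] at h4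
  exact h4

lemma occ_of_eig {n j : ℕ} (hj : j + 3 ≤ n)
    (ρ : Representation ℂ (GL (Fin n) F) V) (hρ : IsIrred ρ)
    (h : HasEigenVec ρ (Hsub n j)) : ∃ α : Fˣ →* ℂˣ, Occurs (twistRep α ρ) (permRep n j) := by
  obtain ⟨c, v, hv, hc⟩ := h
  let I : Finset (Fin n) := Finset.univ.filter fun i => (i : ℕ) < j
  have hIH : ∀ g, g ∈ HI (F := F) I → g ∈ Hsub (F := F) n j := by
    intro g hg x hx
    have : x = ∑ i, x i • Pi.single i (1 : F) := by
      ext r; simp [Finset.sum_apply, Pi.single_apply]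
    rw [this]
    rw [mulVec_sum]
    refine Finset.sum_congr rfl fun i _ => ?_
    rw [mulVec_smul]
    by_cases hi : (i : ℕ) < j
    · rw [mem_HI.1 hg i (by simp [I, hi])]
    · rw [hx i (by omega), zero_smul, zero_smul]
  have heig : ∀ g, g ∈ HI (F := F) I → ∃ z : ℂ, ρ g v = z • v := fun g hg => ⟨_, hc ⟨g, hIH g hg⟩⟩
  let N := NN ρ I (Submodule.span ℂ {v})
  have hN : ∀ g, detHom n g = 1 → ρ g v = v → g ∈ N := by
    intro g h1 h2
    refine ⟨h1, fun w hw => ?_⟩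
    obtain ⟨z, rfl⟩ := Submodule.mem_span_singleton.1 hw
    rw [map_smul, h2]
  have htv : ∀ i l (h : i ≠ l) (z : F), l ∉ I → tv i l h z ∈ N := by
    intro i l h z hl
    obtain ⟨m, hm1, hm2, hm3⟩ : ∃ m : Fin n, m ≠ i ∧ m ≠ l ∧ m ∉ I := by
      by_contra hcon
      push Not at hcon
      have hsub : Iᶜ ⊆ {i, l} := by
        intro m hm
        rw [Finset.mem_compl] at hm
        by_contra h
        simp only [Finset.mem_insert, Finset.mem_singleton, not_or] at h
        exact hm (hcon m h.1 h.2)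
      have h1 := Finset.card_le_card hsub
      have h2 := Finset.card_le_two (a := i) (b := l)
      have h3 : I.card = j := by
        simp only [I]
        rw [Fin.card_filter_val_lt]
        omega
      rw [Finset.card_compl, Fintype.card_fin, h3] at h1
      omega
    apply hN _ (det_tv _ _ _ _)
    have h1 := tv_c1 i m l hm1.symm hm2 h z
    obtain ⟨x, hx⟩ := heig _ (tv_mem_HI I i m hm1.symm hm3 1)
    obtain ⟨y, hy⟩ := heig _ (tv_mem_HI I m l hm2 hl z)
    obtain ⟨w, hw⟩ := heig _ (tv_mem_HI I i l h hl z)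
    have h2 := congrArg (fun g => ρ g v) h1
    simp only [map_mul, Module.End.mul_apply, hx, hy, hw, map_smul, smul_smul] at h2
    have h3 := smul_left_injective ℂ hv h2
    have hx0 : x ≠ 0 := by
      rintro rfl
      rw [zero_smul] at hx
      exact rho_ne ρ _ hv hx
    have hy0 : y ≠ 0 := by
      rintro rfl
      rw [zero_smul] at hy
      exact rho_ne ρ _ hv hy
    have : w = 1 := by
      have h4 : (x * y) * (w - 1) = 0 := by linear_combination -h3
      have := (mul_eq_zero.1 h4).resolve_left (mul_ne_zero hx0 hy0)
      linear_combination this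
    rw [hw, this, one_smul]
  let i1 : Fin n := ⟨j, by omega⟩
  have hi1 : i1 ∉ I := by simp [I, i1]
  obtain ⟨β, hβ⟩ := char_of_eig (ρ.comp (dl i1)) v hv (fun d => heig _ (dl_mem_HI I i1 hi1 d))
  refine ⟨β⁻¹, occurs_of_stab (twist_irr _ hρ)
    (Matrix.of fun i c => if i = (⟨c, by omega⟩ : Fin n) then 1 else 0) v hv ?_⟩
  intro g hg
  have hgI : g ∈ HI (F := F) I := by
    refine cols_HI _ I g ?_ _ (fun i c => rfl) hg
    intro i hi
    simp only [I, Finset.mem_filter, Finset.mem_univ, true_and] at hi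
    exact ⟨⟨i, hi⟩, rfl⟩
  obtain ⟨s, ⟨hs1, hs2⟩, d, rfl⟩ := gen_HI i1 N _ I rfl hi1 htv g hgI
  have hd : ρ (dl i1 d) v = ((β d : ℂˣ) : ℂ) • v := hβ d
  rw [twist_apply, map_mul, map_mul ρ, hs1, det_dl, one_mul, Module.End.mul_apply, hd, map_smul,
    hs2 _ (Submodule.mem_span_singleton_self v), smul_smul, MonoidHom.inv_apply, ← Units.val_mul,
    inv_mul_cancel, Units.val_one, one_smul]

/-- Proposition 11.2.  Here `k < n/4` is expressed as
`4 * k < n`. -/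
theorem tensorRank_eq_uRank_of_small
    (χ₀ : AddChar F ℂ) (hχ₀ : χ₀ ≠ 1)
    {n : ℕ} {V : Type} [AddCommGroup V] [Module ℂ V] [FiniteDimensional ℂ V]
    (ρ : Representation ℂ (GL (Fin n) F) V) (hρ : IsIrred ρ)
    {k : ℕ} (hrk : HasURank χ₀ ρ k) (hk : 4 * k < n) :
    sInf {j : ℕ | ∃ α : Fˣ →* ℂˣ, Occurs (twistRep α ρ) (permRep n j)} = k ∧
      -- equivalently: the least `j` for which `ρ` has a nonzero
      -- `H_j`-eigenvector is `j = k`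
      sInf {j : ℕ | HasEigenVec ρ (Hsub n j)} = k := by
  obtain ⟨α, h2⟩ := occ_two χ₀ hχ₀ ρ hρ hrk hk
  rw [two_mul] at h2
  have hkk := occ_k χ₀ hχ₀ (twistRep α ρ) (twist_irr α hρ) (urank_twist χ₀ α ρ hrk) k (by omega) h2
  have low : ∀ (j : ℕ) (α' : Fˣ →* ℂˣ), Occurs (twistRep α' ρ) (permRep n j) → k ≤ j :=
    fun j α' h => le_of_occ χ₀ hχ₀ _ (twist_irr α' hρ) (urank_twist χ₀ α' ρ hrk) h
  have heig : HasEigenVec ρ (Hsub n k) := eig_of_occ (by omega) α ρ hρ hkk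
  constructor
  · refine le_antisymm (Nat.sInf_le ⟨α, hkk⟩) (le_csInf ⟨k, α, hkk⟩ ?_)
    rintro j ⟨α', h⟩
    exact low j α' h
  · refine le_antisymm (Nat.sInf_le heig) (le_csInf ⟨k, heig⟩ ?_)
    intro j hj
    by_contra hlt
    obtain ⟨α', h⟩ := occ_of_eig (by omega) ρ hρ hj
    exact hlt (low j α' h)

end Stmt18
end
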